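/- arXiv:1307.3725 — 2 statements merged into one kernel-verified Lean document; each statement's English description precedes it below -/
import Mathlib

section
/- If q > 2, then ζ(1,1) and ζ(2) are linearly independent over k̄; that is, the k̄-vector subspace of k̄_∞ spanned by the weight-two multizeta values ζ(1,1) and ζ(2) has dimension 2. -/
/-!
If `ζ(1,1)` and `ζ(2)` are dependent over `k̄`, then their ratio is algebraic over `k`, so that
`a ζ(1,1) = b ζ(2)` with `a ∈ 𝔽_q[θ]` nonzero and `b ∈ k_∞` integral of some degree `D` over `𝔽_q[θ]`
(`exists_integral`). A contradiction is obtained by the method of auxiliary functions.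

By Carlitz, `S_d(1) = 1/ℓ_d` with `ℓ_d = ∏_{1 ≤ i ≤ d} (θ - θ^{q^i})`, and `S_d(2) = S_d(1)²`. Hence
`ζ(1), ζ(2), ζ(1,1)` have deformations `f₁, f₂, f₁₁`, power series in `t` over `k_∞`. Write `τ` for
raising coefficients to the power `q` and `W = t - θ^q`. Then `f₁^τ = W (f₁ - 1)`,
`f₂^τ = W² (f₂ - 1)` and `f₁₁^τ = W² (f₁₁ - f₁ + 1)`. These equations imply that `1, f₁, f₁₁, f₂` are
linearly independent over `k_∞[t]` when `q > 2`. They also turn the relation between `ζ(1,1)` and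
`ζ(2)` into a linear relation among the values at `t = θ^{q^j}` of the `V`-fold twists of
`1, f₁, f₁₁, f₂`, for every `j < V` (`value_relation`).

Let `Q = q^V` with `V = 7 m`. Counting dimensions over `𝔽_q` gives polynomials `P_i` in `t` of degree
less than `6 m`, not all zero, whose coefficients are `𝔽_q`-combinations of the elements
`b^{lQ} θ^{xQ + r}` (`l < D`, `x < N`, `r < Q`), such that `∑ P_i f_i^{(V)}` vanishes at `θ^{q^j}` for
all `j < V` (`exists_aux`, `vanish`). Only three conditions per point are imposed on the four `P_i`.
Dividing by the zeros (Schwarz lemma) shows that the coefficients of this function have degree at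
most `(c - m) Q` in `θ`, with `c` independent of `m` (`dle_aux`).

On the other hand the auxiliary function is `∑_{r < Q} θ^r (g_r)^{(V)}`, where each `g_r` is a
combination over `𝔽_q[t]` of the finitely many functions `b^l θ^x f_i`. The degrees of the summands
are distinct modulo `Q`, so every `g_r` has coefficients of degree at most `c - m`
(`dle_separate`). The functions `b^l θ^x f_i` do not depend on `m` and are independent over `𝔽_q[t]`
(`indep_family`), so a nonzero combination of them has degree bounded below by a constant
(`exists_lower_bound`). For large `m` all `g_r`, and hence all `P_i`, vanish: a contradiction.
-/

/-!
Setting: `Fq` is a finite field with `q = Fintype.card Fq` elements and characteristic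
`p = ringChar Fq`.  The field `k_∞ = 𝔽_q((1/θ))` is realized as `Kinf Fq`, the field of
formal Laurent series over `Fq` in the variable `u = θ⁻¹`; thus `theta Fq = u⁻¹` plays
the role of `θ` (it is the single Hahn series supported in degree `-1`), and polynomials
in `θ` are evaluated in `Kinf Fq` via `Polynomial.aeval (theta Fq)`.  `KinfBar Fq` is a
fixed algebraic closure `k̄_∞` of `k_∞`.
-/

set_option synthInstance.maxHeartbeats 1000000
set_option maxHeartbeats 1000000

noncomputable section

variable (Fq : Type) [Field Fq] [Fintype Fq]

/-- `k_∞ = 𝔽_q((1/θ))`, with its `1/θ`-adic (valued) topology. -/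
abbrev Kinf := LaurentSeries Fq

/-- `θ ∈ k_∞`, the inverse of the Laurent-series variable. -/
def theta : Kinf Fq := HahnSeries.single (-1 : ℤ) (1 : Fq)

/-- The multizeta value `ζ(n 0, …, n (d-1))`: the sum, over all `d`-tuples of monic
polynomials `a i ∈ 𝔽_q[θ]` with `deg (a 0) > deg (a 1) > … > deg (a (d-1)) ≥ 0`, of
`1 / (a 0 ^ n 0 ⋯ a (d-1) ^ n (d-1))`, computed in `k_∞`. -/
def mzv (d : ℕ) (n : Fin d → ℕ) : Kinf Fq :=
  ∑' a : {a : Fin d → Polynomial Fq //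
      (∀ i, (a i).Monic) ∧ ∀ i j : Fin d, i < j → (a j).degree < (a i).degree},
    (∏ i, Polynomial.aeval (theta Fq) (a.1 i) ^ n i)⁻¹

/-- A fixed algebraic closure `k̄_∞` of `k_∞`. -/
abbrev KinfBar := AlgebraicClosure (Kinf Fq)

/-- The image of `θ` in `k̄_∞`. -/
def thetaBar : KinfBar Fq := algebraMap (Kinf Fq) (KinfBar Fq) (theta Fq)

/-- The fundamental period `π̃ = (−θ)^{q/(q−1)} ∏_{i≥1} (1−θ^{1−qⁱ})⁻¹` of the Carlitz
module, relative to a chosen `(q−1)`-st root `η` of `−θ` (so `(−θ)^{q/(q−1)} = η ^ q`);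
the convergent product is computed in `k_∞` and mapped into `k̄_∞`. -/
def pitilde (η : KinfBar Fq) : KinfBar Fq :=
  η ^ Fintype.card Fq *
    algebraMap (Kinf Fq) (KinfBar Fq)
      (∏' i : ℕ, (1 - theta Fq ^ ((1 : ℤ) - (Fintype.card Fq : ℤ) ^ (i + 1)))⁻¹)

/-- `k = 𝔽_q(θ)`, as a subfield of `k̄_∞`. -/
def kSub : Subfield (KinfBar Fq) :=
  Subfield.closure
    (Set.range (fun a : Fq => algebraMap (Kinf Fq) (KinfBar Fq) (algebraMap Fq (Kinf Fq) a)) ∪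
      {thetaBar Fq})

/-- `k̄`, the algebraic closure of `k` inside `k̄_∞`. -/
def kbar : IntermediateField (kSub Fq) (KinfBar Fq) :=
  algebraicClosure (kSub Fq) (KinfBar Fq)

namespace Zeta11

set_option linter.unusedSectionVars false

variable {Fq}

local notation "𝔮" => Fintype.card Fq

/-! ### Carlitz's formulas for power sums over monic polynomials -/

section Carlitz

variable {F : Type} [Field F] [Algebra Fq F] (θ : F)

lemma card_pos : 0 < 𝔮 := Fintype.card_pos

lemma add_pow_card {R : Type} [CommRing R] [Algebra Fq R] (x y : R) :
    (x + y) ^ 𝔮 = x ^ 𝔮 + y ^ 𝔮 := by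
  have := map_add (FiniteField.frobeniusAlgHom Fq R) x y
  simpa using this

lemma sub_pow_card {R : Type} [CommRing R] [Algebra Fq R] (x y : R) :
    (x - y) ^ 𝔮 = x ^ 𝔮 - y ^ 𝔮 := by
  have := map_sub (FiniteField.frobeniusAlgHom Fq R) x y
  simpa using this

lemma algebraMap_pow_card {R : Type} [CommRing R] [Algebra Fq R] (x : Fq) :
    (algebraMap Fq R x) ^ 𝔮 = algebraMap Fq R x := by
  rw [← map_pow, FiniteField.pow_card]

variable (Fq) in
/-- Carlitz's `D_d`, the product of all monic polynomials in `θ` of degree `d`. -/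
def carlD (θ : F) : ℕ → F
  | 0 => 1
  | d + 1 => (θ ^ 𝔮 ^ (d + 1) - θ) * carlD θ d ^ 𝔮

variable (Fq) in
/-- The additive polynomial `e_d(z) = ∏_{deg a < d} (z - a)`, defined by its recursion. -/
def carlE (θ : F) : ℕ → F → F
  | 0, z => z
  | d + 1, z => carlE θ d z ^ 𝔮 - carlD Fq θ d ^ (𝔮 - 1) * carlE θ d z

variable (Fq) in
/-- The coefficient of `z` in `e_d(z)`. -/
def carlC (θ : F) : ℕ → F
  | 0 => 1
  | d + 1 => - (carlD Fq θ d ^ (𝔮 - 1) * carlC θ d)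

lemma carlE_add (d : ℕ) (x y : F) :
    carlE Fq θ d (x + y) = carlE Fq θ d x + carlE Fq θ d y := by
  induction d with
  | zero => rfl
  | succ d ih => simp only [carlE, ih, add_pow_card]; ring

lemma carlE_smul (d : ℕ) (c : Fq) (x : F) :
    carlE Fq θ d (algebraMap Fq F c * x) = algebraMap Fq F c * carlE Fq θ d x := by
  induction d with
  | zero => rfl
  | succ d ih => simp only [carlE, ih, mul_pow, algebraMap_pow_card]; ring

lemma carlE_theta (d : ℕ) (z : F) :
    carlE Fq θ (d + 1) (θ * z) = θ * carlE Fq θ (d + 1) z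
      + (θ ^ 𝔮 ^ (d + 1) - θ) * carlE Fq θ d z ^ 𝔮 := by
  induction d with
  | zero =>
    simp only [carlE, carlD, one_pow, mul_pow, zero_add, pow_one]; ring
  | succ d ih =>
    have h1 : carlE Fq θ (d + 1 + 1) (θ * z) =
      carlE Fq θ (d + 1) (θ * z) ^ 𝔮 - carlD Fq θ (d+1) ^ (𝔮 - 1) * carlE Fq θ (d+1) (θ * z) := rfl
    have h2 : carlE Fq θ (d + 1 + 1) z =
      carlE Fq θ (d + 1) z ^ 𝔮 - carlD Fq θ (d+1) ^ (𝔮 - 1) * carlE Fq θ (d+1) z := rfl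
    have h3 : carlE Fq θ (d + 1) z ^ 𝔮 = (carlE Fq θ d z ^ 𝔮) ^ 𝔮
        - (carlD Fq θ d ^ 𝔮) ^ (𝔮 - 1) * carlE Fq θ d z ^ 𝔮 := by
      rw [carlE, sub_pow_card, mul_pow]; ring
    have h4 : carlD Fq θ (d + 1) ^ (𝔮 - 1) * (θ ^ 𝔮 ^ (d + 1) - θ)
        = (θ ^ 𝔮 ^ (d + 1 + 1) - θ ^ 𝔮) * (carlD Fq θ d ^ 𝔮) ^ (𝔮 - 1) := by
      have : (θ ^ 𝔮 ^ (d + 1 + 1) - θ ^ 𝔮) = (θ ^ 𝔮 ^ (d + 1) - θ) ^ (𝔮 - 1 + 1) := by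
        rw [Nat.sub_add_cancel card_pos, sub_pow_card, ← pow_mul, ← pow_succ]
      rw [this, carlD, mul_pow, pow_succ]; ring
    rw [h1, h2, ih, add_pow_card, mul_pow, mul_pow, sub_pow_card, ← pow_mul θ, ← pow_succ 𝔮]
    linear_combination (θ ^ 𝔮 - θ ^ 𝔮 ^ (d + 1 + 1)) * h3 - carlE Fq θ d z ^ 𝔮 * h4

lemma carlE_pow_lt (d : ℕ) : ∀ i < d, carlE Fq θ d (θ ^ i) = 0 ∧ carlE Fq θ d (θ ^ d) = carlD Fq θ d := by
  induction d with
  | zero => intro i hi; omega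
  | succ d ih =>
    have hd : carlE Fq θ d (θ ^ d) = carlD Fq θ d := by
      rcases Nat.eq_zero_or_pos d with h | h
      · subst h; simp [carlE, carlD]
      · exact (ih 0 h).2
    have hz : carlE Fq θ (d + 1) (θ ^ d) = 0 := by
      rw [carlE, hd, ← pow_succ, Nat.sub_add_cancel card_pos, sub_self]
    intro i hi
    refine ⟨?_, ?_⟩
    · rcases Nat.lt_succ_iff_lt_or_eq.1 hi with h | h
      · rw [carlE, (ih i h).1, zero_pow card_pos.ne']; ring
      · rw [h]; exact hz
    · rw [pow_succ', carlE_theta, hz, hd, carlD]; ring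

lemma carlE_pow_self (d : ℕ) : carlE Fq θ d (θ ^ d) = carlD Fq θ d := by
  rcases Nat.eq_zero_or_pos d with h | h
  · subst h; simp [carlE, carlD]
  · exact (carlE_pow_lt θ d 0 h).2

open Polynomial in
lemma X_pow_card_sub_X_eq :
    (X ^ 𝔮 - X : F[X]) = ∏ ε : Fq, (X + C (algebraMap Fq F ε)) := by
  have h1 : (X ^ 𝔮 - X : Fq[X]) = ∏ ε : Fq, (X - C ε) := by
    have hm : (X ^ 𝔮 - X : Fq[X]).Monic := by
      apply monic_X_pow_sub
      rw [degree_X]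
      exact_mod_cast Fintype.one_lt_card
    have := prod_multiset_X_sub_C_of_monic_of_roots_card_eq hm (by
      rw [FiniteField.roots_X_pow_card_sub_X,
        FiniteField.X_pow_card_sub_X_natDegree_eq _ Fintype.one_lt_card]
      rfl)
    rw [FiniteField.roots_X_pow_card_sub_X] at this
    exact this.symm
  have h2 := congrArg (Polynomial.map (algebraMap Fq F)) h1
  rw [Polynomial.map_prod] at h2
  simp only [Polynomial.map_sub, Polynomial.map_X, Polynomial.map_C, Polynomial.map_pow] at h2
  rw [h2, ← Equiv.prod_comp (Equiv.neg Fq)]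
  simp

open Polynomial in
lemma prod_add (y : F) : ∏ ε : Fq, (y + algebraMap Fq F ε) = y ^ 𝔮 - y := by
  have he := congrArg (Polynomial.eval y) (X_pow_card_sub_X_eq (Fq := Fq) (F := F))
  simp only [eval_sub, eval_pow, eval_X, eval_prod, eval_add, eval_C] at he
  exact he.symm

open Polynomial in
/-- The logarithmic derivative of `y ^ q - y = ∏ (y + ε)`. -/
lemma sum_inv_add (y : F) (hy : ∀ ε : Fq, y + algebraMap Fq F ε ≠ 0) :
    ∑ ε : Fq, (y + algebraMap Fq F ε)⁻¹ = - (y ^ 𝔮 - y)⁻¹ := by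
  classical
  have hprod := X_pow_card_sub_X_eq (Fq := Fq) (F := F)
  have hq0 : ((𝔮 : ℕ) : F) = 0 := by
    rw [← map_natCast (algebraMap Fq F), FiniteField.cast_card_eq_zero, map_zero]
  have hd := congrArg (fun p => Polynomial.eval y (derivative p)) hprod
  simp only [derivative_prod_finset, derivative_sub, derivative_X_pow, derivative_X, hq0,
    eval_finsetSum, derivative_add, derivative_C, eval_prod, eval_add, eval_X,
    eval_C, C_0, zero_mul, add_zero, mul_one, zero_sub, eval_neg, eval_one] at hd
  have he := congrArg (Polynomial.eval y) hprod
  simp only [eval_sub, eval_pow, eval_X, eval_prod, eval_add, eval_C] at he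
  have hne : y ^ 𝔮 - y ≠ 0 := by
    rw [he]; exact Finset.prod_ne_zero_iff.2 fun ε _ => hy ε
  have : ∑ ε : Fq, (y + algebraMap Fq F ε)⁻¹ * (y ^ 𝔮 - y) = -1 := by
    rw [hd]
    refine Finset.sum_congr rfl fun ε _ => ?_
    rw [he, ← Finset.mul_prod_erase _ _ (Finset.mem_univ ε), inv_mul_cancel_left₀ (hy ε)]
  rw [← Finset.sum_mul] at this
  rw [← inv_neg]
  refine eq_inv_of_mul_eq_one_left ?_
  rw [mul_neg, this, neg_neg]

/-- The value at `θ` of the polynomial of degree `< d` with coefficient vector `c`. -/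
def low (θ : F) (d : ℕ) (c : Fin d → Fq) : F := ∑ i, algebraMap Fq F (c i) * θ ^ (i : ℕ)

lemma low_add (d : ℕ) (c c' : Fin d → Fq) : low θ d (c + c') = low θ d c + low θ d c' := by
  simp [low, add_mul, Finset.sum_add_distrib]

lemma low_snoc (d : ℕ) (c : Fin d → Fq) (ε : Fq) :
    low θ (d + 1) (Fin.snoc c ε : Fin (d + 1) → Fq) = low θ d c + algebraMap Fq F ε * θ ^ d := by
  simp [low, Fin.sum_univ_castSucc]

variable (Fq) in
/-- `θ` is transcendental over the finite field, in the form used below. -/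
def Transc (θ : F) : Prop := ∀ (d : ℕ) (c : Fin d → Fq), c ≠ 0 → low θ d c ≠ 0

variable {θ}

lemma Transc.monic_ne (hθ : Transc Fq θ) (d : ℕ) (c : Fin d → Fq) : θ ^ d + low θ d c ≠ 0 := by
  have := hθ (d + 1) (Fin.snoc c 1) (fun h => by
    have := congrFun h (Fin.last d)
    simp at this)
  rw [low_snoc] at this
  simpa [add_comm] using this

lemma Transc.sub_ne (hθ : Transc Fq θ) (d : ℕ) : θ ^ 𝔮 ^ (d + 1) - θ ≠ 0 := by
  have h1 : 1 < 𝔮 ^ (d + 1) := Nat.one_lt_pow (by omega) Fintype.one_lt_card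
  have := hθ.monic_ne (𝔮 ^ (d + 1)) (Pi.single (⟨1, h1⟩ : Fin (𝔮 ^ (d + 1))) (-1))
  simpa [low, Pi.single_apply, apply_ite, ite_mul, sub_eq_add_neg] using this

lemma Transc.carlD_ne (hθ : Transc Fq θ) (d : ℕ) : carlD Fq θ d ≠ 0 := by
  induction d with
  | zero => simp [carlD]
  | succ d ih => exact mul_ne_zero (hθ.sub_ne d) (pow_ne_zero _ ih)

lemma sum_inv_low (hθ : Transc Fq θ) (d : ℕ) (z : F) (hz : ∀ c : Fin d → Fq, z + low θ d c ≠ 0) :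
    carlE Fq θ d z ≠ 0 ∧
      ∑ c : Fin d → Fq, (z + low θ d c)⁻¹ = carlC Fq θ d * (carlE Fq θ d z)⁻¹ := by
  induction d generalizing z with
  | zero =>
    have := hz 0
    simpa [low, carlE, carlC] using this
  | succ d ih =>
    have hz' (ε : Fq) (c : Fin d → Fq) : (z + algebraMap Fq F ε * θ ^ d) + low θ d c ≠ 0 := by
      have := hz (Fin.snoc c ε)
      rw [low_snoc] at this
      convert this using 1
      ring
    have hD := hθ.carlD_ne d
    have hE (ε : Fq) : carlE Fq θ d (z + algebraMap Fq F ε * θ ^ d) =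
        carlD Fq θ d * (carlE Fq θ d z / carlD Fq θ d + algebraMap Fq F ε) := by
      rw [carlE_add, carlE_smul, carlE_pow_self]
      field_simp
    set y := carlE Fq θ d z / carlD Fq θ d with hy
    have hyne (ε : Fq) : y + algebraMap Fq F ε ≠ 0 := by
      have := (ih _ (hz' ε)).1
      rw [hE] at this
      exact right_ne_zero_of_mul this
    have hE1 : carlE Fq θ (d + 1) z = carlD Fq θ d ^ (𝔮 - 1) * carlD Fq θ d * (y ^ 𝔮 - y) := by
      have : carlE Fq θ d z = carlD Fq θ d * y := by rw [hy]; field_simp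
      rw [carlE, this, mul_sub, ← pow_succ, Nat.sub_add_cancel card_pos, mul_pow, ← mul_assoc,
        ← pow_succ, Nat.sub_add_cancel card_pos]
    have hsum := sum_inv_add y hyne
    have hyq : y ^ 𝔮 - y ≠ 0 := by
      intro h0
      have h2 : ∏ ε : Fq, (y + algebraMap Fq F ε) = y ^ 𝔮 - y := prod_add y
      rw [h0] at h2
      exact Finset.prod_ne_zero_iff.2 (fun ε _ => hyne ε) h2
    refine ⟨?_, ?_⟩
    · rw [hE1]
      exact mul_ne_zero (mul_ne_zero (pow_ne_zero _ hD) hD) hyq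
    · rw [← Equiv.sum_comp (Fin.snocEquiv (fun _ : Fin (d + 1) => Fq)), Fintype.sum_prod_type]
      have (ε : Fq) : ∑ c : Fin d → Fq,
          (z + low θ (d + 1) ((Fin.snocEquiv (fun _ : Fin (d + 1) => Fq)) (ε, c)))⁻¹ =
          carlC Fq θ d * (carlD Fq θ d)⁻¹ * (y + algebraMap Fq F ε)⁻¹ := by
        rw [mul_assoc, ← mul_inv, ← hE, ← (ih _ (hz' ε)).2]
        refine Finset.sum_congr rfl fun c _ => ?_
        congr 1
        rw [add_assoc, add_comm _ (low θ d c), ← low_snoc]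
        rfl
      simp only [this]
      rw [← Finset.mul_sum, hsum, hE1, carlC]
      field_simp

variable (Fq) in
/-- Carlitz's `ℓ_d = ∏_{1 ≤ i ≤ d} (θ - θ ^ q ^ i)`. -/
def ell (θ : F) : ℕ → F
  | 0 => 1
  | n + 1 => ell θ n * (θ - θ ^ 𝔮 ^ (n + 1))

lemma Transc.ell_ne (hθ : Transc Fq θ) (d : ℕ) : ell Fq θ d ≠ 0 := by
  induction d with
  | zero => simp [ell]
  | succ d ih =>
    refine mul_ne_zero ih fun h => hθ.sub_ne d ?_
    rw [← neg_sub, h, neg_zero]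

lemma carlC_mul_ell (d : ℕ) : carlC Fq θ d * ell Fq θ d = carlD Fq θ d := by
  induction d with
  | zero => simp [carlC, ell, carlD]
  | succ d ih =>
    have h : carlD Fq θ d ^ 𝔮 = carlD Fq θ d ^ (𝔮 - 1) * carlD Fq θ d := by
      rw [← pow_succ, Nat.sub_add_cancel card_pos]
    rw [carlC, ell, carlD, h]
    linear_combination (-carlD Fq θ d ^ (𝔮 - 1) * (θ - θ ^ 𝔮 ^ (d + 1))) * ih

/-- The power sum `S_d(1)` equals `1 / ℓ_d`. -/
lemma sum_inv_monic (hθ : Transc Fq θ) (d : ℕ) :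
    ∑ c : Fin d → Fq, (θ ^ d + low θ d c)⁻¹ = (ell Fq θ d)⁻¹ := by
  rw [(sum_inv_low hθ d _ (hθ.monic_ne d)).2, carlE_pow_self, ← carlC_mul_ell, mul_inv,
    mul_inv_cancel_left₀]
  have h1 := hθ.carlD_ne d
  rw [← carlC_mul_ell] at h1
  exact left_ne_zero_of_mul h1

/-- The power sum `S_d(2)` is the square of `S_d(1)`: in the expansion of the square, the terms
`1 / (a b)` with a fixed difference `b - a ≠ 0` cancel by partial fractions. -/
lemma sum_inv_sq_monic (hθ : Transc Fq θ) (d : ℕ) :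
    ∑ c : Fin d → Fq, ((θ ^ d + low θ d c) ^ 2)⁻¹ = (ell Fq θ d ^ 2)⁻¹ := by
  classical
  have h0 : ((ell Fq θ d) ^ 2)⁻¹ = ∑ δ : Fin d → Fq, ∑ c : Fin d → Fq,
      (θ ^ d + low θ d c)⁻¹ * (θ ^ d + low θ d (c + δ))⁻¹ := by
    rw [← inv_pow, ← sum_inv_monic hθ, pow_two, Finset.sum_mul_sum, Finset.sum_comm (γ := Fin d → Fq)
      (s := Finset.univ) (t := Finset.univ)
      (f := fun δ c => (θ ^ d + low θ d c)⁻¹ * (θ ^ d + low θ d (c + δ))⁻¹)]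
    refine Finset.sum_congr rfl fun c _ => ?_
    rw [← Equiv.sum_comp (Equiv.addLeft c)]
    rfl
  rw [h0]
  symm
  rw [Finset.sum_eq_single (0 : Fin d → Fq)]
  · simp [pow_two]
  · intro δ _ hδ
    have hδ' := hθ d δ hδ
    have (c : Fin d → Fq) : (θ ^ d + low θ d c)⁻¹ * (θ ^ d + low θ d (c + δ))⁻¹ =
        (low θ d δ)⁻¹ * ((θ ^ d + low θ d c)⁻¹ - (θ ^ d + low θ d (c + δ))⁻¹) := by
      have h1 := hθ.monic_ne d c
      have h2 := hθ.monic_ne d (c + δ)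
      rw [inv_sub_inv h1 h2, low_add] at *
      rw [eq_inv_mul_iff_mul_eq₀ hδ', ← mul_inv]
      field_simp
      ring
    simp only [this]
    have h3 := Equiv.sum_comp (Equiv.addRight δ) (fun c => (θ ^ d + low θ d c)⁻¹)
    simp only [Equiv.coe_addRight] at h3
    rw [← Finset.mul_sum, Finset.sum_sub_distrib, h3, sub_self, mul_zero]
  · simp

end Carlitz

/-! ### The valuation of `k_∞` -/

/-- `x` has degree at most `D` in `θ`. -/
def DLe (x : Kinf Fq) (D : ℤ) : Prop := Valued.v x ≤ WithZero.exp D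

lemma dle_iff {x : Kinf Fq} {D : ℤ} : DLe x D ↔ ∀ n < -D, x.coeff n = 0 := by
  have := LaurentSeries.valuation_le_iff_coeff_lt_eq_zero Fq (D := -D) (f := x)
  rwa [neg_neg] at this

lemma DLe.add {x y : Kinf Fq} {D : ℤ} (hx : DLe x D) (hy : DLe y D) : DLe (x + y) D :=
  (Valuation.map_add_le _ hx hy)

lemma DLe.neg {x : Kinf Fq} {D : ℤ} (hx : DLe x D) : DLe (-x) D := by
  rw [DLe, Valuation.map_neg]; exact hx

lemma DLe.sub {x y : Kinf Fq} {D : ℤ} (hx : DLe x D) (hy : DLe y D) : DLe (x - y) D :=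
  (Valuation.map_sub_le _ hx hy)

lemma DLe.mono {x : Kinf Fq} {D E : ℤ} (hx : DLe x D) (h : D ≤ E) : DLe x E :=
  hx.trans (WithZero.exp_le_exp.2 h)

lemma DLe.mul {x y : Kinf Fq} {D E : ℤ} (hx : DLe x D) (hy : DLe y E) : DLe (x * y) (D + E) := by
  rw [DLe, Valuation.map_mul, WithZero.exp_add]
  exact mul_le_mul' hx hy

lemma DLe.pow {x : Kinf Fq} {D : ℤ} (hx : DLe x D) (n : ℕ) : DLe (x ^ n) (n * D) := by
  induction n with
  | zero => simp [DLe]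
  | succ n ih =>
    rw [pow_succ]
    convert ih.mul hx using 1
    push_cast; ring

lemma dle_zero (D : ℤ) : DLe (0 : Kinf Fq) D := by simp [DLe]

lemma dle_one : DLe (1 : Kinf Fq) 0 := by simp [DLe]

lemma dle_sum {ι : Type*} (s : Finset ι) (f : ι → Kinf Fq) {D : ℤ} (h : ∀ i ∈ s, DLe (f i) D) :
    DLe (∑ i ∈ s, f i) D :=
  Valuation.map_sum_le _ h

lemma eq_zero_of_dle {x : Kinf Fq} (h : ∀ D : ℕ, DLe x (-D)) : x = 0 := by
  ext n
  exact dle_iff.1 (h (n + 1).toNat) n (by omega)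

lemma exists_dle (x : Kinf Fq) : ∃ D : ℕ, DLe x D := by
  by_cases hx : x = 0
  · exact ⟨0, hx ▸ dle_zero _⟩
  · refine ⟨(WithZero.log (Valued.v x : WithZero (Multiplicative ℤ))).toNat, ?_⟩
    have h0 : (Valued.v x : WithZero (Multiplicative ℤ)) ≠ 0 := (Valuation.ne_zero_iff _).2 hx
    rw [DLe, ← WithZero.log_le_iff_le_exp h0]
    omega

lemma v_theta : Valued.v (theta Fq) = WithZero.exp (1 : ℤ) := by
  have := LaurentSeries.valuation_single_zpow Fq (-1)
  simpa [theta] using this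

lemma theta_ne : theta Fq ≠ 0 := by
  rw [← (Valuation.ne_zero_iff (Valued.v (R := Kinf Fq))), v_theta]
  simp

lemma v_theta_pow (n : ℕ) : Valued.v (theta Fq ^ n) = WithZero.exp (n : ℤ) := by
  rw [Valuation.map_pow, v_theta, ← WithZero.exp_nsmul]; simp

lemma dle_theta_pow (n : ℕ) : DLe (theta Fq ^ n) n := (v_theta_pow n).le

lemma theta_pow (n : ℕ) : theta Fq ^ n = HahnSeries.single (-n : ℤ) (1 : Fq) := by
  rw [theta, HahnSeries.single_pow]; simp

lemma algebraMap_mul_theta_pow (c : Fq) (n : ℕ) :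
    algebraMap Fq (Kinf Fq) c * theta Fq ^ n = HahnSeries.single (-n : ℤ) c := by
  rw [theta_pow, LaurentSeries.algebraMap_apply, HahnSeries.C_apply, HahnSeries.single_mul_single]
  simp

lemma dle_algebraMap (c : Fq) : DLe (algebraMap Fq (Kinf Fq) c) 0 := by
  rw [dle_iff]
  intro n hn
  rw [LaurentSeries.algebraMap_apply, HahnSeries.C_apply, HahnSeries.coeff_single_of_ne (by omega)]

lemma low_coeff (d : ℕ) (c : Fin d → Fq) (i : Fin d) :
    (low (theta Fq) d c).coeff (-(i : ℤ)) = c i := by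
  simp only [low, algebraMap_mul_theta_pow, HahnSeries.coeff_sum]
  rw [Finset.sum_eq_single i]
  · simp
  · intro j _ hj
    rw [HahnSeries.coeff_single_of_ne]
    intro h
    exact hj (Fin.ext (by omega))
  · simp

lemma transc_theta : Transc Fq (theta Fq) := by
  intro d c hc h
  apply hc
  funext i
  rw [← low_coeff d c i, h]; rfl

lemma dle_low (d : ℕ) (c : Fin d → Fq) : DLe (low (theta Fq) d c) (d - 1) := by
  refine dle_sum _ _ fun i _ => ?_
  refine ((dle_algebraMap _).mul (dle_theta_pow _)).mono ?_
  have := i.2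
  omega

lemma v_monic (d : ℕ) (c : Fin d → Fq) :
    Valued.v (theta Fq ^ d + low (theta Fq) d c) = WithZero.exp (d : ℤ) := by
  rw [Valuation.map_add_eq_of_lt_left, v_theta_pow]
  rw [v_theta_pow]
  exact (dle_low d c).trans_lt (WithZero.exp_lt_exp.2 (by omega))

lemma mem_nhds_zero_iff (s : Set (Kinf Fq)) :
    s ∈ nhds (0 : Kinf Fq) ↔ ∃ D : ℕ, ∀ x, DLe x (-D) → x ∈ s := by
  rw [Valued.mem_nhds_zero]
  constructor
  · rintro ⟨γ, hγ⟩
    obtain ⟨x, hx⟩ : ∃ x : Kinf Fq, Valued.v x = MonoidWithZeroHom.ValueGroup₀.embedding γ.1 :=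
      LaurentSeries.valuation_surjective Fq _
    have hx0 : (Valued.v x : WithZero (Multiplicative ℤ)) ≠ 0 := by
      rw [hx]; exact (map_ne_zero _).2 γ.ne_zero
    refine ⟨(1 - WithZero.log (Valued.v x : WithZero (Multiplicative ℤ))).toNat, fun y hy => hγ ?_⟩
    show Valued.v.restrict y < γ.1
    rw [Valuation.restrict_lt_iff_lt_embedding, ← hx]
    refine lt_of_le_of_lt hy ?_
    rw [← WithZero.lt_log_iff_exp_lt hx0]
    omega
  · rintro ⟨D, hD⟩
    have h0 : Valued.v.restrict (theta Fq ^ D)⁻¹ ≠ 0 :=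
      (Valuation.ne_zero_iff _).2 (inv_ne_zero (pow_ne_zero _ theta_ne))
    refine ⟨Units.mk0 _ h0, fun x hx => hD x ?_⟩
    have hx' : Valued.v.restrict x < Valued.v.restrict (theta Fq ^ D)⁻¹ := hx
    rw [Valuation.restrict_lt_iff, map_inv₀, v_theta_pow] at hx'
    rw [DLe, WithZero.exp_neg]
    exact hx'.le

lemma tendsto_zero_iff {ι : Type*} {l : Filter ι} {f : ι → Kinf Fq} :
    Filter.Tendsto f l (nhds 0) ↔ ∀ D : ℕ, ∀ᶠ i in l, DLe (f i) (-D) := by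
  constructor
  · intro h D
    exact h ((mem_nhds_zero_iff _).2 ⟨D, fun x hx => hx⟩)
  · intro h s hs
    obtain ⟨D, hD⟩ := (mem_nhds_zero_iff s).1 hs
    exact (h D).mono fun i hi => hD _ hi

instance : NonarchimedeanAddGroup (Kinf Fq) where
  is_nonarchimedean := by
    intro U hU
    obtain ⟨D, hD⟩ := (mem_nhds_zero_iff U).1 hU
    let G : AddSubgroup (Kinf Fq) :=
      { carrier := {x | DLe x (-D)}
        add_mem' := fun hx hy => DLe.add hx hy
        zero_mem' := dle_zero _
        neg_mem' := fun hx => DLe.neg hx }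
    exact ⟨⟨G, G.isOpen_of_mem_nhds (g := 0) ((mem_nhds_zero_iff _).2 ⟨D, fun x hx => hx⟩)⟩, hD⟩

lemma tendsto_pow_card {ι : Type*} {l : Filter ι} {f : ι → Kinf Fq} {x : Kinf Fq}
    (h : Filter.Tendsto f l (nhds x)) (n : ℕ) : Filter.Tendsto (fun i => f i ^ n) l (nhds (x ^ n)) :=
  h.pow n

/-! ### The multizeta values as limits of power sums -/

/-- The monic polynomial of degree `d` with lower coefficients `c`. -/
def mpoly (d : ℕ) (c : Fin d → Fq) : Polynomial Fq :=
  Polynomial.X ^ d + ∑ i : Fin d, Polynomial.monomial i (c i)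

lemma sum_monomial_degree_lt (d : ℕ) (c : Fin d → Fq) :
    (∑ i : Fin d, Polynomial.monomial (i : ℕ) (c i)).degree < d :=
  Polynomial.mem_degreeLT.1 ((Polynomial.degreeLTEquiv Fq d).symm c).2

lemma mpoly_monic (d : ℕ) (c : Fin d → Fq) : (mpoly d c).Monic :=
  Polynomial.monic_X_pow_add (sum_monomial_degree_lt d c)

lemma mpoly_degree (d : ℕ) (c : Fin d → Fq) : (mpoly d c).degree = d := by
  rw [mpoly, Polynomial.degree_add_eq_left_of_degree_lt] <;> rw [Polynomial.degree_X_pow]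
  exact sum_monomial_degree_lt d c

lemma mpoly_injective (d : ℕ) : Function.Injective (mpoly (Fq := Fq) d) := by
  intro c c' h
  have h1 : (∑ i : Fin d, Polynomial.monomial (i : ℕ) (c i)) =
    ∑ i : Fin d, Polynomial.monomial (i : ℕ) (c' i) := add_left_cancel h
  exact (Polynomial.degreeLTEquiv Fq d).symm.injective (Subtype.ext h1)

lemma exists_mpoly (p : Polynomial Fq) (hp : p.Monic) : ∃ d c, mpoly d c = p := by
  let a := Polynomial.monicEquivDegreeLT (R := Fq) p.natDegree ⟨p, hp, rfl⟩
  refine ⟨p.natDegree, Polynomial.degreeLTEquiv Fq _ a, ?_⟩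
  have h1 := (Polynomial.monicEquivDegreeLT (R := Fq) p.natDegree).symm_apply_apply ⟨p, hp, rfl⟩
  have h2 : (∑ i : Fin p.natDegree,
      Polynomial.monomial (i : ℕ) (Polynomial.degreeLTEquiv Fq _ a i)) = a.1 :=
    congrArg Subtype.val ((Polynomial.degreeLTEquiv Fq _).symm_apply_apply a)
  rw [mpoly, h2]
  exact congrArg Subtype.val h1

lemma aeval_mpoly (d : ℕ) (c : Fin d → Fq) :
    Polynomial.aeval (theta Fq) (mpoly d c) = theta Fq ^ d + low (theta Fq) d c := by
  simp [mpoly, low, Polynomial.aeval_monomial]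

lemma mpoly_inj {d d' : ℕ} {c : Fin d → Fq} {c' : Fin d' → Fq} (h : mpoly d c = mpoly d' c') :
    (⟨d, c⟩ : Σ d, Fin d → Fq) = ⟨d', c'⟩ := by
  have h1 := congrArg Polynomial.degree h
  rw [mpoly_degree, mpoly_degree] at h1
  have h2 : d = d' := by exact_mod_cast h1
  subst h2
  rw [mpoly_injective d h]

/-- A series over graded finite blocks with terms tending to zero may be summed by blocks. -/
lemma tendsto_sum_blocks {β : ℕ → Type} [∀ d, Fintype (β d)] (f : (Σ d, β d) → Kinf Fq)
    (hf : ∀ d x, DLe (f ⟨d, x⟩) (-d)) :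
    Filter.Tendsto (fun n => ∑ d ∈ Finset.range n, ∑ x, f ⟨d, x⟩) Filter.atTop
      (nhds (∑' x, f x)) := by
  have hs : Summable f := by
    apply NonarchimedeanAddGroup.summable_of_tendsto_cofinite_zero
    rw [tendsto_zero_iff]
    intro D
    rw [Filter.eventually_cofinite]
    refine (Set.finite_range (fun x : Σ d : Fin D, β d => (⟨x.1, x.2⟩ : Σ d, β d))).subset ?_
    rintro ⟨d, x⟩ hx
    by_cases h : d < D
    · exact ⟨⟨⟨d, h⟩, x⟩, rfl⟩
    · exact absurd ((hf d x).mono (by omega)) hx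
  exact (hs.hasSum.sigma (fun d => hasSum_fintype _)).tendsto_sum_nat

variable (Fq) in
/-- Partial sums of `ζ(1)`. -/
def s1 (n : ℕ) : Kinf Fq := ∑ d ∈ Finset.range n, (ell Fq (theta Fq) d)⁻¹

variable (Fq) in
/-- Partial sums of `ζ(2)`. -/
def s2 (n : ℕ) : Kinf Fq := ∑ d ∈ Finset.range n, (ell Fq (theta Fq) d ^ 2)⁻¹

variable (Fq) in
/-- Partial sums of `ζ(1,1)`. -/
def s11 (n : ℕ) : Kinf Fq := ∑ d ∈ Finset.range n, (ell Fq (theta Fq) d)⁻¹ * s1 Fq d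

lemma dle_inv_monic (d : ℕ) (c : Fin d → Fq) :
    DLe (theta Fq ^ d + low (theta Fq) d c)⁻¹ (-d) := by
  rw [DLe, map_inv₀, v_monic, WithZero.exp_neg]

lemma tendsto_s2 : Filter.Tendsto (s2 Fq) Filter.atTop (nhds (mzv Fq 1 ![2])) := by
  let e : (Σ d, Fin d → Fq) → {a : Fin 1 → Polynomial Fq //
      (∀ i, (a i).Monic) ∧ ∀ i j : Fin 1, i < j → (a j).degree < (a i).degree} :=
    fun x => ⟨fun _ => mpoly x.1 x.2, fun _ => mpoly_monic _ _, fun i j h => by omega⟩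
  have he : Function.Bijective e := by
    constructor
    · rintro ⟨d, c⟩ ⟨d', c'⟩ h
      exact mpoly_inj (congrFun (congrArg Subtype.val h) 0)
    · rintro ⟨a, ha, hb⟩
      obtain ⟨d, c, h⟩ := exists_mpoly (a 0) (ha 0)
      refine ⟨⟨d, c⟩, Subtype.ext (funext fun i => ?_)⟩
      rw [Subsingleton.elim i 0]
      exact h
  have h1 := (Equiv.ofBijective e he).tsum_eq (fun a =>
    (∏ i, Polynomial.aeval (theta Fq) (a.1 i) ^ (![2] : Fin 1 → ℕ) i)⁻¹)
  rw [mzv, ← h1]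
  have h2 := tendsto_sum_blocks (Fq := Fq) (β := fun d => Fin d → Fq)
    (fun x => (∏ i, Polynomial.aeval (theta Fq) ((Equiv.ofBijective e he x).1 i)
      ^ (![2] : Fin 1 → ℕ) i)⁻¹) (by
    intro d c
    simp only [Equiv.ofBijective_apply, e, aeval_mpoly, Finset.univ_unique,
      Finset.prod_singleton, Matrix.cons_val_fin_one, pow_two, mul_inv]
    exact ((dle_inv_monic d c).mul (dle_inv_monic d c)).mono (by omega))
  refine h2.congr fun n => ?_
  refine Finset.sum_congr rfl fun d _ => ?_
  rw [← sum_inv_sq_monic transc_theta]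
  refine Finset.sum_congr rfl fun c _ => ?_
  simp [e, aeval_mpoly]

lemma tendsto_s11 : Filter.Tendsto (s11 Fq) Filter.atTop (nhds (mzv Fq 2 ![1, 1])) := by
  let e : (Σ d, (Fin d → Fq) × Σ e : Fin d, Fin e → Fq) → {a : Fin 2 → Polynomial Fq //
      (∀ i, (a i).Monic) ∧ ∀ i j : Fin 2, i < j → (a j).degree < (a i).degree} :=
    fun x => ⟨![mpoly x.1 x.2.1, mpoly x.2.2.1 x.2.2.2],
      fun i => by fin_cases i <;> exact mpoly_monic _ _,
      fun i j h => by
        fin_cases i <;> fin_cases j <;> simp [mpoly_degree] at h ⊢⟩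
  have he : Function.Bijective e := by
    constructor
    · rintro ⟨d, c, ⟨m, hm⟩, b⟩ ⟨d', c', ⟨m', hm'⟩, b'⟩ h
      have h0 := mpoly_inj (congrFun (congrArg Subtype.val h) 0)
      have h1 := mpoly_inj (congrFun (congrArg Subtype.val h) 1)
      cases h0
      cases h1
      rfl
    · rintro ⟨a, ha, hb⟩
      obtain ⟨d, c, h⟩ := exists_mpoly (a 0) (ha 0)
      obtain ⟨d', c', h'⟩ := exists_mpoly (a 1) (ha 1)
      have hlt := hb 0 1 (by decide)
      rw [← h, ← h', mpoly_degree, mpoly_degree] at hlt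
      refine ⟨⟨d, c, ⟨d', by exact_mod_cast hlt⟩, c'⟩, Subtype.ext (funext fun i => ?_)⟩
      fin_cases i
      · exact h
      · exact h'
  have h1 := (Equiv.ofBijective e he).tsum_eq (fun a =>
    (∏ i, Polynomial.aeval (theta Fq) (a.1 i) ^ (![1, 1] : Fin 2 → ℕ) i)⁻¹)
  rw [mzv, ← h1]
  have h2 := tendsto_sum_blocks (Fq := Fq) (β := fun d => (Fin d → Fq) × Σ e : Fin d, Fin e → Fq)
    (fun x => (∏ i, Polynomial.aeval (theta Fq) ((Equiv.ofBijective e he x).1 i)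
      ^ (![1, 1] : Fin 2 → ℕ) i)⁻¹) (by
    rintro d ⟨c, m, b⟩
    simp only [Equiv.ofBijective_apply, e, Fin.prod_univ_two, Matrix.cons_val_zero,
      Matrix.cons_val_one, aeval_mpoly, pow_one, mul_inv]
    exact ((dle_inv_monic d c).mul (dle_inv_monic _ b)).mono (by omega))
  refine h2.congr fun n => ?_
  refine Finset.sum_congr rfl fun d _ => ?_
  rw [← sum_inv_monic transc_theta, s1, Fintype.sum_prod_type, Finset.sum_mul]
  refine Finset.sum_congr rfl fun c _ => ?_
  rw [Fintype.sum_sigma, Finset.mul_sum, ← Fin.sum_univ_eq_sum_range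
    (fun m => (theta Fq ^ d + low (theta Fq) d c)⁻¹ * (ell Fq (theta Fq) m)⁻¹)]
  refine Finset.sum_congr rfl fun m _ => ?_
  rw [← sum_inv_monic transc_theta, Finset.mul_sum]
  refine Finset.sum_congr rfl fun b _ => ?_
  simp [e, aeval_mpoly, Fin.prod_univ_two, mul_comm]

lemma dle_inv_ell (d : ℕ) : DLe (ell Fq (theta Fq) d)⁻¹ (-d) := by
  rw [← sum_inv_monic transc_theta]
  exact dle_sum _ _ fun c _ => dle_inv_monic d c

lemma mzv2_ne_zero : mzv Fq 1 ![2] ≠ 0 := by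
  intro h
  have h1 := (tendsto_s2 (Fq := Fq))
  rw [h, tendsto_zero_iff] at h1
  obtain ⟨n, hn⟩ := ((h1 1).and (Filter.eventually_ge_atTop 1)).exists
  obtain ⟨n, rfl⟩ : ∃ k, n = k + 1 := ⟨n - 1, by omega⟩
  have h2 : DLe (∑ d ∈ Finset.range n, (ell Fq (theta Fq) (d + 1) ^ 2)⁻¹) (-1) := by
    refine dle_sum _ _ fun d _ => ?_
    rw [← inv_pow]
    refine ((dle_inv_ell _).pow 2).mono ?_
    push_cast; omega
  have h3 := hn.1
  rw [s2, Finset.sum_range_succ'] at h3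
  have h4 := h3.sub h2
  have h5 := dle_iff.1 h4 0 (by norm_num)
  simp [ell] at h5

/-! ### A linear relation gives an algebraic ratio -/

variable (Fq) in
/-- Evaluation of polynomials at `θ`. -/
def rho : Polynomial Fq →+* Kinf Fq := (Polynomial.aeval (theta Fq)).toRingHom

lemma rho_apply (p : Polynomial Fq) : rho Fq p = Polynomial.aeval (theta Fq) p := rfl

lemma rho_injective : Function.Injective (rho Fq) := by
  rw [injective_iff_map_eq_zero]
  intro p hp
  by_contra h
  refine transc_theta (Fq := Fq) (p.natDegree + 1) (fun i => p.coeff i) ?_ ?_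
  · intro h0
    have := congrFun h0 (Fin.last _)
    simp at this
    exact h this
  · rw [rho_apply, Polynomial.aeval_eq_sum_range] at hp
    rw [low, Fin.sum_univ_eq_sum_range (fun i => algebraMap Fq (Kinf Fq) (p.coeff i) * theta Fq ^ i),
      ← hp]
    refine Finset.sum_congr rfl fun i _ => ?_
    rw [Algebra.smul_def]

variable (Fq) in
/-- Evaluation of polynomials at `θ`, with values in the algebraic closure. -/
def rhoBar : Polynomial Fq →+* KinfBar Fq := (algebraMap (Kinf Fq) (KinfBar Fq)).comp (rho Fq)

lemma rhoBar_injective : Function.Injective (rhoBar Fq) :=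
  (algebraMap (Kinf Fq) (KinfBar Fq)).injective.comp rho_injective

lemma mem_kSub (x : KinfBar Fq) (hx : x ∈ kSub Fq) :
    ∃ n d : Polynomial Fq, d ≠ 0 ∧ rhoBar Fq d * x = rhoBar Fq n := by
  have hsub : Subring.closure (Set.range (fun a : Fq =>
      algebraMap (Kinf Fq) (KinfBar Fq) (algebraMap Fq (Kinf Fq) a)) ∪ {thetaBar Fq}) ≤
      (rhoBar Fq).range := by
    rw [Subring.closure_le]
    rintro y (⟨a, rfl⟩ | rfl)
    · exact ⟨Polynomial.C a, by simp [rhoBar, rho_apply]⟩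
    · exact ⟨Polynomial.X, by simp [rhoBar, rho_apply, thetaBar]⟩
  rw [kSub, Subfield.mem_closure_iff] at hx
  obtain ⟨y, hy, z, hz, rfl⟩ := hx
  obtain ⟨n, rfl⟩ := hsub hy
  obtain ⟨d, rfl⟩ := hsub hz
  by_cases hd : d = 0
  · exact ⟨0, 1, one_ne_zero, by simp [hd]⟩
  · refine ⟨n, d, hd, ?_⟩
    rw [mul_div_cancel₀]
    exact fun h => hd (rhoBar_injective (by rw [h, map_zero]))

lemma clear_denominators (p : Polynomial (kSub Fq)) : ∃ (d : Polynomial Fq)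
    (P : Polynomial (Polynomial Fq)), d ≠ 0 ∧
      P.map (rhoBar Fq) = Polynomial.C (rhoBar Fq d) * p.map (kSub Fq).subtype := by
  induction p using Polynomial.induction_on' with
  | add p r hp hr =>
    obtain ⟨d, P, hd, hP⟩ := hp
    obtain ⟨e, R, he, hR⟩ := hr
    refine ⟨d * e, Polynomial.C e * P + Polynomial.C d * R, mul_ne_zero hd he, ?_⟩
    simp only [Polynomial.map_add, Polynomial.map_mul, Polynomial.map_C, hP, hR, map_mul]
    ring
  | monomial n a =>
    obtain ⟨x, d, hd, h⟩ := mem_kSub a.1 a.2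
    refine ⟨d, Polynomial.monomial n x, hd, ?_⟩
    rw [Polynomial.map_monomial, Polynomial.map_monomial, Polynomial.C_mul_monomial, ← h]
    rfl

lemma exists_poly_of_isAlgebraic (c : Kinf Fq)
    (hc : IsAlgebraic (kSub Fq) (algebraMap (Kinf Fq) (KinfBar Fq) c)) :
    ∃ P : Polynomial (Polynomial Fq), P ≠ 0 ∧ P.eval₂ (rho Fq) c = 0 := by
  obtain ⟨p, hp, h0⟩ := hc
  obtain ⟨d, P, hd, hP⟩ := clear_denominators p
  have hdn : rhoBar Fq d ≠ 0 := fun h => hd (rhoBar_injective (by rw [h, map_zero]))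
  refine ⟨P, ?_, ?_⟩
  · rintro rfl
    rw [Polynomial.map_zero] at hP
    have := mul_ne_zero (Polynomial.C_ne_zero.2 hdn)
      ((Polynomial.map_ne_zero_iff (kSub Fq).subtype.injective).2 hp)
    exact this hP.symm
  · apply (algebraMap (Kinf Fq) (KinfBar Fq)).injective
    rw [Polynomial.hom_eval₂, map_zero]
    change P.eval₂ (rhoBar Fq) _ = 0
    rw [← Polynomial.eval_map, hP, Polynomial.eval_mul, Polynomial.eval_map]
    rw [Polynomial.aeval_def] at h0
    have : p.eval₂ (kSub Fq).subtype ((algebraMap (Kinf Fq) (KinfBar Fq)) c) = 0 := h0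
    rw [this, mul_zero]

/-- An algebraic element of `k_∞` becomes, after multiplication by a polynomial `a`, an integral
element `b` whose powers below its degree `D` are independent over polynomials in `θ`. -/
lemma exists_integral (c : Kinf Fq) (hc : ∃ P : Polynomial (Polynomial Fq), P ≠ 0 ∧
    P.eval₂ (rho Fq) c = 0) :
    ∃ (D : ℕ) (a : Polynomial Fq) (b : Kinf Fq) (g : ℕ → Polynomial Fq), 0 < D ∧ a ≠ 0 ∧
      b = rho Fq a * c ∧
      b ^ D = ∑ i ∈ Finset.range D, rho Fq (g i) * b ^ i ∧
      ∀ y : ℕ → Polynomial Fq, ∑ i ∈ Finset.range D, rho Fq (y i) * b ^ i = 0 →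
        ∀ i < D, y i = 0 := by
  classical
  have hex : ∃ n, ∃ P : Polynomial (Polynomial Fq), P ≠ 0 ∧ P.eval₂ (rho Fq) c = 0 ∧
      P.natDegree = n := by
    obtain ⟨P, h, h'⟩ := hc
    exact ⟨_, P, h, h', rfl⟩
  obtain ⟨P, hP, hPc, hPn⟩ := Nat.find_spec hex
  have hmin : ∀ R : Polynomial (Polynomial Fq), R.eval₂ (rho Fq) c = 0 →
      R.natDegree < P.natDegree → R = 0 := by
    intro R hR hlt
    by_contra h
    rw [hPn] at hlt
    exact Nat.find_min hex hlt ⟨R, h, hR, rfl⟩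
  have hD : 0 < P.natDegree := by
    rw [pos_iff_ne_zero]
    intro h
    rw [Polynomial.eq_C_of_natDegree_eq_zero h, Polynomial.eval₂_C] at hPc
    have := rho_injective (hPc.trans (map_zero _).symm)
    apply hP
    rw [Polynomial.eq_C_of_natDegree_eq_zero h, this, Polynomial.C_0]
  set a := P.leadingCoeff with ha
  have ha0 : a ≠ 0 := Polynomial.leadingCoeff_ne_zero.2 hP
  refine ⟨P.natDegree, a, rho Fq a * c, fun i => - P.integralNormalization.coeff i, hD, ha0, rfl,
    ?_, ?_⟩
  · have h1 := Polynomial.integralNormalization_eval₂_leadingCoeff_mul (p := P) (by omega)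
      (rho Fq) c
    rw [hPc, mul_zero, ← ha] at h1
    have hm := Polynomial.monic_integralNormalization hP
    have hn := Polynomial.natDegree_integralNormalization (p := P)
    rw [Polynomial.eval₂_eq_sum_range, hn, Finset.sum_range_succ] at h1
    have h2 : P.integralNormalization.coeff P.natDegree = 1 := by
      rw [← hn]; exact hm
    rw [h2, map_one, one_mul, add_comm] at h1
    rw [eq_neg_of_add_eq_zero_left h1, ← Finset.sum_neg_distrib]
    exact Finset.sum_congr rfl fun i _ => by rw [map_neg, neg_mul]
  · intro y hy i hi
    have h1 := hmin (∑ i ∈ Finset.range P.natDegree, Polynomial.monomial i (y i * a ^ i)) (by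
      rw [Polynomial.eval₂_finsetSum, ← hy]
      refine Finset.sum_congr rfl fun j _ => ?_
      rw [Polynomial.eval₂_monomial, map_mul, map_pow, mul_pow]
      ring) (by
      have : (∑ i ∈ Finset.range P.natDegree, Polynomial.monomial i (y i * a ^ i)).degree
          < (P.natDegree : WithBot ℕ) := by
        refine (Polynomial.degree_sum_le _ _).trans_lt ?_
        rw [Finset.sup_lt_iff (WithBot.bot_lt_coe _)]
        intro j hj
        refine (Polynomial.degree_monomial_le _ _).trans_lt ?_
        exact_mod_cast Finset.mem_range.1 hj
      by_cases h0 : (∑ i ∈ Finset.range P.natDegree, Polynomial.monomial i (y i * a ^ i)) = 0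
      · rw [h0]; simpa using hD
      · exact (Polynomial.natDegree_lt_iff_degree_lt h0).2 this)
    have h2 := congrArg (fun R => Polynomial.coeff R i) h1
    simp only [Polynomial.finsetSum_coeff, Polynomial.coeff_monomial, Polynomial.coeff_zero] at h2
    rw [Finset.sum_ite_eq' , if_pos (Finset.mem_range.2 hi)] at h2
    exact (mul_eq_zero.1 h2).resolve_right (pow_ne_zero _ ha0)

/-- If `ζ(1,1)` and `ζ(2)` are linearly dependent over `k̄`, their ratio is algebraic over `k`. -/
lemma isAlgebraic_of_not_linearIndependent
    (h : ¬ LinearIndependent (kbar Fq)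
      ![algebraMap (Kinf Fq) (KinfBar Fq) (mzv Fq 2 ![1, 1]),
        algebraMap (Kinf Fq) (KinfBar Fq) (mzv Fq 1 ![2])]) :
    IsAlgebraic (kSub Fq)
      (algebraMap (Kinf Fq) (KinfBar Fq) (mzv Fq 2 ![1, 1] / mzv Fq 1 ![2])) := by
  rw [LinearIndependent.pair_iff] at h
  push Not at h
  obtain ⟨s, t, hst, hne⟩ := h
  have hz : algebraMap (Kinf Fq) (KinfBar Fq) (mzv Fq 1 ![2]) ≠ 0 :=
    (map_ne_zero _).2 mzv2_ne_zero
  have hst' : s.1 * algebraMap (Kinf Fq) (KinfBar Fq) (mzv Fq 2 ![1, 1]) +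
      t.1 * algebraMap (Kinf Fq) (KinfBar Fq) (mzv Fq 1 ![2]) = 0 := hst
  have hs : s.1 ≠ 0 := by
    intro hs
    rw [hs, zero_mul, zero_add] at hst'
    exact hne (Subtype.ext hs) (Subtype.ext ((mul_eq_zero.1 hst').resolve_right hz))
  have hmem : algebraMap (Kinf Fq) (KinfBar Fq) (mzv Fq 2 ![1, 1] / mzv Fq 1 ![2]) =
      ((-(t / s) : kbar Fq) : KinfBar Fq) := by
    have h2 : ((-(t / s) : kbar Fq) : KinfBar Fq) = -(t.1 / s.1) := rfl
    rw [h2, map_div₀, div_eq_iff hz]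
    field_simp
    linear_combination hst'
  rw [hmem]
  exact (mem_algebraicClosure_iff).1 (-(t / s) : kbar Fq).2

lemma rank_span_eq_two
    (h : LinearIndependent (kbar Fq)
      ![algebraMap (Kinf Fq) (KinfBar Fq) (mzv Fq 2 ![1, 1]),
        algebraMap (Kinf Fq) (KinfBar Fq) (mzv Fq 1 ![2])]) :
    Module.rank (kbar Fq)
      (Submodule.span (kbar Fq)
        {algebraMap (Kinf Fq) (KinfBar Fq) (mzv Fq 2 ![1, 1]),
          algebraMap (Kinf Fq) (KinfBar Fq) (mzv Fq 1 ![2])}) = 2 := by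
  have h1 := rank_span h
  rw [Cardinal.mk_range_eq _ h.injective, Matrix.range_cons, Matrix.range_cons, Matrix.range_empty,
    Set.union_empty, Set.singleton_union] at h1
  exact h1.trans (by simp)

/-! ### Evaluation of power series over `𝔽_q[[1/θ]]` -/

section Eval

variable {K : Type} [Field K]

open PowerSeries

lemma eq_zero_of_X_pow_dvd {x : K⟦X⟧} (h : ∀ n : ℕ, X ^ n ∣ x) : x = 0 := by
  ext n
  rw [map_zero]
  exact X_pow_dvd_iff.1 (h (n + 1)) n (by omega)

/-- Division of a power series over `K[[s]]` by `u - α`, where `s ∣ α`. -/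
lemma exists_div (α : K⟦X⟧) (hα : X ∣ α) (F : K⟦X⟧⟦X⟧) :
    ∃ (c : K⟦X⟧) (G : K⟦X⟧⟦X⟧), F = C c + (X - C α) * G := by
  have hlim (k : ℕ) : ∃ H : K⟦X⟧, ∀ N : ℕ,
      X ^ N ∣ H - ∑ i ∈ Finset.range N, coeff (k + i) F * α ^ i := by
    refine ⟨PowerSeries.mk fun n => coeff n (∑ i ∈ Finset.range (n + 1), coeff (k + i) F * α ^ i),
      fun N => X_pow_dvd_iff.2 fun n hn => ?_⟩
    rw [map_sub, coeff_mk, sub_eq_zero]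
    obtain ⟨r, rfl⟩ : ∃ r, N = n + 1 + r := ⟨N - (n + 1), by omega⟩
    rw [Finset.sum_range_add _ (n + 1) r, map_add, left_eq_add, map_sum]
    refine Finset.sum_eq_zero fun i _ => ?_
    refine X_pow_dvd_iff.1 ?_ n (Nat.lt_succ_self n)
    exact Dvd.dvd.mul_left ((pow_dvd_pow X (by omega)).trans (pow_dvd_pow_of_dvd hα _)) _
  choose H hH using hlim
  have hrec (k : ℕ) : H k = coeff k F + α * H (k + 1) := by
    rw [← sub_eq_zero]
    refine eq_zero_of_X_pow_dvd fun N => ?_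
    have h1 := (pow_dvd_pow X (Nat.le_succ N)).trans (hH k (N + 1))
    have h2 := (hH (k + 1) N).mul_left α
    have h3 := dvd_sub h1 h2
    convert h3 using 1
    rw [Finset.sum_range_succ', mul_sub, Finset.mul_sum]
    have : ∑ i ∈ Finset.range N, coeff (k + (i + 1)) F * α ^ (i + 1) =
        ∑ i ∈ Finset.range N, α * (coeff (k + 1 + i) F * α ^ i) := by
      refine Finset.sum_congr rfl fun i _ => ?_
      rw [show k + (i + 1) = k + 1 + i by ring]; ring
    rw [this]
    simp
    ring
  refine ⟨H 0, PowerSeries.mk fun k => H (k + 1), ?_⟩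
  ext1 k
  cases k with
  | zero => simp [sub_mul, hrec 0]
  | succ k => simp [sub_mul, coeff_succ_X_mul, hrec (k + 1)]

lemma eq_zero_of_C_eq (α : K⟦X⟧) (hα : X ∣ α) (c : K⟦X⟧) (G : K⟦X⟧⟦X⟧)
    (h : C c = (X - C α) * G) : c = 0 := by
  have h0 := congrArg (coeff 0) h
  have hs (k : ℕ) : coeff k G = α * coeff (k + 1) G := by
    have := congrArg (coeff (k + 1)) h
    simp [sub_mul, coeff_succ_X_mul] at this
    linear_combination -this
  have hp (n : ℕ) : coeff 0 G = α ^ n * coeff n G := by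
    induction n with
    | zero => simp
    | succ n ih => rw [ih, hs n]; ring
  have hz : coeff 0 G = 0 := eq_zero_of_X_pow_dvd fun n => by
    rw [hp n]
    exact (pow_dvd_pow_of_dvd hα n).mul_right _
  rw [coeff_zero_eq_constantCoeff_apply] at hz
  simpa [sub_mul, hz] using h0

/-- Evaluation of a power series over `K[[s]]` at `u = α`, where `s ∣ α`: the remainder of the
division by `u - α`. -/
def ev (α : K⟦X⟧) (hα : X ∣ α) (F : K⟦X⟧⟦X⟧) : K⟦X⟧ := (exists_div α hα F).choose

lemma ev_spec (α : K⟦X⟧) (hα : X ∣ α) (F : K⟦X⟧⟦X⟧) :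
    ∃ G : K⟦X⟧⟦X⟧, F = C (ev α hα F) + (X - C α) * G := (exists_div α hα F).choose_spec

lemma ev_unique (α : K⟦X⟧) (hα : X ∣ α) {F G : K⟦X⟧⟦X⟧} {c : K⟦X⟧}
    (h : F = C c + (X - C α) * G) : ev α hα F = c := by
  obtain ⟨G', h'⟩ := ev_spec α hα F
  rw [← sub_eq_zero]
  refine eq_zero_of_C_eq α hα _ (G - G') ?_
  rw [map_sub]
  linear_combination (-1) * h' + h

/-- `ev` as a ring homomorphism. -/
def evHom (α : K⟦X⟧) (hα : X ∣ α) : K⟦X⟧⟦X⟧ →+* K⟦X⟧ where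
  toFun := ev α hα
  map_one' := ev_unique α hα (G := 0) (by simp)
  map_zero' := ev_unique α hα (G := 0) (by simp)
  map_add' F F' := by
    obtain ⟨G, h⟩ := ev_spec α hα F
    obtain ⟨G', h'⟩ := ev_spec α hα F'
    refine ev_unique α hα (G := G + G') ?_
    rw [map_add]
    linear_combination h + h'
  map_mul' F F' := by
    obtain ⟨G, h⟩ := ev_spec α hα F
    obtain ⟨G', h'⟩ := ev_spec α hα F'
    refine ev_unique α hα (G := G * F' + C (ev α hα F) * G') ?_
    rw [map_mul]
    linear_combination F' * h + C (ev α hα F) * h'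

lemma evHom_C (α : K⟦X⟧) (hα : X ∣ α) (c : K⟦X⟧) : evHom α hα (C c) = c :=
  ev_unique α hα (G := 0) (by simp)

lemma evHom_X (α : K⟦X⟧) (hα : X ∣ α) : evHom α hα X = α :=
  ev_unique α hα (G := 1) (by ring)

lemma dvd_of_evHom_eq_zero (α : K⟦X⟧) (hα : X ∣ α) (F : K⟦X⟧⟦X⟧) (h : evHom α hα F = 0) :
    X - C α ∣ F := by
  obtain ⟨G, h'⟩ := ev_spec α hα F
  have h2 : ev α hα F = 0 := h
  rw [h2, map_zero, zero_add] at h'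
  exact ⟨G, h'⟩

lemma prod_dvd_of_evHom_eq_zero (α : ℕ → K⟦X⟧) (n : ℕ) (hα : ∀ j < n, X ∣ α j)
    (hinj : ∀ i < n, ∀ j < n, α i = α j → i = j) (F : K⟦X⟧⟦X⟧)
    (h : ∀ j (hj : j < n), evHom (α j) (hα j hj) F = 0) :
    ∏ j ∈ Finset.range n, (X - C (α j)) ∣ F := by
  have key : ∀ m ≤ n, ∏ j ∈ Finset.range m, (X - C (α j)) ∣ F := by
    intro m
    induction m with
    | zero => intro _; simp
    | succ m ih =>
      intro hm
      obtain ⟨G, hG⟩ := ih (by omega)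
      have h1 := h m (by omega)
      rw [hG, map_mul, map_prod] at h1
      have h2 : ∏ j ∈ Finset.range m, evHom (α m) (hα m (by omega)) (X - C (α j)) ≠ 0 := by
        refine Finset.prod_ne_zero_iff.2 fun j hj => ?_
        rw [map_sub, evHom_X, evHom_C, sub_ne_zero]
        intro h3
        have := hinj m (by omega) j (by have := Finset.mem_range.1 hj; omega) h3
        have := Finset.mem_range.1 hj
        omega
      rw [hG, Finset.prod_range_succ]
      exact mul_dvd_mul_left _
        (dvd_of_evHom_eq_zero _ _ _ ((mul_eq_zero.1 h1).resolve_left h2))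
  exact key n le_rfl

end Eval

/-! ### The functions `φ₁`, `φ₂`, `φ₁₁` -/

section Phi

open PowerSeries

variable (Fq) in
/-- The `q`-power map as a ring endomorphism. -/
def fr (R : Type) [CommRing R] [Algebra Fq R] : R →+* R :=
  (FiniteField.frobeniusAlgHom Fq R).toRingHom

lemma fr_apply {R : Type} [CommRing R] [Algebra Fq R] (x : R) : fr Fq R x = x ^ 𝔮 := rfl

variable (Fq) in
/-- The twist `f(u) ↦ f^τ(s^{q-1} u)`, where `τ` raises coefficients to the power `q`. Here and
below `s` is the variable of the inner power series ring, standing for `1/θ`, and `u` is the outer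
variable. -/
def tw : Fq⟦X⟧⟦X⟧ →+* Fq⟦X⟧⟦X⟧ := (rescale (X ^ (𝔮 - 1))).comp (PowerSeries.map (fr Fq _))

lemma coeff_tw (f : Fq⟦X⟧⟦X⟧) (k : ℕ) :
    coeff k (tw Fq f) = (X ^ (𝔮 - 1)) ^ k * coeff k f ^ 𝔮 := by
  simp [tw, coeff_rescale, fr_apply]

lemma tw_C (x : Fq⟦X⟧) : tw Fq (C x) = C (x ^ 𝔮) := by
  ext1 k
  rw [coeff_tw, coeff_C, coeff_C]
  split_ifs with h
  · simp [h]
  · rw [zero_pow card_pos.ne', mul_zero]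

lemma tw_X : tw Fq X = C (X ^ (𝔮 - 1)) * X := by
  ext1 k
  rw [coeff_tw, coeff_X, coeff_C_mul, coeff_X]
  split_ifs with h
  · simp [h]
  · rw [zero_pow card_pos.ne', mul_zero, mul_zero]

lemma C_X_pow_dvd_iff (F : Fq⟦X⟧⟦X⟧) (n : ℕ) :
    C (X ^ n) ∣ F ↔ ∀ k, ∀ m < n, coeff m (coeff k F) = 0 := by
  constructor
  · rintro ⟨G, rfl⟩ k m hm
    rw [coeff_C_mul]
    exact X_pow_dvd_iff.1 (Dvd.intro _ rfl) m hm
  · intro h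
    have h1 (k : ℕ) : ∃ G : Fq⟦X⟧, coeff k F = X ^ n * G := X_pow_dvd_iff.2 (h k)
    choose G hG using h1
    refine ⟨PowerSeries.mk G, ?_⟩
    ext1 k
    rw [coeff_C_mul, coeff_mk, hG]

/-- The contraction `f ↦ g + ω · tw f` has a fixed point when `s ∣ ω`. -/
lemma exists_fixed (g ω : Fq⟦X⟧⟦X⟧) (hω : C X ∣ ω) : ∃ f, f = g + ω * tw Fq f := by
  let S : ℕ → Fq⟦X⟧⟦X⟧ := fun n => (fun f => g + ω * tw Fq f)^[n] 0
  have hS (n : ℕ) : S (n + 1) = g + ω * tw Fq (S n) := Function.iterate_succ_apply' _ _ _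
  have htw (n : ℕ) (f : Fq⟦X⟧⟦X⟧) (h : C (X ^ n) ∣ f) : C (X ^ (n + 1)) ∣ ω * tw Fq f := by
    obtain ⟨f', rfl⟩ := h
    rw [map_mul, tw_C, pow_succ', map_mul]
    refine mul_dvd_mul hω (Dvd.dvd.mul_right ?_ _)
    rw [← pow_mul]
    exact map_dvd C (pow_dvd_pow X (Nat.le_mul_of_pos_right n card_pos))
  have hd (n : ℕ) : C (X ^ n) ∣ S (n + 1) - S n := by
    induction n with
    | zero => simp
    | succ n ih =>
      rw [hS (n + 1), hS n, add_sub_add_left_eq_sub, ← mul_sub, ← map_sub]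
      have := htw n _ ih
      rwa [hS n] at this
  have hd' (n r : ℕ) : C (X ^ n) ∣ S (n + r) - S n := by
    induction r with
    | zero => simp
    | succ r ih =>
      have h1 := (map_dvd (C (R := Fq⟦X⟧)) (pow_dvd_pow (X : Fq⟦X⟧) (Nat.le_add_right n r))).trans
        (hd (n + r))
      have := dvd_add h1 ih
      rwa [sub_add_sub_cancel] at this
  let f : Fq⟦X⟧⟦X⟧ := PowerSeries.mk fun k => PowerSeries.mk fun n => coeff n (coeff k (S (n + 1)))
  have hf (n : ℕ) : C (X ^ n) ∣ f - S n := by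
    rw [C_X_pow_dvd_iff]
    intro k m hm
    have h1 := (C_X_pow_dvd_iff _ _).1 (hd' (m + 1) (n - (m + 1))) k m (Nat.lt_succ_self m)
    rw [show m + 1 + (n - (m + 1)) = n by omega, map_sub, map_sub, sub_eq_zero] at h1
    rw [map_sub, map_sub, sub_eq_zero, h1]
    simp [f]
  refine ⟨f, ?_⟩
  rw [← sub_eq_zero]
  have hall (n : ℕ) : C (X ^ n) ∣ f - (g + ω * tw Fq f) := by
    have h1 := (map_dvd (C (R := Fq⟦X⟧)) (pow_dvd_pow (X : Fq⟦X⟧) (Nat.le_succ n))).trans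
      (hf (n + 1))
    have h2 := (map_dvd (C (R := Fq⟦X⟧)) (pow_dvd_pow (X : Fq⟦X⟧) (Nat.le_succ n))).trans
      (htw n _ (hf n))
    have h3 := dvd_sub h1 h2
    convert h3 using 1
    rw [hS n, map_sub]
    ring
  ext k m
  exact (C_X_pow_dvd_iff _ _).1 (hall (m + 1)) k m (Nat.lt_succ_self m)

variable (Fq) in
/-- The factor `1 - s^{q-1} u`. -/
def fac : Fq⟦X⟧⟦X⟧ := 1 - C (X ^ (𝔮 - 1)) * X

lemma exists_fac_inv : ∃ w, fac Fq * w = 1 := by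
  have : IsUnit (fac Fq) := by
    rw [PowerSeries.isUnit_iff_constantCoeff]
    simp [fac]
  exact this.exists_right_inv

lemma exists_phi (g : Fq⟦X⟧⟦X⟧) (σ : ℕ) (hσ : 0 < σ) :
    ∃ f, fac Fq ^ σ * (f - g) = (C (-X ^ 𝔮)) ^ σ * tw Fq f := by
  obtain ⟨w, hw⟩ := exists_fac_inv (Fq := Fq)
  obtain ⟨f, hf⟩ := exists_fixed g ((C (-X ^ 𝔮)) ^ σ * w ^ σ) (by
    refine Dvd.dvd.mul_right (dvd_pow (map_dvd C ?_) hσ.ne') _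
    exact (dvd_neg.2 (dvd_pow_self X card_pos.ne')))
  refine ⟨f, ?_⟩
  have hw' : fac Fq ^ σ * w ^ σ = 1 := by rw [← mul_pow, hw, one_pow]
  linear_combination fac Fq ^ σ * hf + (C (-X ^ 𝔮)) ^ σ * tw Fq f * hw'

variable (Fq) in
/-- The deformation of `ζ(1)`: a solution of `(1 - s^{q-1} u) (φ - 1) = -s^q tw φ`. -/
def phi1 : Fq⟦X⟧⟦X⟧ := (exists_phi 1 1 one_pos).choose

lemma phi1_spec : fac Fq * (phi1 Fq - 1) = C (-X ^ 𝔮) * tw Fq (phi1 Fq) := by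
  have : fac Fq ^ 1 * (phi1 Fq - 1) = C (-X ^ 𝔮) ^ 1 * tw Fq (phi1 Fq) :=
    (exists_phi (Fq := Fq) 1 1 one_pos).choose_spec
  rwa [pow_one, pow_one] at this

variable (Fq) in
/-- The deformation of `ζ(2)`: a solution of `(1 - s^{q-1} u)² (φ - 1) = s^{2q} tw φ`. -/
def phi2 : Fq⟦X⟧⟦X⟧ := (exists_phi 1 2 two_pos).choose

lemma phi2_spec : fac Fq ^ 2 * (phi2 Fq - 1) = C (-X ^ 𝔮) ^ 2 * tw Fq (phi2 Fq) :=
  (exists_phi (Fq := Fq) 1 2 two_pos).choose_spec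

variable (Fq) in
/-- The deformation of `ζ(1,1)`: a solution of
`(1 - s^{q-1} u)² (φ - (φ₁ - 1)) = s^{2q} tw φ`. -/
def phi11 : Fq⟦X⟧⟦X⟧ := (exists_phi (phi1 Fq - 1) 2 two_pos).choose

lemma phi11_spec :
    fac Fq ^ 2 * (phi11 Fq - (phi1 Fq - 1)) = C (-X ^ 𝔮) ^ 2 * tw Fq (phi11 Fq) :=
  (exists_phi (Fq := Fq) (phi1 Fq - 1) 2 two_pos).choose_spec

end Phi

/-! ### The functions `f₁`, `f₂`, `f₁₁` of `t` and their linear independence -/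

section Indep

open PowerSeries

variable (Fq) in
/-- The inclusion of `𝔽_q[[1/θ]]` into `k_∞`. -/
def iota : Fq⟦X⟧ →+* Kinf Fq := HahnSeries.ofPowerSeries ℤ Fq

lemma iota_injective : Function.Injective (iota Fq) := HahnSeries.ofPowerSeries_injective

lemma iota_X_mul_theta : iota Fq X * theta Fq = 1 := by
  rw [iota, HahnSeries.ofPowerSeries_X, theta, HahnSeries.single_mul_single]
  simp

lemma iota_X : iota Fq X = (theta Fq)⁻¹ := eq_inv_of_mul_eq_one_left iota_X_mul_theta

lemma dle_iota (a : Fq⟦X⟧) : DLe (iota Fq a) 0 :=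
  (LaurentSeries.val_le_one_iff_eq_coe Fq _).2 ⟨a, rfl⟩

lemma exists_iota {x : Kinf Fq} (hx : DLe x 0) : ∃ a, iota Fq a = x :=
  (LaurentSeries.val_le_one_iff_eq_coe Fq _).1 hx

lemma dle_theta_inv_pow (n : ℕ) : DLe ((theta Fq)⁻¹ ^ n) (-n) := by
  rw [DLe, Valuation.map_pow, map_inv₀, v_theta, inv_pow, ← WithZero.exp_nsmul, WithZero.exp_neg]
  simp

variable (Fq) in
/-- The substitution `u = s ^ N t`. -/
def kap (N : ℕ) : Fq⟦X⟧⟦X⟧ →+* (Kinf Fq)⟦X⟧ :=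
  (rescale (iota Fq (X ^ N))).comp (PowerSeries.map (iota Fq))

lemma coeff_kap (N : ℕ) (φ : Fq⟦X⟧⟦X⟧) (k : ℕ) :
    coeff k (kap Fq N φ) = iota Fq ((X ^ N) ^ k * coeff k φ) := by
  simp [kap, coeff_rescale]

lemma kap_C (N : ℕ) (x : Fq⟦X⟧) : kap Fq N (C x) = C (iota Fq x) := by
  ext1 k
  rw [coeff_kap, coeff_C, coeff_C]
  split_ifs with h
  · rw [h, pow_zero, one_mul]
  · rw [mul_zero, map_zero]

lemma kap_X (N : ℕ) : kap Fq N X = C (iota Fq (X ^ N)) * X := by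
  simp [kap, rescale_X]

lemma dle_coeff_kap (N : ℕ) (φ : Fq⟦X⟧⟦X⟧) (k : ℕ) : DLe (coeff k (kap Fq N φ)) 0 := by
  rw [coeff_kap]; exact dle_iota _

variable (Fq) in
/-- The Frobenius twist of the coefficients. -/
def tau : (Kinf Fq)⟦X⟧ →+* (Kinf Fq)⟦X⟧ := PowerSeries.map (fr Fq _)

lemma coeff_tau (f : (Kinf Fq)⟦X⟧) (k : ℕ) : coeff k (tau Fq f) = coeff k f ^ 𝔮 := by
  simp [tau, fr_apply]

lemma tau_kap (φ : Fq⟦X⟧⟦X⟧) : tau Fq (kap Fq 1 φ) = kap Fq 1 (tw Fq φ) := by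
  ext1 k
  rw [coeff_tau, coeff_kap, coeff_kap, coeff_tw, ← map_pow]
  congr 1
  obtain ⟨r, hr⟩ : ∃ r, 𝔮 = r + 1 := ⟨𝔮 - 1, by have := card_pos (Fq := Fq); omega⟩
  rw [hr, Nat.add_sub_cancel, mul_pow]
  ring

variable (Fq) in
/-- The polynomial `t - θ ^ q`. -/
def WW : Polynomial (Kinf Fq) := Polynomial.X - Polynomial.C (theta Fq ^ 𝔮)

variable (Fq) in
/-- Polynomials in `t` as power series in `t`. -/
def pc : Polynomial (Kinf Fq) →+* (Kinf Fq)⟦X⟧ := Polynomial.coeToPowerSeries.ringHom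

lemma pc_injective : Function.Injective (pc Fq) := Polynomial.coe_injective _

lemma coeff_pc (p : Polynomial (Kinf Fq)) (k : ℕ) : coeff k (pc Fq p) = p.coeff k :=
  Polynomial.coeff_coe p k

variable (Fq) in
/-- The Frobenius twist on polynomials in `t`. -/
def ptau : Polynomial (Kinf Fq) →+* Polynomial (Kinf Fq) := Polynomial.mapRingHom (fr Fq _)

lemma coeff_ptau (p : Polynomial (Kinf Fq)) (k : ℕ) : (ptau Fq p).coeff k = p.coeff k ^ 𝔮 := by
  simp [ptau, fr_apply]

lemma tau_pc (p : Polynomial (Kinf Fq)) : tau Fq (pc Fq p) = pc Fq (ptau Fq p) := by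
  ext1 k
  rw [coeff_tau, coeff_pc, coeff_pc, coeff_ptau]

lemma kap_fac : kap Fq 1 (fac Fq) = kap Fq 1 (C (-X ^ 𝔮)) * pc Fq (WW Fq) := by
  have h1 : pc Fq (WW Fq) = X - C (theta Fq ^ 𝔮) := by
    simp [pc, WW]
  have h2 : iota Fq X ^ 𝔮 * theta Fq ^ 𝔮 = 1 := by rw [← mul_pow, iota_X_mul_theta, one_pow]
  have h3 : iota Fq X ^ (𝔮 - 1) * iota Fq X = iota Fq X ^ 𝔮 := by
    rw [← pow_succ, Nat.sub_add_cancel card_pos]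
  have h4 : (C (iota Fq X ^ 𝔮 * theta Fq ^ 𝔮) : (Kinf Fq)⟦X⟧) = 1 := by rw [h2, map_one]
  have h5 : (C (iota Fq X ^ (𝔮 - 1) * iota Fq X) : (Kinf Fq)⟦X⟧) = C (iota Fq X ^ 𝔮) := by rw [h3]
  rw [h1, fac, map_sub, map_one, map_mul, kap_C, kap_X, kap_C, map_neg, map_neg, pow_one,
    map_pow (iota Fq), map_pow (iota Fq)]
  rw [map_mul C] at h4 h5
  linear_combination -h4 - X * h5

lemma tau_kap_of (σ : ℕ) (φ g : Fq⟦X⟧⟦X⟧)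
    (h : fac Fq ^ σ * (φ - g) = C (-X ^ 𝔮) ^ σ * tw Fq φ) :
    tau Fq (kap Fq 1 φ) = pc Fq (WW Fq) ^ σ * (kap Fq 1 φ - kap Fq 1 g) := by
  have h1 := congrArg (kap Fq 1) h
  rw [map_mul, map_mul, map_pow, map_pow, kap_fac, map_sub, mul_pow, mul_assoc, ← tau_kap] at h1
  have h2 : kap Fq 1 (C (-X ^ 𝔮)) ^ σ ≠ 0 := by
    apply pow_ne_zero
    rw [kap_C]
    intro h0
    have := (map_eq_zero_iff _ (C_injective)).1 h0
    rw [map_eq_zero_iff _ iota_injective, neg_eq_zero] at this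
    exact pow_ne_zero _ X_ne_zero this
  exact (mul_left_cancel₀ h2 h1).symm

variable (Fq) in
/-- `f₁ = φ₁(s t)`. -/
def f1 : (Kinf Fq)⟦X⟧ := kap Fq 1 (phi1 Fq)
variable (Fq) in
/-- `f₂ = φ₂(s t)`. -/
def f2 : (Kinf Fq)⟦X⟧ := kap Fq 1 (phi2 Fq)
variable (Fq) in
/-- `f₁₁ = φ₁₁(s t)`. -/
def f11 : (Kinf Fq)⟦X⟧ := kap Fq 1 (phi11 Fq)

lemma tau_f1 : tau Fq (f1 Fq) = pc Fq (WW Fq) ^ 1 * (f1 Fq - 1) := by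
  have := tau_kap_of 1 (phi1 Fq) 1 (by rw [pow_one, pow_one]; exact phi1_spec)
  rwa [map_one] at this

lemma tau_f2 : tau Fq (f2 Fq) = pc Fq (WW Fq) ^ 2 * (f2 Fq - 1) := by
  have := tau_kap_of 2 (phi2 Fq) 1 phi2_spec
  rwa [map_one] at this

lemma tau_f11 : tau Fq (f11 Fq) = pc Fq (WW Fq) ^ 2 * (f11 Fq - (f1 Fq - 1)) := by
  have := tau_kap_of 2 (phi11 Fq) (phi1 Fq - 1) phi11_spec
  rwa [map_sub, map_one] at this

lemma dle_sub_one (σ : ℕ) (hσ : 0 < σ) (φ : Fq⟦X⟧⟦X⟧)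
    (h : fac Fq ^ σ * (φ - 1) = C (-X ^ 𝔮) ^ σ * tw Fq φ) (k : ℕ) :
    DLe (coeff k (kap Fq 1 φ - 1)) (-1) := by
  obtain ⟨w, hw⟩ := exists_fac_inv (Fq := Fq)
  have hw' : fac Fq ^ σ * w ^ σ = 1 := by rw [← mul_pow, hw, one_pow]
  have h1 : C (X ^ 1) ∣ φ - 1 := by
    have h2 : φ - 1 = C (-X ^ 𝔮) ^ σ * (tw Fq φ * w ^ σ) := by
      linear_combination w ^ σ * h - (φ - 1) * hw'
    rw [h2, pow_one]
    refine Dvd.dvd.mul_right (dvd_pow (map_dvd C ?_) hσ.ne') _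
    exact (dvd_neg.2 (dvd_pow_self X card_pos.ne'))
  obtain ⟨ψ, hψ⟩ := h1
  have h3 : kap Fq 1 φ - 1 = C (iota Fq X) * kap Fq 1 ψ := by
    rw [← kap_C, ← map_mul, ← pow_one X, ← hψ, map_sub, map_one]
  rw [h3, coeff_C_mul]
  have h4 := (dle_theta_inv_pow (Fq := Fq) 1).mul (dle_coeff_kap 1 ψ k)
  rw [pow_one, ← iota_X] at h4
  exact h4.mono (by norm_num)

lemma WW_monic : (WW Fq).Monic := Polynomial.monic_X_sub_C _

lemma WW_natDegree : (WW Fq).natDegree = 1 := Polynomial.natDegree_X_sub_C _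

lemma fr_injective : Function.Injective (fr Fq (Kinf Fq)) := (fr Fq (Kinf Fq)).injective

lemma ptau_injective : Function.Injective (ptau Fq) := Polynomial.map_injective _ fr_injective

lemma natDegree_ptau (p : Polynomial (Kinf Fq)) : (ptau Fq p).natDegree = p.natDegree :=
  Polynomial.natDegree_map_eq_of_injective fr_injective p

/-- A rational solution `n / d` of `v^τ = W^σ (v - 1)` can be normalized so that the denominator
is monic and fixed by the twist. -/
lemma normalize_solution (σ : ℕ) (d n : Polynomial (Kinf Fq)) (hd : d ≠ 0)
    (h : d * ptau Fq n = WW Fq ^ σ * ptau Fq d * (n - d)) :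
    ∃ d' n' : Polynomial (Kinf Fq), d'.Monic ∧ ptau Fq d' = d' ∧
      ptau Fq n' = WW Fq ^ σ * (n' - d') ∧ n' * d = n * d' := by
  classical
  obtain ⟨g, d₁, n₁, hdg, hng, hcop⟩ : ∃ g d₁ n₁, d = g * d₁ ∧ n = g * n₁ ∧ IsCoprime d₁ n₁ := by
    have hg : EuclideanDomain.gcd d n ≠ 0 := fun h0 => hd (EuclideanDomain.gcd_eq_zero_iff.1 h0).1
    obtain ⟨d₁, h1⟩ := EuclideanDomain.gcd_dvd_left d n
    obtain ⟨n₁, h2⟩ := EuclideanDomain.gcd_dvd_right d n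
    refine ⟨EuclideanDomain.gcd d n, d₁, n₁, h1, h2, ?_⟩
    have h3 := EuclideanDomain.gcd_eq_gcd_ab d n
    refine ⟨EuclideanDomain.gcdA d n, EuclideanDomain.gcdB d n, mul_left_cancel₀ hg ?_⟩
    linear_combination EuclideanDomain.gcdA d n * (-h1) + EuclideanDomain.gcdB d n * (-h2) - h3
  have hg0 : g ≠ 0 := fun h0 => hd (by rw [hdg, h0, zero_mul])
  have hd₁ : d₁ ≠ 0 := fun h0 => hd (by rw [hdg, h0, mul_zero])
  set c := d₁.leadingCoeff with hc
  have hc0 : c ≠ 0 := Polynomial.leadingCoeff_ne_zero.2 hd₁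
  set d' := d₁ * Polynomial.C c⁻¹ with hd'
  set n' := n₁ * Polynomial.C c⁻¹ with hn'
  have hCc : Polynomial.C c * Polynomial.C c⁻¹ = 1 := by
    rw [← map_mul, mul_inv_cancel₀ hc0, map_one]
  have hmonic : d'.Monic := Polynomial.monic_mul_leadingCoeff_inv hd₁
  have hgd : g * Polynomial.C c * d' = d := by
    rw [hdg, hd']; linear_combination g * d₁ * hCc
  have hgn : g * Polynomial.C c * n' = n := by
    rw [hng, hn']; linear_combination g * n₁ * hCc
  have hcop' : IsCoprime d' n' := by
    have hu : IsUnit (Polynomial.C c⁻¹) := IsUnit.of_mul_eq_one_right _ hCc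
    rw [hd', hn', isCoprime_mul_unit_right_left hu, isCoprime_mul_unit_right_right hu]
    exact hcop
  have hG0 : g * Polynomial.C c ≠ 0 := mul_ne_zero hg0 (Polynomial.C_ne_zero.2 hc0)
  have heq : d' * ptau Fq n' = WW Fq ^ σ * ptau Fq d' * (n' - d') := by
    have e1 : ptau Fq d = ptau Fq (g * Polynomial.C c) * ptau Fq d' := by rw [← hgd, map_mul]
    have e2 : ptau Fq n = ptau Fq (g * Polynomial.C c) * ptau Fq n' := by rw [← hgn, map_mul]
    rw [e1, e2] at h
    have hG1 : ptau Fq (g * Polynomial.C c) ≠ 0 := (map_ne_zero_iff _ ptau_injective).2 hG0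
    refine mul_left_cancel₀ (mul_ne_zero hG0 hG1) ?_
    generalize ptau Fq n' = a1 at *
    generalize ptau Fq d' = a2 at *
    generalize ptau Fq (g * Polynomial.C c) = a3 at *
    clear_value d' n'
    rw [← hgd, ← hgn] at h
    linear_combination h
  have hdvd : ptau Fq d' ∣ d' := by
    refine (hcop'.map (ptau Fq)).dvd_of_dvd_mul_right ?_
    rw [heq]
    exact (Dvd.intro_left _ rfl : ptau Fq d' ∣ _).mul_right _
  have hfix : ptau Fq d' = d' := by
    refine (Polynomial.eq_of_monic_of_dvd_of_natDegree_le (hmonic.map _) hmonic hdvd ?_).symm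
    exact (natDegree_ptau d').ge
  refine ⟨d', n', hmonic, hfix, ?_, ?_⟩
  · rw [hfix] at heq
    refine mul_left_cancel₀ hmonic.ne_zero ?_
    linear_combination heq
  · rw [← hgd, ← hgn]; ring

lemma dle_of_pow_eq {x : Kinf Fq} (h : x ^ 𝔮 = x) : DLe x 0 := by
  rw [DLe, WithZero.exp_zero]
  by_contra! h1
  have h2 := congrArg (Valued.v (R := Kinf Fq)) h
  rw [Valuation.map_pow] at h2
  have h3 := pow_lt_pow_right₀ h1 (Fintype.one_lt_card (α := Fq))
  rw [h2, pow_one] at h3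
  exact lt_irrefl _ h3

lemma dle_coeff_of_fixed {d : Polynomial (Kinf Fq)} (h : ptau Fq d = d) (k : ℕ) :
    DLe (d.coeff k) 0 := by
  apply dle_of_pow_eq
  rw [← coeff_ptau, h]

lemma dle_coeff_mul {f g : (Kinf Fq)⟦X⟧} {D E : ℤ} (hf : ∀ k, DLe (coeff k f) D)
    (hg : ∀ k, DLe (coeff k g) E) (k : ℕ) : DLe (coeff k (f * g)) (D + E) := by
  rw [coeff_mul]
  exact dle_sum _ _ fun x _ => (hf _).mul (hg _)

/-- A solution of `f^τ = W^σ (f - 1)` with `f ≡ 1` modulo `s` is not rational. -/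
lemma not_rational (σ : ℕ) (hσ : 0 < σ) (f : (Kinf Fq)⟦X⟧)
    (hf : tau Fq f = pc Fq (WW Fq) ^ σ * (f - 1)) (hf1 : ∀ k, DLe (coeff k (f - 1)) (-1))
    (d n : Polynomial (Kinf Fq)) (h : pc Fq n + pc Fq d * f = 0) : d = 0 := by
  by_contra hd
  have hpd : pc Fq d ≠ 0 := (map_ne_zero_iff _ pc_injective).2 hd
  have h1 := congrArg (tau Fq) h
  rw [map_add, map_mul, tau_pc, tau_pc, hf, map_zero] at h1
  obtain ⟨d', n', hm, hfix, heq, hnd⟩ := normalize_solution σ d (-n) hd (by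
    apply pc_injective
    simp only [map_mul, map_sub, map_neg, map_pow]
    linear_combination -pc Fq d * h1 + pc Fq (WW Fq) ^ σ * pc Fq (ptau Fq d) * h)
  have hfn : pc Fq d' * f = pc Fq n' := by
    have h2 := congrArg (pc Fq) hnd
    rw [map_mul, map_mul, map_neg] at h2
    refine mul_left_cancel₀ hpd ?_
    linear_combination pc Fq d' * h - h2
  have hn0 : n' ≠ 0 := by
    rintro rfl
    rw [map_zero, zero_sub, eq_comm, mul_eq_zero, neg_eq_zero] at heq
    rcases heq with h2 | h2
    · exact pow_ne_zero _ WW_monic.ne_zero h2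
    · exact hm.ne_zero h2
  have hnd0 : n' - d' ≠ 0 := by
    intro h0
    rw [h0, mul_zero, map_eq_zero_iff _ ptau_injective] at heq
    exact hn0 heq
  have hdeg : n'.natDegree = σ + (n' - d').natDegree := by
    have h2 := congrArg Polynomial.natDegree heq
    rwa [natDegree_ptau, Polynomial.Monic.natDegree_mul' (WW_monic.pow σ) hnd0,
      WW_monic.natDegree_pow, WW_natDegree, mul_one] at h2
  have hlead : (n' - d').leadingCoeff = n'.leadingCoeff ^ 𝔮 := by
    have h2 := congrArg Polynomial.leadingCoeff heq
    rw [Polynomial.leadingCoeff_monic_mul (WW_monic.pow σ)] at h2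
    rw [← h2, Polynomial.leadingCoeff, natDegree_ptau, coeff_ptau]
    rfl
  have hn1 : n'.leadingCoeff = 1 := by
    have h2 : (n' - d').degree < n'.degree := by
      rw [Polynomial.degree_eq_natDegree hn0, Polynomial.degree_eq_natDegree hnd0]
      exact_mod_cast (by omega : (n' - d').natDegree < n'.natDegree)
    have h3 : d' = n' - (n' - d') := by ring
    have h4 := Polynomial.leadingCoeff_sub_of_degree_lt h2
    rw [← h3] at h4
    rw [← h4]; exact hm
  rw [hn1, one_pow] at hlead
  have hsub : pc Fq (n' - d') = pc Fq d' * (f - 1) := by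
    rw [map_sub]; linear_combination -hfn
  have h5 : DLe (coeff (n' - d').natDegree (pc Fq (n' - d'))) (0 + -1) := by
    rw [hsub]
    refine dle_coeff_mul (fun k => ?_) hf1 _
    rw [coeff_pc]
    exact dle_coeff_of_fixed hfix k
  rw [coeff_pc] at h5
  change DLe (n' - d').leadingCoeff _ at h5
  rw [hlead] at h5
  have := dle_iff.1 h5 0 (by norm_num)
  simp at this

lemma not_rational_f1 (n d : Polynomial (Kinf Fq)) (h : pc Fq n + pc Fq d * f1 Fq = 0) : d = 0 :=
  not_rational 1 one_pos _ tau_f1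
    (dle_sub_one 1 one_pos _ (by rw [pow_one, pow_one]; exact phi1_spec)) d n h

lemma not_rational_f2 (n d : Polynomial (Kinf Fq)) (h : pc Fq n + pc Fq d * f2 Fq = 0) : d = 0 :=
  not_rational 2 two_pos _ tau_f2 (dle_sub_one 2 two_pos _ phi2_spec) d n h

lemma indep_f1_f2 (p0 p1 p3 : Polynomial (Kinf Fq))
    (h : pc Fq p0 + pc Fq p1 * f1 Fq + pc Fq p3 * f2 Fq = 0) : p0 = 0 ∧ p1 = 0 ∧ p3 = 0 := by
  have h1 := congrArg (tau Fq) h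
  simp only [map_add, map_mul, map_zero, tau_pc, tau_f1, tau_f2] at h1
  have h2 := not_rational_f1
    (p3 * ptau Fq p0 - WW Fq * p3 * ptau Fq p1 - WW Fq ^ 2 * p3 * ptau Fq p3
      - WW Fq ^ 2 * ptau Fq p3 * p0)
    (WW Fq * (p3 * ptau Fq p1 - WW Fq * (ptau Fq p3 * p1))) (by
      simp only [map_sub, map_mul, map_pow]
      linear_combination pc Fq p3 * h1 - pc Fq (WW Fq) ^ 2 * pc Fq (ptau Fq p3) * h)
  have h3 := (mul_eq_zero.1 h2).resolve_left WW_monic.ne_zero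
  have h4 : p1 = 0 ∨ p3 = 0 := by
    by_contra! hne
    have ht1 : ptau Fq p1 ≠ 0 := (map_ne_zero_iff _ ptau_injective).2 hne.1
    have ht3 : ptau Fq p3 ≠ 0 := (map_ne_zero_iff _ ptau_injective).2 hne.2
    have h5 := congrArg Polynomial.natDegree (sub_eq_zero.1 h3)
    rw [Polynomial.natDegree_mul hne.2 ht1,
      Polynomial.natDegree_mul WW_monic.ne_zero (mul_ne_zero ht3 hne.1),
      Polynomial.natDegree_mul ht3 hne.1, natDegree_ptau, natDegree_ptau, WW_natDegree] at h5
    omega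
  have h5 : p1 = 0 ∧ p3 = 0 := by
    rcases h4 with h4 | h4
    · refine ⟨h4, not_rational_f2 p0 p3 ?_⟩
      rw [h4, map_zero, zero_mul, add_zero] at h
      exact h
    · refine ⟨not_rational_f1 p0 p1 ?_, h4⟩
      rw [h4, map_zero, zero_mul, add_zero] at h
      exact h
  refine ⟨?_, h5⟩
  rw [h5.1, h5.2, map_zero, zero_mul, zero_mul, add_zero, add_zero,
    map_eq_zero_iff _ pc_injective] at h
  exact h

/-- A bounded solution of `y^τ = W y` vanishes: if `e` is the maximal degree of a coefficient, then
`q e = q + e`. -/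
lemma eq_zero_of_tau_eq (hq : 2 < 𝔮) (y : (Kinf Fq)⟦X⟧) (E : ℤ) (hE : ∀ k, DLe (coeff k y) E)
    (h : tau Fq y = pc Fq (WW Fq) * y) : y = 0 := by
  by_contra hy
  have hex : ∃ k, coeff k y ≠ 0 := by
    by_contra! h0
    exact hy (PowerSeries.ext fun k => by rw [h0 k, map_zero])
  have hv (k : ℕ) (hk : coeff k y ≠ 0) :
      ∃ e : ℤ, Valued.v (coeff k y) = WithZero.exp e :=
    ⟨_, (WithZero.exp_log ((Valuation.ne_zero_iff _).2 hk)).symm⟩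
  obtain ⟨e, ⟨k, hk⟩, hmax⟩ := Int.exists_greatest_of_bdd
    (P := fun e => ∃ k, Valued.v (coeff k y) = WithZero.exp e)
    ⟨E, fun e ⟨k, hk⟩ => by
      have := hE k
      rw [DLe, hk] at this
      exact WithZero.exp_le_exp.1 this⟩
    (by
      obtain ⟨k, hk⟩ := hex
      obtain ⟨e, he⟩ := hv k hk
      exact ⟨e, k, he⟩)
  have hall (j : ℕ) : DLe (coeff j y) e := by
    by_cases hj : coeff j y = 0
    · rw [hj]; exact dle_zero _
    · obtain ⟨e', he'⟩ := hv j hj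
      rw [DLe, he']
      exact WithZero.exp_le_exp.2 (hmax e' ⟨j, he'⟩)
  have h1 := congrArg (coeff k) h
  have h2 : pc Fq (WW Fq) = X - C (theta Fq ^ 𝔮) := by
    simp [pc, WW]
  rw [coeff_tau, h2, sub_mul, map_sub, coeff_C_mul] at h1
  have h3 : DLe (coeff k (X * y)) e := by
    cases k with
    | zero => simpa using dle_zero e
    | succ k => rw [coeff_succ_X_mul]; exact hall k
  have h4 : Valued.v (theta Fq ^ 𝔮 * coeff k y) = WithZero.exp (𝔮 + e : ℤ) := by
    rw [Valuation.map_mul, v_theta_pow, hk, WithZero.exp_add]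
  have h5 := congrArg (Valued.v (R := Kinf Fq)) h1
  rw [Valuation.map_sub_eq_of_lt_right, h4, Valuation.map_pow, hk, ← WithZero.exp_nsmul,
    WithZero.exp_inj] at h5
  · rw [nsmul_eq_mul] at h5
    have h6 : ((𝔮 : ℤ) - 1) * (e - 1) = 1 := by linear_combination h5
    have h7 : ((𝔮 : ℤ) - 1) ∣ 1 := Dvd.intro _ h6
    have h8 := Int.le_of_dvd one_pos h7
    omega
  · rw [h4]
    refine lt_of_le_of_lt h3 (WithZero.exp_lt_exp.2 ?_)
    have := card_pos (Fq := Fq)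
    omega

/-- The functions `1, f₁, f₁₁, f₂` are linearly independent over `k_∞[t]` when `q > 2`. -/
lemma indep_all (hq : 2 < 𝔮) (p0 p1 p2 p3 : Polynomial (Kinf Fq))
    (h : pc Fq p0 + pc Fq p1 * f1 Fq + pc Fq p2 * f11 Fq + pc Fq p3 * f2 Fq = 0) :
    p0 = 0 ∧ p1 = 0 ∧ p2 = 0 ∧ p3 = 0 := by
  have h2 : p2 = 0 := by
    by_contra hp2
    have h1 := congrArg (tau Fq) h
    simp only [map_add, map_mul, map_zero, tau_pc, tau_f1, tau_f2, tau_f11] at h1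
    have h2 := (indep_f1_f2
      (p2 * ptau Fq p0 - WW Fq * p2 * ptau Fq p1 + WW Fq ^ 2 * p2 * ptau Fq p2
        - WW Fq ^ 2 * p2 * ptau Fq p3 - WW Fq ^ 2 * ptau Fq p2 * p0)
      (WW Fq * (p2 * ptau Fq p1 - WW Fq * ptau Fq p2 * (p1 + p2)))
      (WW Fq ^ 2 * (p2 * ptau Fq p3 - ptau Fq p2 * p3)) (by
        simp only [map_sub, map_add, map_mul, map_pow]
        linear_combination pc Fq p2 * h1 - pc Fq (WW Fq) ^ 2 * pc Fq (ptau Fq p2) * h)).2.1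
    have h3 := (mul_eq_zero.1 h2).resolve_left WW_monic.ne_zero
    obtain ⟨d, n, hm, hfix, heq, -⟩ := normalize_solution 1 p2 (-p1) hp2 (by
      rw [map_neg]
      linear_combination -h3)
    have hy : pc Fq n - pc Fq d * f1 Fq = 0 := by
      have hbd : ∃ E : ℕ, ∀ k, DLe (n.coeff k) E := by
        have h4 (k : ℕ) := exists_dle (n.coeff k)
        choose E hE using h4
        refine ⟨(Finset.range (n.natDegree + 1)).sup E, fun k => ?_⟩
        by_cases hk : k ≤ n.natDegree
        · refine (hE k).mono ?_
          exact_mod_cast Finset.le_sup (f := E) (Finset.mem_range.2 (by omega))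
        · rw [Polynomial.coeff_eq_zero_of_natDegree_lt (by omega)]
          exact dle_zero _
      obtain ⟨E, hE⟩ := hbd
      refine eq_zero_of_tau_eq hq _ E (fun k => ?_) ?_
      · rw [map_sub, coeff_pc]
        refine (hE k).sub (DLe.mono (dle_coeff_mul (D := 0) (E := 0) (fun k => ?_) (fun k => ?_) k)
          (by omega))
        · rw [coeff_pc]; exact dle_coeff_of_fixed hfix k
        · exact dle_coeff_kap 1 _ k
      · rw [map_sub, map_mul, tau_pc, tau_pc, hfix, heq, tau_f1]
        simp only [map_sub, map_mul, map_pow]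
        ring
    have := not_rational_f1 n (-d) (by rw [map_neg]; linear_combination hy)
    exact hm.ne_zero (neg_eq_zero.1 this)
  subst h2
  rw [map_zero, zero_mul, add_zero] at h
  obtain ⟨h0, h1, h3⟩ := indep_f1_f2 p0 p1 p3 h
  exact ⟨h0, h1, rfl, h3⟩

end Indep

/-! ### Lower bounds for values of linear forms in independent functions -/

section Bound

open PowerSeries

variable (Fq) in
/-- Polynomials in `t` over `𝔽_q` as power series in `t` over `k_∞`. -/
def yc : Polynomial Fq →+* (Kinf Fq)⟦X⟧ :=
  (pc Fq).comp (Polynomial.mapRingHom (algebraMap Fq (Kinf Fq)))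

lemma yc_eq_pc (p : Polynomial Fq) : yc Fq p = pc Fq (p.map (algebraMap Fq (Kinf Fq))) := rfl

lemma coeff_yc (p : Polynomial Fq) (k : ℕ) :
    coeff k (yc Fq p) = algebraMap Fq (Kinf Fq) (p.coeff k) := by
  rw [yc_eq_pc, coeff_pc, Polynomial.coeff_map]

/-- The power series in `t` formed by the `s ^ n`-components of the coefficients of `v`. -/
def comp (n : ℤ) (v : (Kinf Fq)⟦X⟧) : Fq⟦X⟧ := PowerSeries.mk fun k => (coeff k v).coeff n

lemma comp_sum {ι : Type} (s : Finset ι) (n : ℤ) (v : ι → (Kinf Fq)⟦X⟧) :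
    comp n (∑ i ∈ s, v i) = ∑ i ∈ s, comp n (v i) := by
  ext k
  simp [comp, HahnSeries.coeff_sum]

lemma comp_yc_mul (n : ℤ) (p : Polynomial Fq) (v : (Kinf Fq)⟦X⟧) :
    comp n (yc Fq p * v) = (p : Fq⟦X⟧) * comp n v := by
  ext k
  rw [comp, coeff_mk, coeff_mul, coeff_mul, HahnSeries.coeff_sum]
  refine Finset.sum_congr rfl fun x _ => ?_
  rw [coeff_yc, LaurentSeries.algebraMap_apply, HahnSeries.C_mul_eq_smul, HahnSeries.coeff_smul,
    Polynomial.coeff_coe, comp, coeff_mk, smul_eq_mul]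

/-- A linear form over `𝔽_q[t]` in finitely many independent functions cannot be arbitrarily small
unless it vanishes identically: the components of the functions define a decreasing sequence of
subspaces of a finite-dimensional space over the fraction field of `𝔽_q[[t]]`, which stabilizes. -/
lemma exists_lower_bound {ι : Type} [Fintype ι] (v : ι → (Kinf Fq)⟦X⟧)
    (hind : ∀ y : ι → Polynomial Fq, ∑ i, yc Fq (y i) * v i = 0 → y = 0) :
    ∃ T : ℕ, ∀ y : ι → Polynomial Fq, (∀ k, DLe (coeff k (∑ i, yc Fq (y i) * v i)) (-T)) →
      y = 0 := by
  let L := FractionRing Fq⟦X⟧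
  let U : ℕ → Submodule L (ι → L) := fun T =>
    { carrier := {z | ∀ n : ℤ, n < T → ∑ i, z i * algebraMap Fq⟦X⟧ L (comp n (v i)) = 0}
      add_mem' := by
        intro a b ha hb n hn
        simp only [Pi.add_apply, add_mul, Finset.sum_add_distrib]
        rw [ha n hn, hb n hn, add_zero]
      zero_mem' := by
        intro n _
        simp
      smul_mem' := by
        intro c a ha n hn
        simp only [Pi.smul_apply, smul_eq_mul, mul_assoc]
        rw [← Finset.mul_sum, ha n hn, mul_zero] }
  obtain ⟨T, hT⟩ := IsArtinian.monotone_stabilizes (R := L) (M := ι → L)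
    ⟨fun T => OrderDual.toDual (U T), fun a b hab => by
      change U b ≤ U a
      intro z hz n hn
      exact hz n (lt_of_lt_of_le hn (by exact_mod_cast hab))⟩
  have hcomp (y : ι → Polynomial Fq) (n : ℤ) :
      ∑ i, algebraMap Fq⟦X⟧ L (y i : Fq⟦X⟧) * algebraMap Fq⟦X⟧ L (comp n (v i)) =
        algebraMap Fq⟦X⟧ L (comp n (∑ i, yc Fq (y i) * v i)) := by
    rw [comp_sum, map_sum]
    refine Finset.sum_congr rfl fun i _ => ?_
    rw [comp_yc_mul, map_mul]
  refine ⟨T, fun y hy => hind y ?_⟩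
  have hmem : (fun i => algebraMap Fq⟦X⟧ L (y i : Fq⟦X⟧)) ∈ U T := by
    intro n hn
    rw [hcomp y n]
    have : comp n (∑ i, yc Fq (y i) * v i) = 0 := by
      ext k
      rw [comp, coeff_mk, map_zero]
      exact dle_iff.1 (hy k) n (by simpa using hn)
    rw [this, map_zero]
  ext1 k
  ext n
  rw [map_zero]
  have h1 : U T = U (max T (n.toNat + 1)) := hT _ (le_max_left _ _)
  rw [h1] at hmem
  have h2 := hmem n (by
    have : T ⊔ (n.toNat + 1) ≥ n.toNat + 1 := le_max_right _ _
    omega)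
  rw [hcomp y n, map_eq_zero_iff _ (IsFractionRing.injective Fq⟦X⟧ L)] at h2
  have h3 := congrArg (coeff k) h2
  rw [comp, coeff_mk, map_zero] at h3
  rw [h3]
  rfl

variable (Fq) in
/-- The four functions `1, f₁, f₁₁, f₂`. -/
def fv : Fin 4 → (Kinf Fq)⟦X⟧ := ![1, f1 Fq, f11 Fq, f2 Fq]

/-- The functions `b ^ l θ ^ x f_i` are independent over `𝔽_q[t]`. -/
lemma indep_family (hq : 2 < 𝔮) (D N : ℕ) (b : Kinf Fq)
    (hb : ∀ y : ℕ → Polynomial Fq, ∑ i ∈ Finset.range D, rho Fq (y i) * b ^ i = 0 →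
        ∀ i < D, y i = 0)
    (y : Fin 4 × Fin D × Fin N → Polynomial Fq)
    (h : ∑ i, yc Fq (y i) * (C (b ^ (i.2.1 : ℕ) * theta Fq ^ (i.2.2 : ℕ)) * fv Fq i.1) = 0) :
    y = 0 := by
  let p : Fin 4 → Polynomial (Kinf Fq) := fun i => ∑ l : Fin D, ∑ x : Fin N,
    (y (i, l, x)).map (algebraMap Fq (Kinf Fq)) *
      Polynomial.C (b ^ (l : ℕ) * theta Fq ^ (x : ℕ))
  have hp : ∑ i, pc Fq (p i) * fv Fq i = 0 := by
    rw [← h, Fintype.sum_prod_type]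
    refine Finset.sum_congr rfl fun i _ => ?_
    rw [Fintype.sum_prod_type]
    simp only [p, map_sum, Finset.sum_mul]
    refine Finset.sum_congr rfl fun l _ => Finset.sum_congr rfl fun x _ => ?_
    rw [map_mul, ← yc_eq_pc, mul_assoc]
    congr 2
    exact Polynomial.coe_C _
  rw [Fin.sum_univ_four] at hp
  have hp0 : ∀ i, p i = 0 := by
    have := indep_all hq (p 0) (p 1) (p 2) (p 3) (by
      rw [← hp]; simp [fv])
    intro i
    fin_cases i
    · exact this.1
    · exact this.2.1
    · exact this.2.2.1
    · exact this.2.2.2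
  ext1 ⟨i, l, x⟩
  ext k
  rw [Pi.zero_apply, Polynomial.coeff_zero]
  have h1 := congrArg (fun r => Polynomial.coeff r k) (hp0 i)
  simp only [p, Polynomial.finsetSum_coeff, Polynomial.coeff_mul_C, Polynomial.coeff_map,
    Polynomial.coeff_zero] at h1
  let g : ℕ → Polynomial Fq := fun l => if hl : l < D then
    ∑ x : Fin N, Polynomial.C ((y (i, ⟨l, hl⟩, x)).coeff k) * Polynomial.X ^ (x : ℕ) else 0
  have h2 := hb g (by
    rw [← h1, ← Fin.sum_univ_eq_sum_range (fun l => rho Fq (g l) * b ^ l)]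
    refine Finset.sum_congr rfl fun l _ => ?_
    simp only [g, l.2, dif_pos, map_sum, Finset.sum_mul]
    refine Finset.sum_congr rfl fun x _ => ?_
    simp only [rho_apply, map_mul, map_pow, Polynomial.aeval_C, Polynomial.aeval_X]
    ring) l l.2
  have h3 := congrArg (fun r => Polynomial.coeff r x) h2
  simp only [g, l.2, dif_pos, Polynomial.finsetSum_coeff, Polynomial.coeff_C_mul,
    Polynomial.coeff_X_pow, Polynomial.coeff_zero] at h3
  rw [Finset.sum_eq_single x] at h3
  · simpa using h3
  · intro x' _ hx
    rw [if_neg (fun h => hx (Fin.ext h.symm)), mul_zero]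
  · simp

end Bound

/-! ### Values at the points `t = θ ^ (q ^ j)` -/

section Values

open PowerSeries

variable (Fq) in
/-- The `q ^ n`-power map as a ring endomorphism. -/
def frn (R : Type) [CommRing R] [Algebra Fq R] : ℕ → R →+* R
  | 0 => RingHom.id R
  | n + 1 => (fr Fq R).comp (frn R n)

lemma frn_apply {R : Type} [CommRing R] [Algebra Fq R] (n : ℕ) (x : R) :
    frn Fq R n x = x ^ 𝔮 ^ n := by
  induction n with
  | zero => simp [frn]
  | succ n ih => rw [frn, RingHom.comp_apply, ih, fr_apply, ← pow_mul, pow_succ]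

variable (Fq) in
/-- The polynomial `ℓ_n ∑_{d < n} 1 / ℓ_d` in `θ`. -/
def uP : ℕ → Polynomial Fq
  | 0 => 0
  | n + 1 => (uP n + 1) * (Polynomial.X - Polynomial.X ^ 𝔮 ^ (n + 1))

variable (Fq) in
/-- The polynomial `ℓ_n² ∑_{d < n} 1 / ℓ_d²` in `θ`. -/
def vP : ℕ → Polynomial Fq
  | 0 => 0
  | n + 1 => (vP n + 1) * (Polynomial.X - Polynomial.X ^ 𝔮 ^ (n + 1)) ^ 2

variable (Fq) in
/-- The polynomial `ℓ_n² ∑_{e < d < n} 1 / (ℓ_d ℓ_e)` in `θ`. -/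
def zP : ℕ → Polynomial Fq
  | 0 => 0
  | n + 1 => (zP n + uP Fq n) * (Polynomial.X - Polynomial.X ^ 𝔮 ^ (n + 1)) ^ 2

lemma ell_theta_ne (n : ℕ) : ell Fq (theta Fq) n ≠ 0 := transc_theta.ell_ne n

lemma rho_factor (n : ℕ) : rho Fq (Polynomial.X - Polynomial.X ^ n) =
    theta Fq - theta Fq ^ n := by
  simp [rho_apply]

lemma rho_uP (n : ℕ) : rho Fq (uP Fq n) = ell Fq (theta Fq) n * s1 Fq n := by
  induction n with
  | zero => simp [uP, s1]
  | succ n ih =>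
    have := ell_theta_ne (Fq := Fq) n
    rw [uP, map_mul, rho_factor, map_add, ih, map_one, ell, s1, s1, Finset.sum_range_succ]
    field_simp

lemma rho_vP (n : ℕ) : rho Fq (vP Fq n) = ell Fq (theta Fq) n ^ 2 * s2 Fq n := by
  induction n with
  | zero => simp [vP, s2]
  | succ n ih =>
    have := ell_theta_ne (Fq := Fq) n
    rw [vP, map_mul, map_pow, rho_factor, map_add, ih, map_one, ell, s2, s2,
      Finset.sum_range_succ]
    field_simp

lemma rho_zP (n : ℕ) : rho Fq (zP Fq n) = ell Fq (theta Fq) n ^ 2 * s11 Fq n := by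
  induction n with
  | zero => simp [zP, s11]
  | succ n ih =>
    have := ell_theta_ne (Fq := Fq) n
    rw [zP, map_mul, map_pow, rho_factor, map_add, ih, rho_uP, ell, s11, s11,
      Finset.sum_range_succ]
    field_simp

lemma natDegree_factor_le (n : ℕ) :
    (Polynomial.X - Polynomial.X ^ 𝔮 ^ n : Polynomial Fq).natDegree ≤ 𝔮 ^ n := by
  refine (Polynomial.natDegree_sub_le _ _).trans (max_le ?_ ?_)
  · rw [Polynomial.natDegree_X]; exact Nat.one_le_pow _ _ card_pos
  · rw [Polynomial.natDegree_X_pow]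

lemma two_mul_pow_le (n : ℕ) : 2 * 𝔮 ^ n ≤ 𝔮 ^ (n + 1) := by
  rw [pow_succ, mul_comm]
  exact Nat.mul_le_mul_left _ (Fintype.one_lt_card (α := Fq))

lemma natDegree_uP (n : ℕ) : (uP Fq n).natDegree ≤ 2 * 𝔮 ^ n := by
  induction n with
  | zero => simp [uP]
  | succ n ih =>
    rw [uP]
    have h1 := Polynomial.natDegree_mul_le (p := uP Fq n + 1)
      (q := Polynomial.X - Polynomial.X ^ 𝔮 ^ (n + 1))
    have h2 := Polynomial.natDegree_add_le (uP Fq n) 1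
    have h3 := natDegree_factor_le (Fq := Fq) (n + 1)
    have h4 := two_mul_pow_le (Fq := Fq) n
    rw [Polynomial.natDegree_one] at h2
    omega

lemma natDegree_vP (n : ℕ) : (vP Fq n).natDegree ≤ 4 * 𝔮 ^ n := by
  induction n with
  | zero => simp [vP]
  | succ n ih =>
    rw [vP]
    have h1 := Polynomial.natDegree_mul_le (p := vP Fq n + 1)
      (q := (Polynomial.X - Polynomial.X ^ 𝔮 ^ (n + 1)) ^ 2)
    have h2 := Polynomial.natDegree_add_le (vP Fq n) 1
    have h3 := natDegree_factor_le (Fq := Fq) (n + 1)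
    have h4 := two_mul_pow_le (Fq := Fq) n
    rw [Polynomial.natDegree_one] at h2
    rw [Polynomial.natDegree_pow] at h1
    omega

lemma natDegree_zP (n : ℕ) : (zP Fq n).natDegree ≤ 4 * 𝔮 ^ n := by
  induction n with
  | zero => simp [zP]
  | succ n ih =>
    rw [zP]
    have h1 := Polynomial.natDegree_mul_le (p := zP Fq n + uP Fq n)
      (q := (Polynomial.X - Polynomial.X ^ 𝔮 ^ (n + 1)) ^ 2)
    have h2 := Polynomial.natDegree_add_le (zP Fq n) (uP Fq n)
    have h3 := natDegree_factor_le (Fq := Fq) (n + 1)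
    have h4 := two_mul_pow_le (Fq := Fq) n
    have h5 := natDegree_uP (Fq := Fq) n
    rw [Polynomial.natDegree_pow] at h1
    omega

variable (Fq) in
/-- Iterates of the twist. -/
def twn : ℕ → Fq⟦X⟧⟦X⟧ →+* Fq⟦X⟧⟦X⟧
  | 0 => RingHom.id _
  | n + 1 => (twn n).comp (tw Fq)

lemma twn_C (n : ℕ) (x : Fq⟦X⟧) : twn Fq n (C x) = C (x ^ 𝔮 ^ n) := by
  induction n generalizing x with
  | zero => simp [twn]
  | succ n ih => rw [twn, RingHom.comp_apply, tw_C, ih, ← pow_mul, pow_succ']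

lemma twn_X (n : ℕ) : twn Fq n X * C X = C (X ^ 𝔮 ^ n) * X := by
  induction n with
  | zero => simp [twn, mul_comm]
  | succ n ih =>
    have h : ∃ r, 𝔮 = r + 1 := ⟨𝔮 - 1, by have := card_pos (Fq := Fq); omega⟩
    obtain ⟨r, hr⟩ := h
    rw [twn, RingHom.comp_apply, tw_X, map_mul, twn_C, mul_assoc, ih, ← mul_assoc, ← map_mul C]
    congr 2
    rw [pow_succ 𝔮, hr, Nat.add_sub_cancel]
    ring

variable (Fq) in
/-- The point `s ^ (q ^ V - q ^ j)`, where `u = s ^ (q ^ V) t` and `t = θ ^ (q ^ j)`. -/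
def pt (V j : ℕ) : Fq⟦X⟧ := X ^ (𝔮 ^ V - 𝔮 ^ j)

lemma card_pow_lt {V j : ℕ} (h : j < V) : 𝔮 ^ j < 𝔮 ^ V :=
  Nat.pow_lt_pow_right Fintype.one_lt_card h

lemma X_dvd_pt {V j : ℕ} (h : j < V) : X ∣ pt Fq V j :=
  dvd_pow_self _ (by have := card_pow_lt (Fq := Fq) h; omega)

lemma pt_mul {V j : ℕ} (h : j < V) : pt Fq V j * X ^ 𝔮 ^ j = X ^ 𝔮 ^ V := by
  rw [pt, ← pow_add, Nat.sub_add_cancel (card_pow_lt h).le]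

/-- The value of the `V`-fold twist of the function attached to a power series at
`t = θ ^ (q ^ j)`, preceded by `n` applications of `tw`. -/
def eta {V j : ℕ} (h : j < V) (n : ℕ) : Fq⟦X⟧⟦X⟧ →+* Kinf Fq :=
  (iota Fq).comp ((evHom (pt Fq V j) (X_dvd_pt h)).comp
    ((PowerSeries.map (frn Fq _ V)).comp (twn Fq n)))

lemma eta_tw {V j : ℕ} (h : j < V) (n : ℕ) (φ : Fq⟦X⟧⟦X⟧) :
    eta h n (tw Fq φ) = eta h (n + 1) φ := rfl

lemma eta_C {V j : ℕ} (h : j < V) (n : ℕ) (x : Fq⟦X⟧) :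
    eta h n (C x) = iota Fq x ^ 𝔮 ^ (n + V) := by
  simp only [eta, RingHom.comp_apply, twn_C, PowerSeries.map_C, evHom_C, frn_apply]
  rw [← map_pow, ← pow_mul, pow_add]

lemma eta_X {V j : ℕ} (h : j < V) (n : ℕ) :
    eta h n X * iota Fq X ^ 𝔮 ^ j = iota Fq X ^ 𝔮 ^ (n + V) := by
  have h1 := congrArg (fun φ => iota Fq (evHom (pt Fq V j) (X_dvd_pt h)
    (PowerSeries.map (frn Fq _ V) φ))) (twn_X (Fq := Fq) n)
  simp only [map_mul, PowerSeries.map_C, PowerSeries.map_X, evHom_C, frn_apply, evHom_X] at h1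
  have h2 := congrArg (iota Fq) (pt_mul (Fq := Fq) h)
  rw [map_mul, map_pow, map_pow] at h2
  have hX : iota Fq X ^ 𝔮 ^ V ≠ 0 :=
    pow_ne_zero _ ((map_ne_zero_iff _ iota_injective).2 X_ne_zero)
  refine mul_right_cancel₀ hX ?_
  simp only [map_pow] at h1
  change eta h n X * _ = _ at h1
  rw [← pow_mul, ← pow_add] at h1
  linear_combination iota Fq X ^ 𝔮 ^ j * h1 + iota Fq X ^ 𝔮 ^ (n + V) * h2

lemma eta_rec {V j : ℕ} (h : j < V) (n σ : ℕ) (φ g : Fq⟦X⟧⟦X⟧)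
    (hφ : fac Fq ^ σ * (φ - g) = C (-X ^ 𝔮) ^ σ * tw Fq φ) :
    eta h (n + 1) φ = (theta Fq ^ 𝔮 ^ j - theta Fq ^ 𝔮 ^ (n + V + 1)) ^ σ *
      (eta h n φ - eta h n g) := by
  have h1 := congrArg (eta h n) hφ
  have hθX : iota Fq X * theta Fq = 1 := iota_X_mul_theta
  have hq : 𝔮 - 1 + 1 = 𝔮 := Nat.sub_add_cancel card_pos
  have hJ : iota Fq X ^ 𝔮 ^ j * theta Fq ^ 𝔮 ^ j = 1 := by rw [← mul_pow, hθX, one_pow]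
  have hN : iota Fq X ^ 𝔮 ^ (n + V + 1) * theta Fq ^ 𝔮 ^ (n + V + 1) = 1 := by
    rw [← mul_pow, hθX, one_pow]
  have hC : eta h n (C (-X ^ 𝔮)) = -iota Fq X ^ 𝔮 ^ (n + V + 1) := by
    rw [eta_C, ← frn_apply, map_neg, map_neg, frn_apply, map_pow, ← pow_mul, ← pow_succ']
  have hX : eta h n X = iota Fq X ^ 𝔮 ^ (n + V) * theta Fq ^ 𝔮 ^ j := by
    rw [← eta_X h n, mul_assoc, hJ, mul_one]
  have hfac : eta h n (fac Fq) =
      -iota Fq X ^ 𝔮 ^ (n + V + 1) * (theta Fq ^ 𝔮 ^ j - theta Fq ^ 𝔮 ^ (n + V + 1)) := by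
    have h3 : (iota Fq X ^ (𝔮 - 1)) ^ 𝔮 ^ (n + V) * iota Fq X ^ 𝔮 ^ (n + V) =
        iota Fq X ^ 𝔮 ^ (n + V + 1) := by
      rw [← mul_pow, ← pow_succ, hq, ← pow_mul, ← pow_succ']
    rw [fac, map_sub, map_one, map_mul, eta_C, hX, map_pow]
    linear_combination -hN - theta Fq ^ 𝔮 ^ j * h3
  rw [map_mul, map_mul, map_pow, map_pow, hfac, hC, map_sub, mul_pow, mul_assoc, eta_tw] at h1
  have hne : (-iota Fq X ^ 𝔮 ^ (n + V + 1)) ^ σ ≠ 0 :=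
    pow_ne_zero _ (neg_ne_zero.2 (pow_ne_zero _
      ((map_ne_zero_iff _ iota_injective).2 X_ne_zero)))
  exact (mul_left_cancel₀ hne h1).symm

lemma dle_eta {V j : ℕ} (h : j < V) (n : ℕ) (φ : Fq⟦X⟧⟦X⟧) : DLe (eta h n φ) 0 := dle_iota _

lemma dle_s1 (n : ℕ) : DLe (s1 Fq n) 0 :=
  dle_sum _ _ fun d _ => (dle_inv_ell d).mono (by omega)

lemma ell_succ_pow (j N : ℕ) : ell Fq (theta Fq) (N + 1) ^ 𝔮 ^ j =
    ell Fq (theta Fq) N ^ 𝔮 ^ j * (theta Fq ^ 𝔮 ^ j - theta Fq ^ 𝔮 ^ (N + j + 1)) := by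
  rw [ell, mul_pow, ← frn_apply (R := Kinf Fq) j (theta Fq - _), map_sub, frn_apply, frn_apply,
    ← pow_mul, ← pow_add, add_right_comm]

lemma factor_ne (j N : ℕ) : theta Fq ^ 𝔮 ^ j - theta Fq ^ 𝔮 ^ (N + j + 1) ≠ 0 := by
  have := pow_ne_zero (𝔮 ^ j) (ell_theta_ne (Fq := Fq) (N + 1))
  rw [ell_succ_pow] at this
  exact right_ne_zero_of_mul this

lemma tendsto_small (x : ℕ → Kinf Fq) (hx : ∀ n, DLe (x n) 0) (m J : ℕ) (hJ : 0 < J) :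
    Filter.Tendsto (fun n => (ell Fq (theta Fq) (m + n))⁻¹ ^ J * x n) Filter.atTop (nhds 0) := by
  rw [tendsto_zero_iff]
  intro D
  filter_upwards [Filter.eventually_ge_atTop D] with n hn
  refine (((dle_inv_ell (m + n)).pow J).mul (hx n)).mono ?_
  have : (D : ℤ) ≤ (J : ℤ) * ((m + n : ℕ) : ℤ) := by
    exact_mod_cast (by nlinarith : D ≤ J * (m + n))
  push_cast at this ⊢
  linarith

/-- The value of the twist of `φ₂` at `θ ^ (q ^ j)` in terms of the tail of `ζ(2)`. -/
lemma eta_phi2 (j m : ℕ) (h : j < m + j) :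
    s2 Fq m ^ 𝔮 ^ j + ((ell Fq (theta Fq) m)⁻¹ ^ 𝔮 ^ j) ^ 2 * eta h 0 (phi2 Fq) =
      mzv Fq 1 ![2] ^ 𝔮 ^ j := by
  let F : ℕ → Kinf Fq := fun n => s2 Fq (m + n) ^ 𝔮 ^ j +
    ((ell Fq (theta Fq) (m + n))⁻¹ ^ 𝔮 ^ j) ^ 2 * eta h n (phi2 Fq)
  have hstep (n : ℕ) : F (n + 1) = F n := by
    have h1 := eta_rec h n 2 (phi2 Fq) 1 phi2_spec
    have h2 := factor_ne (Fq := Fq) j (m + n)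
    have h3 := pow_ne_zero (𝔮 ^ j) (ell_theta_ne (Fq := Fq) (m + n))
    have h4 : s2 Fq (m + (n + 1)) ^ 𝔮 ^ j =
        s2 Fq (m + n) ^ 𝔮 ^ j + ((ell Fq (theta Fq) (m + n) ^ 𝔮 ^ j) ^ 2)⁻¹ := by
      rw [← add_assoc, s2, Finset.sum_range_succ, ← frn_apply, map_add, frn_apply, frn_apply,
        inv_pow, pow_right_comm]
      rfl
    simp only [F]
    rw [h1, h4, ← add_assoc, inv_pow, inv_pow, inv_pow, inv_pow, ell_succ_pow, map_one,
      show n + (m + j) + 1 = m + n + j + 1 by ring]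
    field_simp
    ring
  have hconst (n : ℕ) : F n = F 0 := by
    induction n with
    | zero => rfl
    | succ n ih => rw [hstep, ih]
  have hJ : 0 < 𝔮 ^ j := pow_pos card_pos j
  have hlim : Filter.Tendsto F Filter.atTop (nhds (mzv Fq 1 ![2] ^ 𝔮 ^ j + 0)) := by
    refine Filter.Tendsto.add (tendsto_pow_card (tendsto_s2.comp ?_) _) ?_
    · exact Filter.tendsto_atTop_mono (fun n => Nat.le_add_left n m) Filter.tendsto_id
    · have := tendsto_small (fun n => eta h n (phi2 Fq)) (fun n => dle_eta h n _) m (𝔮 ^ j * 2)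
        (by omega)
      simpa only [pow_mul] using this
  rw [add_zero] at hlim
  have h0 : Filter.Tendsto F Filter.atTop (nhds (F 0)) := by
    rw [show F = fun _ => F 0 from funext hconst]
    exact tendsto_const_nhds
  exact tendsto_nhds_unique h0 hlim

/-- The values of the twists of `φ₁` and `φ₁₁` at `θ ^ (q ^ j)` in terms of the tail of
`ζ(1,1)`. -/
lemma eta_phi11 (j m : ℕ) (h : j < m + j) :
    s11 Fq m ^ 𝔮 ^ j + (ell Fq (theta Fq) m)⁻¹ ^ 𝔮 ^ j * (s1 Fq m ^ 𝔮 ^ j * eta h 0 (phi1 Fq)) +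
      ((ell Fq (theta Fq) m)⁻¹ ^ 𝔮 ^ j) ^ 2 * eta h 0 (phi11 Fq) =
      mzv Fq 2 ![1, 1] ^ 𝔮 ^ j := by
  let F : ℕ → Kinf Fq := fun n => s11 Fq (m + n) ^ 𝔮 ^ j +
    (ell Fq (theta Fq) (m + n))⁻¹ ^ 𝔮 ^ j * (s1 Fq (m + n) ^ 𝔮 ^ j * eta h n (phi1 Fq)) +
    ((ell Fq (theta Fq) (m + n))⁻¹ ^ 𝔮 ^ j) ^ 2 * eta h n (phi11 Fq)
  have hstep (n : ℕ) : F (n + 1) = F n := by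
    have h1 := eta_rec h n 2 (phi11 Fq) (phi1 Fq - 1) phi11_spec
    have h1' := eta_rec h n 1 (phi1 Fq) 1 (by rw [pow_one, pow_one]; exact phi1_spec)
    have h2 := factor_ne (Fq := Fq) j (m + n)
    have h3 := pow_ne_zero (𝔮 ^ j) (ell_theta_ne (Fq := Fq) (m + n))
    have h4 : s1 Fq (m + (n + 1)) ^ 𝔮 ^ j =
        s1 Fq (m + n) ^ 𝔮 ^ j + (ell Fq (theta Fq) (m + n) ^ 𝔮 ^ j)⁻¹ := by
      rw [← add_assoc, s1, Finset.sum_range_succ, ← frn_apply, map_add, frn_apply, frn_apply,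
        inv_pow]
      rfl
    have h5 : s11 Fq (m + (n + 1)) ^ 𝔮 ^ j = s11 Fq (m + n) ^ 𝔮 ^ j +
        (ell Fq (theta Fq) (m + n) ^ 𝔮 ^ j)⁻¹ * s1 Fq (m + n) ^ 𝔮 ^ j := by
      rw [← add_assoc, s11, Finset.sum_range_succ, ← frn_apply, map_add, frn_apply, frn_apply,
        mul_pow, inv_pow]
      rfl
    simp only [F]
    simp only [inv_pow]
    rw [h1, h1', h4, h5, ← add_assoc, ell_succ_pow, map_one, map_sub, map_one,
      show n + (m + j) + 1 = m + n + j + 1 by ring]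
    field_simp
    ring
  have hconst (n : ℕ) : F n = F 0 := by
    induction n with
    | zero => rfl
    | succ n ih => rw [hstep, ih]
  have hJ : 0 < 𝔮 ^ j := pow_pos card_pos j
  have hlim : Filter.Tendsto F Filter.atTop (nhds (mzv Fq 2 ![1, 1] ^ 𝔮 ^ j + 0 + 0)) := by
    refine Filter.Tendsto.add (Filter.Tendsto.add (tendsto_pow_card (tendsto_s11.comp ?_) _) ?_) ?_
    · exact Filter.tendsto_atTop_mono (fun n => Nat.le_add_left n m) Filter.tendsto_id
    · refine tendsto_small (fun n => s1 Fq (m + n) ^ 𝔮 ^ j * eta h n (phi1 Fq)) (fun n => ?_) m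
        (𝔮 ^ j) hJ
      have := ((dle_s1 (Fq := Fq) (m + n)).pow (𝔮 ^ j)).mul (dle_eta h n (phi1 Fq))
      exact this.mono (by simp)
    · have := tendsto_small (fun n => eta h n (phi11 Fq)) (fun n => dle_eta h n _) m (𝔮 ^ j * 2)
        (by omega)
      simpa only [pow_mul] using this
  rw [add_zero, add_zero] at hlim
  have h0 : Filter.Tendsto F Filter.atTop (nhds (F 0)) := by
    rw [show F = fun _ => F 0 from funext hconst]
    exact tendsto_const_nhds
  exact tendsto_nhds_unique h0 hlim

/-- A linear relation between `ζ(1,1)` and `ζ(2)` yields a relation between the values of the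
deformations at every `θ ^ (q ^ j)`. -/
lemma value_relation (j m : ℕ) (h : j < m + j) (a : Polynomial Fq) (b : Kinf Fq)
    (hab : rho Fq a * mzv Fq 2 ![1, 1] = b * mzv Fq 1 ![2]) :
    rho Fq a ^ 𝔮 ^ j * (rho Fq (zP Fq m) ^ 𝔮 ^ j + rho Fq (uP Fq m) ^ 𝔮 ^ j * eta h 0 (phi1 Fq) +
      eta h 0 (phi11 Fq)) = b ^ 𝔮 ^ j * (rho Fq (vP Fq m) ^ 𝔮 ^ j + eta h 0 (phi2 Fq)) := by
  have h1 := congrArg (· ^ 𝔮 ^ j) hab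
  simp only [mul_pow] at h1
  rw [← eta_phi2 j m h, ← eta_phi11 j m h] at h1
  rw [rho_uP, rho_vP, rho_zP, mul_pow, mul_pow, mul_pow]
  have h3 := pow_ne_zero (𝔮 ^ j) (ell_theta_ne (Fq := Fq) m)
  rw [inv_pow] at h1
  rw [pow_right_comm (ell Fq (theta Fq) m) 2]
  field_simp at h1
  linear_combination h1

end Values

/-! ### Existence of the auxiliary function -/

section Siegel

variable {F R : Type} [Field F] [CommRing R] [Algebra F R]

variable (F) in
/-- The span of the elements `b ^ i θ ^ r` with `i < D` and `r < B`. -/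
def lam (θ b : R) (D B : ℕ) : Submodule F R :=
  Submodule.span F (Set.range fun p : Fin D × Fin B => b ^ (p.1 : ℕ) * θ ^ (p.2 : ℕ))

instance (θ b : R) (D B : ℕ) : FiniteDimensional F (lam F θ b D B) :=
  FiniteDimensional.span_of_finite F (Set.finite_range _)

lemma finrank_lam_le (θ b : R) (D B : ℕ) : Module.finrank F (lam F θ b D B) ≤ D * B := by
  have := finrank_range_le_card (R := F)
    (fun p : Fin D × Fin B => b ^ (p.1 : ℕ) * θ ^ (p.2 : ℕ))
  rw [Fintype.card_prod, Fintype.card_fin, Fintype.card_fin] at this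
  exact this

lemma mem_lam (θ b : R) {D B i r : ℕ} (hi : i < D) (hr : r < B) :
    b ^ i * θ ^ r ∈ lam F θ b D B :=
  Submodule.subset_span ⟨(⟨i, hi⟩, ⟨r, hr⟩), rfl⟩

lemma lam_mono (θ b : R) (D : ℕ) {B B' : ℕ} (h : B ≤ B') : lam F θ b D B ≤ lam F θ b D B' := by
  refine Submodule.span_le.2 ?_
  rintro _ ⟨⟨i, r⟩, rfl⟩
  exact mem_lam θ b i.2 (lt_of_lt_of_le r.2 h)

lemma aeval_mul_mem_lam (θ b : R) {D B : ℕ} (p : Polynomial F) {x : R}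
    (hx : x ∈ lam F θ b D B) :
    Polynomial.aeval θ p * x ∈ lam F θ b D (B + p.natDegree) := by
  induction hx using Submodule.span_induction with
  | mem x hx =>
    obtain ⟨⟨i, r⟩, rfl⟩ := hx
    rw [Polynomial.aeval_eq_sum_range, Finset.sum_mul]
    refine Submodule.sum_mem _ fun k hk => ?_
    have h1 : p.coeff k • θ ^ k * (b ^ (i : ℕ) * θ ^ (r : ℕ)) =
        p.coeff k • (b ^ (i : ℕ) * θ ^ (r + k : ℕ)) := by
      rw [smul_mul_assoc]; congr 1; ring
    rw [h1]
    refine Submodule.smul_mem _ _ (mem_lam θ b i.2 ?_)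
    have := Finset.mem_range.1 hk
    omega
  | zero => rw [mul_zero]; exact Submodule.zero_mem _
  | add x y _ _ hx hy => rw [mul_add]; exact Submodule.add_mem _ hx hy
  | smul c x _ hx => rw [mul_smul_comm]; exact Submodule.smul_mem _ _ hx

lemma b_mul_mem_lam (θ b : R) {D B N : ℕ} (g : ℕ → Polynomial F)
    (hg : ∀ i < D, (g i).natDegree ≤ N)
    (hb : b ^ D = ∑ i ∈ Finset.range D, Polynomial.aeval θ (g i) * b ^ i) {x : R}
    (hx : x ∈ lam F θ b D B) : b * x ∈ lam F θ b D (B + N) := by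
  induction hx using Submodule.span_induction with
  | mem x hx =>
    obtain ⟨⟨i, r⟩, rfl⟩ := hx
    dsimp only
    rw [← mul_assoc, ← pow_succ']
    by_cases hi : (i : ℕ) + 1 < D
    · exact mem_lam θ b hi (by omega)
    · have hi' : (i : ℕ) + 1 = D := by omega
      rw [hi', hb, Finset.sum_mul]
      refine Submodule.sum_mem _ fun k hk => ?_
      have hk' := Finset.mem_range.1 hk
      have h1 := aeval_mul_mem_lam θ b (g k) (mem_lam (F := F) θ b hk' r.2)
      rw [← mul_assoc] at h1
      exact lam_mono θ b D (by have := hg k hk'; omega) h1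
  | zero => rw [mul_zero]; exact Submodule.zero_mem _
  | add x y _ _ hx hy => rw [mul_add]; exact Submodule.add_mem _ hx hy
  | smul c x _ hx => rw [mul_smul_comm]; exact Submodule.smul_mem _ _ hx

lemma b_pow_mul_mem_lam (θ b : R) {D B N : ℕ} (g : ℕ → Polynomial F)
    (hg : ∀ i < D, (g i).natDegree ≤ N)
    (hb : b ^ D = ∑ i ∈ Finset.range D, Polynomial.aeval θ (g i) * b ^ i) {x : R}
    (hx : x ∈ lam F θ b D B) (l : ℕ) : b ^ l * x ∈ lam F θ b D (B + N * l) := by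
  induction l with
  | zero => simpa using hx
  | succ l ih =>
    rw [pow_succ', mul_assoc, mul_add, mul_one, ← add_assoc]
    exact b_mul_mem_lam θ b g hg hb ih

/-- More unknowns than equations: a nontrivial relation. -/
lemma exists_relation {I : Type} [Fintype I] {V E : ℕ} (Λ : Fin V → Submodule F R)
    [∀ j, FiniteDimensional F (Λ j)] (w : I → Fin V → Fin E → R)
    (hw : ∀ α j e, w α j e ∈ Λ j)
    (hcard : ∑ j, E * Module.finrank F (Λ j) < Fintype.card I) :
    ∃ y : I → F, y ≠ 0 ∧ ∀ j e, ∑ α, algebraMap F R (y α) * w α j e = 0 := by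
  let w' : I → (∀ j : Fin V, Fin E → Λ j) := fun α j e => ⟨w α j e, hw α j e⟩
  have h1 : ¬ LinearIndependent F w' := by
    intro h
    have h2 := h.fintype_card_le_finrank
    rw [Module.finrank_pi_fintype] at h2
    simp only [Module.finrank_pi_fintype, Finset.sum_const, Finset.card_univ, Fintype.card_fin,
      smul_eq_mul] at h2
    omega
  obtain ⟨y, hy, i, hi⟩ := Fintype.not_linearIndependent_iff.1 h1
  refine ⟨y, fun h => hi (congrFun h i), fun j e => ?_⟩
  have h2 := congrArg (fun f => ((f j e : Λ j) : R)) hy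
  simpa [w', Algebra.smul_def] using h2

end Siegel

section Aux

/-- Index set of the coefficients of the auxiliary function. -/
abbrev Idx (D N Q h : ℕ) := Fin 4 × Fin D × Fin N × Fin Q × Fin h

/-- The coefficient of `t ^ κ` in the polynomial `P_i` of the auxiliary function: a combination over
`𝔽_q` of the elements `b ^ (l Q) θ ^ (x Q + r)`. With `Q = q ^ V` this is a sum of terms
`θ ^ r z_r ^ Q`, where `z_r` is a combination of the elements `b ^ l θ ^ x`. -/
def pco {D N Q h : ℕ} (b : Kinf Fq) (y : Idx D N Q h → Fq) (i : Fin 4) (κ : Fin h) : Kinf Fq :=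
  ∑ l : Fin D, ∑ x : Fin N, ∑ r : Fin Q, algebraMap Fq (Kinf Fq) (y (i, l, x, r, κ)) *
    (b ^ ((l : ℕ) * Q) * theta Fq ^ ((x : ℕ) * Q + r))

/-- The value `P_i(z)`. -/
def pval {D N Q h : ℕ} (b : Kinf Fq) (y : Idx D N Q h → Fq) (i : Fin 4) (z : Kinf Fq) : Kinf Fq :=
  ∑ κ : Fin h, pco b y i κ * z ^ (κ : ℕ)

/-- The coefficients of the three linear conditions imposed on the values of
`P_0, P_1, P_2, P_3` at `θ ^ (q ^ j)`; these polynomials multiply `1, f₁, f₁₁, f₂`. -/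
def cond (a : Polynomial Fq) (b : Kinf Fq) (n j : ℕ) : Fin 3 → Fin 4 → Kinf Fq :=
  ![![0, 1, -rho Fq (uP Fq n) ^ 𝔮 ^ j, 0],
    ![0, 0, b ^ 𝔮 ^ j, rho Fq a ^ 𝔮 ^ j],
    ![rho Fq a ^ 𝔮 ^ j, 0, b ^ 𝔮 ^ j * rho Fq (vP Fq n) ^ 𝔮 ^ j
      - rho Fq a ^ 𝔮 ^ j * rho Fq (zP Fq n) ^ 𝔮 ^ j, 0]]

lemma rho_pow_mul_mem {b x : Kinf Fq} {D B : ℕ} (p : Polynomial Fq) {J M : ℕ}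
    (hM : p.natDegree * J ≤ M) (hx : x ∈ lam Fq (theta Fq) b D B) :
    rho Fq p ^ J * x ∈ lam Fq (theta Fq) b D (B + M) := by
  rw [← map_pow, rho_apply]
  refine lam_mono _ _ _ ?_ (aeval_mul_mem_lam (theta Fq) b (p ^ J) hx)
  rw [Polynomial.natDegree_pow]
  nlinarith

lemma cond_mul_mem {a : Polynomial Fq} {b x : Kinf Fq} {D B N n j : ℕ} (g : ℕ → Polynomial Fq)
    (hg : ∀ i < D, (g i).natDegree ≤ N)
    (hb : b ^ D = ∑ i ∈ Finset.range D, rho Fq (g i) * b ^ i)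
    (hx : x ∈ lam Fq (theta Fq) b D B) (e : Fin 3) (i : Fin 4) :
    cond a b n j e i * x ∈ lam Fq (theta Fq) b D (B + (a.natDegree + N + 4) * 𝔮 ^ (n + j)) := by
  have hJ : 𝔮 ^ j ≤ 𝔮 ^ (n + j) := Nat.pow_le_pow_right card_pos (by omega)
  have hnj : 𝔮 ^ n * 𝔮 ^ j = 𝔮 ^ (n + j) := (pow_add _ _ _).symm
  set Q := 𝔮 ^ (n + j) with hQ
  have ha {x : Kinf Fq} {B : ℕ} (hx : x ∈ lam Fq (theta Fq) b D B) :
      rho Fq a ^ 𝔮 ^ j * x ∈ lam Fq (theta Fq) b D (B + a.natDegree * Q) :=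
    rho_pow_mul_mem a (Nat.mul_le_mul_left _ hJ) hx
  have hb' {x : Kinf Fq} {B : ℕ} (hx : x ∈ lam Fq (theta Fq) b D B) :
      b ^ 𝔮 ^ j * x ∈ lam Fq (theta Fq) b D (B + N * Q) :=
    lam_mono _ _ _ (by gcongr) (b_pow_mul_mem_lam (theta Fq) b g hg hb hx (𝔮 ^ j))
  have h4 {x : Kinf Fq} {B : ℕ} (p : Polynomial Fq) (hp : p.natDegree ≤ 4 * 𝔮 ^ n)
      (hx : x ∈ lam Fq (theta Fq) b D B) :
      rho Fq p ^ 𝔮 ^ j * x ∈ lam Fq (theta Fq) b D (B + 4 * Q) := by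
    refine rho_pow_mul_mem p ?_ hx
    rw [← hnj, ← mul_assoc]
    exact Nat.mul_le_mul_right _ hp
  have hu := natDegree_uP (Fq := Fq) n
  have e1 : (a.natDegree + N + 4) * Q = a.natDegree * Q + N * Q + 4 * Q := by ring
  rw [e1]
  have z0 (B : ℕ) : (0 : Kinf Fq) * x ∈ lam Fq (theta Fq) b D B := by
    rw [zero_mul]; exact Submodule.zero_mem _
  fin_cases e <;> fin_cases i
  · exact z0 _
  · change (1 : Kinf Fq) * x ∈ _
    rw [one_mul]
    exact lam_mono _ _ _ (by omega) hx
  · change -rho Fq (uP Fq n) ^ 𝔮 ^ j * x ∈ _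
    rw [neg_mul]
    exact Submodule.neg_mem _ (lam_mono _ _ _ (by omega) (h4 (uP Fq n) (by omega) hx))
  · exact z0 _
  · exact z0 _
  · exact z0 _
  · exact lam_mono _ _ _ (by omega) (hb' hx)
  · exact lam_mono _ _ _ (by omega) (ha hx)
  · exact lam_mono _ _ _ (by omega) (ha hx)
  · exact z0 _
  · change (b ^ 𝔮 ^ j * rho Fq (vP Fq n) ^ 𝔮 ^ j
      - rho Fq a ^ 𝔮 ^ j * rho Fq (zP Fq n) ^ 𝔮 ^ j) * x ∈ _
    rw [sub_mul, mul_assoc, mul_assoc]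
    refine Submodule.sub_mem _ ?_ ?_
    · exact lam_mono _ _ _ (by omega) (hb' (h4 _ (natDegree_vP n) hx))
    · exact lam_mono _ _ _ (by omega) (ha (h4 _ (natDegree_zP n) hx))
  · exact z0 _

lemma monomial_mem {b : Kinf Fq} {D N Q M : ℕ} (g : ℕ → Polynomial Fq)
    (hg : ∀ i < D, (g i).natDegree ≤ N)
    (hb : b ^ D = ∑ i ∈ Finset.range D, rho Fq (g i) * b ^ i) (hD : 0 < D) (l : ℕ) :
    b ^ (l * Q) * theta Fq ^ M ∈ lam Fq (theta Fq) b D (1 + M + N * (l * Q)) := by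
  refine b_pow_mul_mem_lam (theta Fq) b g hg hb ?_ (l * Q)
  have := mem_lam (F := Fq) (theta Fq) b (i := 0) (r := M) (B := 1 + M) hD (by omega)
  rwa [pow_zero, one_mul] at this

lemma sum_pow_le (V : ℕ) : ∑ j ∈ Finset.range V, 𝔮 ^ j ≤ 𝔮 ^ V := by
  induction V with
  | zero => simp
  | succ V ih =>
    rw [Finset.sum_range_succ]
    have := two_mul_pow_le (Fq := Fq) V
    omega

/-- Existence of a nontrivial auxiliary function satisfying the conditions at all
`θ ^ (q ^ j)`, `j < V = 7 m`. -/
lemma exists_aux {a : Polynomial Fq} {b : Kinf Fq} {D N : ℕ} (g : ℕ → Polynomial Fq)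
    (hg : ∀ i < D, (g i).natDegree ≤ N)
    (hb : b ^ D = ∑ i ∈ Finset.range D, rho Fq (g i) * b ^ i) (hD : 0 < D) (m : ℕ) (hm : 0 < m)
    (C Y : ℕ) (hC : C = N * D + a.natDegree + 5) (hY : Y = 7 * C + 7) :
    ∃ y : Idx D Y (𝔮 ^ (7 * m)) (6 * m) → Fq, y ≠ 0 ∧ ∀ j < 7 * m, ∀ e,
      ∑ i, cond a b (7 * m - j) j e i * pval b y i (theta Fq ^ 𝔮 ^ j) = 0 := by
  set V := 7 * m with hV
  set Q := 𝔮 ^ V with hQ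
  have hQ0 : 0 < Q := pow_pos card_pos _
  let w : Idx D Y Q (6 * m) → Fin V → Fin 3 → Kinf Fq := fun α j e =>
    cond a b (V - j) j e α.1 * (b ^ ((α.2.1 : ℕ) * Q) *
      theta Fq ^ ((α.2.2.1 : ℕ) * Q + α.2.2.2.1 + 𝔮 ^ (j : ℕ) * α.2.2.2.2))
  obtain ⟨y, hy, hrel⟩ := exists_relation (F := Fq)
    (fun j : Fin V => lam Fq (theta Fq) b D ((Y + C) * Q + 6 * m * 𝔮 ^ (j : ℕ))) w (by
      rintro ⟨i, l, x, r, κ⟩ j e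
      have h1 := cond_mul_mem (a := a) (n := V - j) (j := j) g hg hb
        (monomial_mem (Q := Q) (M := (x : ℕ) * Q + r + 𝔮 ^ (j : ℕ) * κ) g hg hb hD l) e i
      refine lam_mono _ _ _ ?_ h1
      rw [Nat.sub_add_cancel j.2.le, ← hQ]
      have h2 : 𝔮 ^ (j : ℕ) * (κ : ℕ) ≤ 6 * m * 𝔮 ^ (j : ℕ) := by
        rw [mul_comm]; exact Nat.mul_le_mul_right _ κ.2.le
      have h3 : (x : ℕ) * Q + Q ≤ Y * Q := by
        have := Nat.mul_le_mul_right Q (Nat.succ_le_of_lt x.2)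
        rwa [Nat.succ_mul] at this
      have h4 : N * ((l : ℕ) * Q) + N * Q ≤ N * D * Q := by
        have := Nat.mul_le_mul_left N (Nat.mul_le_mul_right Q (Nat.succ_le_of_lt l.2))
        rw [Nat.succ_mul, mul_add] at this
        rwa [mul_assoc]
      have h5 : (Y + C) * Q = Y * Q + (N * D * Q + a.natDegree * Q + 5 * Q) := by
        rw [hC]; ring
      have h6 : (a.natDegree + N + 4) * Q = a.natDegree * Q + N * Q + 4 * Q := by ring
      have h7 := r.2
      omega) (by
      have h1 (j : Fin V) : 3 * Module.finrank Fq (lam Fq (theta Fq) b D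
          ((Y + C) * Q + 6 * m * 𝔮 ^ (j : ℕ))) ≤
          3 * (D * ((Y + C) * Q)) + 3 * (D * (6 * m)) * 𝔮 ^ (j : ℕ) := by
        have := finrank_lam_le (F := Fq) (theta Fq) b D ((Y + C) * Q + 6 * m * 𝔮 ^ (j : ℕ))
        calc _ ≤ 3 * (D * ((Y + C) * Q + 6 * m * 𝔮 ^ (j : ℕ))) := Nat.mul_le_mul_left _ this
          _ = _ := by ring
      refine lt_of_le_of_lt (Finset.sum_le_sum fun j _ => h1 j) ?_
      rw [Finset.sum_add_distrib, ← Finset.mul_sum _ _ (3 * (D * (6 * m))),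
        Fin.sum_univ_eq_sum_range (fun j => 𝔮 ^ j)]
      have h2 := Nat.mul_le_mul_left (3 * (D * (6 * m))) (sum_pow_le (Fq := Fq) V)
      refine lt_of_le_of_lt (Nat.add_le_add_left h2 _) ?_
      simp only [Finset.sum_const, Finset.card_univ, Fintype.card_fin, Fintype.card_prod,
        smul_eq_mul]
      rw [← hQ, hV, hY]
      have h3 : 0 < D * Q * m := Nat.mul_pos (Nat.mul_pos hD hQ0) hm
      nlinarith)
  refine ⟨y, hy, fun j hj e => ?_⟩
  have h1 := hrel ⟨j, hj⟩ e
  rw [← h1, Fintype.sum_prod_type]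
  refine Finset.sum_congr rfl fun i _ => ?_
  simp only [Fintype.sum_prod_type, pval, pco, Finset.mul_sum, Finset.sum_mul, w]
  rw [Finset.sum_comm]
  refine Finset.sum_congr rfl fun l _ => ?_
  rw [Finset.sum_comm]
  refine Finset.sum_congr rfl fun x _ => ?_
  rw [Finset.sum_comm]
  refine Finset.sum_congr rfl fun r _ => Finset.sum_congr rfl fun κ _ => ?_
  rw [pow_add (theta Fq) (_ + _), pow_mul (theta Fq) (𝔮 ^ j)]
  ring

end Aux

/-! ### Smallness of the auxiliary function -/

section Schwarz

open PowerSeries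

variable (Fq) in
/-- The power series `1, φ₁, φ₁₁, φ₂`. -/
def phv : Fin 4 → Fq⟦X⟧⟦X⟧ := ![1, phi1 Fq, phi11 Fq, phi2 Fq]

lemma kap_phv (i : Fin 4) : kap Fq 1 (phv Fq i) = fv Fq i := by
  fin_cases i
  · exact map_one _
  · rfl
  · rfl
  · rfl

/-- The conditions on the values of the polynomials force the vanishing of the auxiliary
function. -/
lemma vanish {V j : ℕ} (hj : j < V) {a : Polynomial Fq} {b : Kinf Fq} (ha : a ≠ 0)
    (hab : rho Fq a * mzv Fq 2 ![1, 1] = b * mzv Fq 1 ![2]) (A : Fin 4 → Kinf Fq)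
    (hA : ∀ e, ∑ i, cond a b (V - j) j e i * A i = 0) :
    ∑ i, A i * eta hj 0 (phv Fq i) = 0 := by
  obtain ⟨m, rfl⟩ : ∃ m, V = m + j := ⟨V - j, by omega⟩
  rw [Nat.add_sub_cancel] at hA
  have h0 := hA 0
  have h1 := hA 1
  have h2 := hA 2
  have hv := value_relation j m hj a b hab
  simp only [Fin.sum_univ_four, cond, phv, Matrix.cons_val, Matrix.cons_val_zero,
    Matrix.cons_val_one, map_one] at h0 h1 h2 ⊢
  have hne : rho Fq a ^ 𝔮 ^ j ≠ 0 :=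
    pow_ne_zero _ ((map_ne_zero_iff _ rho_injective).2 ha)
  refine (mul_eq_zero.1 (?_ : rho Fq a ^ 𝔮 ^ j * _ = 0)).resolve_left hne
  linear_combination A 2 * hv + h2 + eta hj 0 (phi2 Fq) * h1 +
    rho Fq a ^ 𝔮 ^ j * eta hj 0 (phi1 Fq) * h0

lemma pt_inj {V i j : ℕ} (hi : i < V) (hj : j < V) (h : pt Fq V i = pt Fq V j) : i = j := by
  have h1 := congrArg PowerSeries.order h
  rw [pt, pt, PowerSeries.order_X_pow, PowerSeries.order_X_pow] at h1
  have h2 : 𝔮 ^ V - 𝔮 ^ i = 𝔮 ^ V - 𝔮 ^ j := by exact_mod_cast h1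
  have h3 := card_pow_lt (Fq := Fq) hi
  have h4 := card_pow_lt (Fq := Fq) hj
  exact Nat.pow_right_injective (Fintype.one_lt_card (α := Fq)) (by simp only; omega)

lemma kap_sub_pt {V j : ℕ} (hj : j < V) : kap Fq (𝔮 ^ V) (X - C (pt Fq V j)) =
    C (iota Fq (pt Fq V j)) * kap Fq (𝔮 ^ j) (X - 1) := by
  rw [map_sub, map_sub, kap_C, kap_X, kap_X, ← pt_mul hj, map_one, map_mul, map_mul]
  ring

lemma kap_prod (V n : ℕ) (hn : n ≤ V) : ∃ H : (Kinf Fq)⟦X⟧, (∀ k, DLe (coeff k H) 0) ∧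
    kap Fq (𝔮 ^ V) (∏ j ∈ Finset.range n, (X - C (pt Fq V j))) =
      C (iota Fq X ^ (∑ j ∈ Finset.range n, (𝔮 ^ V - 𝔮 ^ j))) * H := by
  induction n with
  | zero =>
    refine ⟨1, fun k => ?_, by simp⟩
    rw [coeff_one]
    split_ifs
    · exact dle_one
    · exact dle_zero _
  | succ n ih =>
    obtain ⟨H, hH, h⟩ := ih (by omega)
    refine ⟨H * kap Fq (𝔮 ^ n) (X - 1), fun k => ?_, ?_⟩
    · have h2 := dle_coeff_mul hH (dle_coeff_kap (𝔮 ^ n) (X - 1)) k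
      rwa [add_zero] at h2
    · have e : iota Fq (pt Fq V n) = iota Fq X ^ (𝔮 ^ V - 𝔮 ^ n) := by rw [pt, map_pow]
      rw [Finset.prod_range_succ, map_mul (kap Fq (𝔮 ^ V)), h, kap_sub_pt (by omega), e,
        Finset.sum_range_succ, pow_add, map_mul C, mul_mul_mul_comm]

lemma coeff_kap_map_frn (V : ℕ) (φ : Fq⟦X⟧⟦X⟧) :
    kap Fq (𝔮 ^ V) (PowerSeries.map (frn Fq _ V) φ) =
      PowerSeries.map (frn Fq _ V) (kap Fq 1 φ) := by
  ext1 k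
  simp only [coeff_kap, coeff_map, frn_apply]
  rw [← map_pow (iota Fq), mul_pow, pow_one, ← pow_mul, ← pow_mul, mul_comm k]

/-- The auxiliary function `∑ P_i f_i^{(V)}`, where `(V)` raises the coefficients of a power series
in `t` to the power `q ^ V`. -/
def aux {D N Q h : ℕ} (V : ℕ) (b : Kinf Fq) (y : Idx D N Q h → Fq) : (Kinf Fq)⟦X⟧ :=
  ∑ i, ∑ κ : Fin h, C (pco b y i κ) * X ^ (κ : ℕ) * PowerSeries.map (frn Fq _ V) (fv Fq i)

lemma dle_pco {D N Q h B : ℕ} {b : Kinf Fq} (hb : DLe b B) (y : Idx D N Q h → Fq) (i : Fin 4)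
    (κ : Fin h) : DLe (pco b y i κ) (((B * D + N) * Q : ℕ) : ℤ) := by
  refine dle_sum _ _ fun l _ => dle_sum _ _ fun x _ => dle_sum _ _ fun r _ => ?_
  refine ((dle_algebraMap _).mul ((hb.pow _).mul (dle_theta_pow _))).mono ?_
  have h1 : (l : ℕ) * Q * B ≤ B * D * Q := by
    have := Nat.mul_le_mul_right (Q * B) l.2.le
    linarith [this, show D * (Q * B) = B * D * Q by ring, show (l : ℕ) * (Q * B) = l * Q * B by ring]
  have h2 : (x : ℕ) * Q + r ≤ N * Q := by
    have := Nat.mul_le_mul_right Q (Nat.succ_le_of_lt x.2)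
    rw [Nat.succ_mul] at this
    have := r.2
    omega
  have h3 : ((l : ℕ) * Q * B) + ((x : ℕ) * Q + r) ≤ (B * D + N) * Q := by
    rw [add_mul]; omega
  have h4 : (((l : ℕ) * Q * B + ((x : ℕ) * Q + r) : ℕ) : ℤ) ≤ (((B * D + N) * Q : ℕ) : ℤ) := by
    exact_mod_cast h3
  push_cast at h4 ⊢
  linarith

lemma dle_of_theta_inv_mul {x : Kinf Fq} {n : ℕ} {E : ℤ} (h : DLe (iota Fq X ^ n * x) E) :
    DLe x (n + E) := by
  have h1 := (dle_theta_pow (Fq := Fq) n).mul h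
  rwa [← mul_assoc, ← mul_pow, mul_comm (theta Fq), iota_X_mul_theta, one_pow, one_mul] at h1

/-- The zeros of the auxiliary function at the points `θ ^ (q ^ j)` make it small. -/
lemma dle_aux {D N h V B : ℕ} {b : Kinf Fq} (hb : DLe b B) {Q : ℕ} (hQ : Q = 𝔮 ^ V)
    (y : Idx D N Q h → Fq) (hy : ∀ j (hj : j < V),
      ∑ i, pval b y i (theta Fq ^ 𝔮 ^ j) * eta hj 0 (phv Fq i) = 0) (k : ℕ) :
    DLe (coeff k (aux V b y)) (((B * D + N + h : ℕ) - V + 1 : ℤ) * (Q : ℕ)) := by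
  have hfr (φ : Fq⟦X⟧⟦X⟧) : kap Fq Q (PowerSeries.map (frn Fq _ V) φ) =
      PowerSeries.map (frn Fq _ V) (kap Fq 1 φ) := by
    rw [hQ, coeff_kap_map_frn]
  set Y := B * D + N + h with hY
  have hπ (i : Fin 4) (κ : Fin h) : ∃ π, iota Fq π = iota Fq X ^ ((Y - κ) * Q) * pco b y i κ := by
    refine exists_iota ?_
    rw [iota_X]
    refine ((dle_theta_inv_pow _).mul (dle_pco hb y i κ)).mono ?_
    have h1 : (B * D + N) * Q ≤ (Y - κ) * Q := Nat.mul_le_mul_right _ (by have := κ.2; omega)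
    have h2 : (((B * D + N) * Q : ℕ) : ℤ) ≤ (((Y - κ) * Q : ℕ) : ℤ) := by exact_mod_cast h1
    linarith
  choose π hπ using hπ
  have hexp (κ : Fin h) : (Y - κ) * Q + Q * κ = Y * Q := by
    rw [mul_comm Q, ← add_mul, Nat.sub_add_cancel]
    have := κ.2
    omega
  let S : Fq⟦X⟧⟦X⟧ := ∑ i, ∑ κ : Fin h,
    C (π i κ) * X ^ (κ : ℕ) * PowerSeries.map (frn Fq _ V) (phv Fq i)
  have hkap : kap Fq Q S = C (iota Fq X ^ (Y * Q)) * aux V b y := by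
    simp only [S, aux, map_sum, Finset.mul_sum]
    refine Finset.sum_congr rfl fun i _ => Finset.sum_congr rfl fun κ _ => ?_
    rw [map_mul, map_mul, kap_C, map_pow, kap_X, hfr, kap_phv, hπ, mul_pow,
      ← map_pow C, map_pow (iota Fq), ← pow_mul, ← hexp κ, pow_add, map_mul C, map_mul C]
    ring
  have hev (j : ℕ) (hj : j < V) : evHom (pt Fq V j) (X_dvd_pt hj) S = 0 := by
    apply iota_injective
    have h1 : iota Fq (pt Fq V j) = iota Fq X ^ Q * theta Fq ^ 𝔮 ^ j := by
      have h2 := congrArg (iota Fq) (pt_mul (Fq := Fq) hj)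
      rw [map_mul, map_pow, map_pow] at h2
      rw [hQ, ← h2, mul_assoc, ← mul_pow, iota_X_mul_theta, one_pow, mul_one]
    have h3 : iota Fq (evHom (pt Fq V j) (X_dvd_pt hj) S) = iota Fq X ^ (Y * Q) *
        ∑ i, pval b y i (theta Fq ^ 𝔮 ^ j) * eta hj 0 (phv Fq i) := by
      simp only [S, pval, map_sum, Finset.mul_sum, Finset.sum_mul]
      refine Finset.sum_congr rfl fun i _ => Finset.sum_congr rfl fun κ _ => ?_
      simp only [map_mul, map_pow, evHom_C, evHom_X]
      rw [hπ, h1, ← hexp κ, mul_pow, ← pow_mul, pow_add]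
      change _ * eta hj 0 (phv Fq i) = _
      ring
    rw [h3, hy j hj, mul_zero, map_zero]
  obtain ⟨G, hG⟩ := prod_dvd_of_evHom_eq_zero (pt Fq V) V (fun j hj => X_dvd_pt hj)
    (fun i hi j hj h => pt_inj hi hj h) S hev
  obtain ⟨H, hH, hprod⟩ := kap_prod (Fq := Fq) V V le_rfl
  rw [← hQ] at hprod
  have h4 := congrArg (coeff k) hkap
  rw [hG, map_mul, hprod, mul_assoc, coeff_C_mul, coeff_C_mul] at h4
  have h5 : DLe (coeff k (H * kap Fq Q G)) 0 := by
    have h6 := dle_coeff_mul hH (dle_coeff_kap Q G) k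
    rwa [add_zero] at h6
  have h6 := (dle_theta_inv_pow (Fq := Fq) (∑ j ∈ Finset.range V, (Q - 𝔮 ^ j))).mul h5
  rw [← iota_X, h4] at h6
  refine (dle_of_theta_inv_mul h6).mono ?_
  have h7 : V * Q ≤ ∑ j ∈ Finset.range V, (Q - 𝔮 ^ j) + Q := by
    have h8 : ∑ j ∈ Finset.range V, (Q - 𝔮 ^ j) + ∑ j ∈ Finset.range V, 𝔮 ^ j = V * Q := by
      rw [← Finset.sum_add_distrib, Finset.sum_congr rfl (fun j hj => Nat.sub_add_cancel
        (hQ ▸ (card_pow_lt (Fq := Fq) (Finset.mem_range.1 hj)).le))]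
      simp
    have := sum_pow_le (Fq := Fq) V
    rw [← hQ] at this
    omega
  have h9 : ((V * Q : ℕ) : ℤ) ≤ ((∑ j ∈ Finset.range V, (Q - 𝔮 ^ j) : ℕ) : ℤ) + Q := by
    exact_mod_cast h7
  rw [Nat.cast_mul] at h9 ⊢
  linarith

end Schwarz

/-! ### Separation of the components and the contradiction -/

section Final

open PowerSeries

/-- The terms `θ ^ r z_r ^ Q`, `r < Q`, cannot cancel, because their degrees are distinct modulo `Q`;
hence a bound for the sum bounds every term. -/
lemma dle_separate {Q : ℕ} (z : Fin Q → Kinf Fq) (W : ℤ)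
    (h : DLe (∑ r : Fin Q, theta Fq ^ (r : ℕ) * z r ^ Q) (W * Q)) (r : Fin Q) : DLe (z r) W := by
  have hQ : 0 < Q := r.pos
  by_contra hr
  have hv (r : Fin Q) (e : ℤ) (he : Valued.v (z r) = WithZero.exp e) :
      Valued.v (theta Fq ^ (r : ℕ) * z r ^ Q) = WithZero.exp (r + Q * e) := by
    rw [Valuation.map_mul, v_theta_pow, Valuation.map_pow, he, ← WithZero.exp_nsmul, nsmul_eq_mul,
      WithZero.exp_add]
  have hex (r : Fin Q) (h0 : z r ≠ 0) : ∃ e : ℤ, Valued.v (z r) = WithZero.exp e :=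
    ⟨_, (WithZero.exp_log ((Valuation.ne_zero_iff _).2 h0)).symm⟩
  obtain ⟨r₀, -, hmax⟩ := Finset.exists_max_image Finset.univ
    (fun r : Fin Q => Valued.v (theta Fq ^ (r : ℕ) * z r ^ Q)) ⟨r, Finset.mem_univ r⟩
  have hzr : z r ≠ 0 := by
    intro h0
    rw [h0] at hr
    exact hr (dle_zero _)
  obtain ⟨e, he⟩ := hex r hzr
  have heW : W < e := by
    rw [DLe, he, WithZero.exp_le_exp] at hr
    omega
  have hbig : WithZero.exp (W * Q) < Valued.v (theta Fq ^ (r₀ : ℕ) * z r₀ ^ Q) := by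
    refine lt_of_lt_of_le ?_ (hmax r (Finset.mem_univ r))
    rw [hv r e he, WithZero.exp_lt_exp]
    have : (Q : ℤ) * (W + 1) ≤ Q * e := mul_le_mul_of_nonneg_left (by omega) (by omega)
    have hQ' : (0 : ℤ) < Q := by exact_mod_cast hQ
    linarith
  have hne : Valued.v (theta Fq ^ (r₀ : ℕ) * z r₀ ^ Q) ≠ 0 := (zero_le.trans_lt hbig).ne'
  have hz0 : z r₀ ≠ 0 := by
    intro h0
    rw [h0, zero_pow hQ.ne', mul_zero, map_zero] at hne
    exact hne rfl
  obtain ⟨e₀, he₀⟩ := hex r₀ hz0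
  have hlt : Valued.v (∑ r ∈ Finset.univ.erase r₀, theta Fq ^ (r : ℕ) * z r ^ Q) <
      Valued.v (theta Fq ^ (r₀ : ℕ) * z r₀ ^ Q) := by
    refine Valuation.map_sum_lt _ hne fun r' hr' => ?_
    refine lt_of_le_of_ne (hmax r' (Finset.mem_univ _)) fun heq => ?_
    have hz' : z r' ≠ 0 := by
      intro h0
      rw [h0, zero_pow hQ.ne', mul_zero, map_zero] at heq
      exact hne heq.symm
    obtain ⟨e', he'⟩ := hex r' hz'
    rw [hv r' e' he', hv r₀ e₀ he₀, WithZero.exp_inj] at heq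
    refine (Finset.ne_of_mem_erase hr') (Fin.ext ?_)
    have h1 := congrArg (· % (Q : ℤ)) heq
    simp only [Int.add_mul_emod_self_left] at h1
    rw [Int.emod_eq_of_lt (by omega) (by exact_mod_cast r'.2),
      Int.emod_eq_of_lt (by omega) (by exact_mod_cast r₀.2)] at h1
    exact_mod_cast h1
  rw [DLe, ← Finset.add_sum_erase _ _ (Finset.mem_univ r₀),
    Valuation.map_add_eq_of_lt_left _ hlt] at h
  exact absurd hbig (not_lt.2 h)

lemma map_frn_yc (V : ℕ) (p : Polynomial Fq) :
    PowerSeries.map (frn Fq _ V) (yc Fq p) = yc Fq p := by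
  ext1 k
  rw [coeff_map, coeff_yc]
  induction V with
  | zero => rfl
  | succ V ih => rw [frn, RingHom.comp_apply, ih, fr_apply, algebraMap_pow_card]

/-- The polynomial in `t` attached to the coefficients with indices `(i, l, x, r, ·)`. -/
def ypoly {D N Q h : ℕ} (y : Idx D N Q h → Fq) (r : Fin Q) (α : Fin 4 × Fin D × Fin N) :
    Polynomial Fq :=
  ∑ κ : Fin h, Polynomial.C (y (α.1, α.2.1, α.2.2, r, κ)) * Polynomial.X ^ (κ : ℕ)

lemma yc_ypoly {D N Q h : ℕ} (y : Idx D N Q h → Fq) (r : Fin Q) (α : Fin 4 × Fin D × Fin N) :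
    yc Fq (ypoly y r α) = ∑ κ : Fin h,
      C (algebraMap Fq (Kinf Fq) (y (α.1, α.2.1, α.2.2, r, κ))) * X ^ (κ : ℕ) := by
  rw [ypoly, map_sum]
  refine Finset.sum_congr rfl fun κ _ => ?_
  have hC (c : Fq) : yc Fq (Polynomial.C c) = C (algebraMap Fq (Kinf Fq) c) := by
    rw [yc_eq_pc, Polynomial.map_C]; exact Polynomial.coe_C _
  have hX : yc Fq Polynomial.X = X := by
    rw [yc_eq_pc, Polynomial.map_X]; exact Polynomial.coe_X
  rw [map_mul, map_pow, hC, hX]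

lemma aux_eq {D N h V : ℕ} (b : Kinf Fq) (y : Idx D N (𝔮 ^ V) h → Fq) :
    aux V b y = ∑ r : Fin (𝔮 ^ V), C (theta Fq ^ (r : ℕ)) * PowerSeries.map (frn Fq _ V)
      (∑ α : Fin 4 × Fin D × Fin N, yc Fq (ypoly y r α) *
        (C (b ^ (α.2.1 : ℕ) * theta Fq ^ (α.2.2 : ℕ)) * fv Fq α.1)) := by
  have h1 (r : Fin (𝔮 ^ V)) (α : Fin 4 × Fin D × Fin N) :
      C (theta Fq ^ (r : ℕ)) * PowerSeries.map (frn Fq _ V) (yc Fq (ypoly y r α) *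
        (C (b ^ (α.2.1 : ℕ) * theta Fq ^ (α.2.2 : ℕ)) * fv Fq α.1)) =
      ∑ κ : Fin h, C (algebraMap Fq (Kinf Fq) (y (α.1, α.2.1, α.2.2, r, κ)) *
        (b ^ ((α.2.1 : ℕ) * 𝔮 ^ V) * theta Fq ^ ((α.2.2 : ℕ) * 𝔮 ^ V + r))) * X ^ (κ : ℕ) *
        PowerSeries.map (frn Fq _ V) (fv Fq α.1) := by
    rw [map_mul, map_mul, map_frn_yc, yc_ypoly, PowerSeries.map_C, frn_apply, Finset.sum_mul,
      Finset.mul_sum]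
    refine Finset.sum_congr rfl fun κ _ => ?_
    rw [mul_pow, ← pow_mul, ← pow_mul, pow_add, map_mul C, map_mul C, map_mul C, map_mul C]
    ring
  simp only [map_sum, Finset.mul_sum] at h1 ⊢
  simp only [h1, Fintype.sum_prod_type]
  rw [aux]
  conv_rhs => rw [Finset.sum_comm]
  refine Finset.sum_congr rfl fun i _ => ?_
  simp only [pco, map_sum, Finset.sum_mul]
  conv_lhs => rw [Finset.sum_comm]
  conv_rhs => rw [Finset.sum_comm]
  refine Finset.sum_congr rfl fun l _ => ?_
  conv_lhs => rw [Finset.sum_comm]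
  conv_rhs => rw [Finset.sum_comm]
  refine Finset.sum_congr rfl fun x _ => ?_
  rw [Finset.sum_comm]

/-- The ratio `ζ(1,1)/ζ(2) = b/a` cannot have `b` integral of degree `D` over the polynomials
in `θ`. -/
lemma no_relation (hq : 2 < 𝔮) (D : ℕ) (a : Polynomial Fq) (b : Kinf Fq) (g : ℕ → Polynomial Fq)
    (hD : 0 < D) (ha : a ≠ 0) (hab : rho Fq a * mzv Fq 2 ![1, 1] = b * mzv Fq 1 ![2])
    (hb : b ^ D = ∑ i ∈ Finset.range D, rho Fq (g i) * b ^ i)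
    (hind : ∀ y : ℕ → Polynomial Fq, ∑ i ∈ Finset.range D, rho Fq (y i) * b ^ i = 0 →
        ∀ i < D, y i = 0) : False := by
  obtain ⟨M, hg⟩ : ∃ M, ∀ i < D, (g i).natDegree ≤ M :=
    ⟨(Finset.range D).sup fun i => (g i).natDegree, fun i hi =>
      Finset.le_sup (f := fun i => (g i).natDegree) (Finset.mem_range.2 hi)⟩
  obtain ⟨B, hB⟩ := exists_dle b
  obtain ⟨c, hc⟩ : ∃ c, c = M * D + a.natDegree + 5 := ⟨_, rfl⟩
  obtain ⟨N, hN⟩ : ∃ N, N = 7 * c + 7 := ⟨_, rfl⟩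
  obtain ⟨T, hT⟩ := exists_lower_bound
    (fun α : Fin 4 × Fin D × Fin N =>
      C (b ^ (α.2.1 : ℕ) * theta Fq ^ (α.2.2 : ℕ)) * fv Fq α.1)
    (indep_family hq D N b hind)
  -- With `V = 7 m` zeros and polynomials of degree less than `6 m` in `t`, the auxiliary function has
  -- degree at most `(B D + N + 6 m - 7 m + 1) Q = -T Q` in `θ`.
  obtain ⟨m, hm⟩ : ∃ m, m = T + B * D + N + 1 := ⟨_, rfl⟩
  obtain ⟨y, hy0, hy⟩ := exists_aux (a := a) g hg hb hD m (by omega) c N hc hN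
  apply hy0
  have hsmall (k : ℕ) := dle_aux hB rfl y (fun j hj => vanish hj ha hab _ (hy j hj)) k
  have hzero (r : Fin (𝔮 ^ (7 * m))) : ypoly y r = 0 := by
    refine hT _ fun k => ?_
    have h1 := hsmall k
    rw [aux_eq, map_sum] at h1
    simp only [coeff_C_mul, coeff_map, frn_apply] at h1
    have h2 := dle_separate _ _ h1 r
    refine h2.mono ?_
    push_cast
    subst hm
    push_cast
    linarith
  ext1 ⟨i, l, x, r, κ⟩
  have h1 := congrArg (fun p => Polynomial.coeff p κ) (congrFun (hzero r) (i, l, x))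
  simp only [ypoly, Polynomial.finsetSum_coeff, Polynomial.coeff_C_mul, Polynomial.coeff_X_pow,
    Pi.zero_apply, Polynomial.coeff_zero] at h1
  rw [Finset.sum_eq_single κ] at h1
  · simpa using h1
  · intro κ' _ hκ
    rw [if_neg (fun h => hκ (Fin.ext h.symm)), mul_zero]
  · simp

end Final

end Zeta11

/-- If `q > 2`, then `ζ(1,1)` and `ζ(2)` are linearly independent over
`k̄`; that is, the `k̄`-subspace of `k̄_∞` they span has dimension `2`. -/
theorem zeta11_zeta2_linearIndependent (hq : 2 < Fintype.card Fq) :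
    LinearIndependent (kbar Fq)
      ![algebraMap (Kinf Fq) (KinfBar Fq) (mzv Fq 2 ![1, 1]),
        algebraMap (Kinf Fq) (KinfBar Fq) (mzv Fq 1 ![2])] ∧
    Module.rank (kbar Fq)
      (Submodule.span (kbar Fq)
        {algebraMap (Kinf Fq) (KinfBar Fq) (mzv Fq 2 ![1, 1]),
          algebraMap (Kinf Fq) (KinfBar Fq) (mzv Fq 1 ![2])}) = 2 := by
  have hli : LinearIndependent (kbar Fq)
      ![algebraMap (Kinf Fq) (KinfBar Fq) (mzv Fq 2 ![1, 1]),
        algebraMap (Kinf Fq) (KinfBar Fq) (mzv Fq 1 ![2])] := by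
    by_contra h
    obtain ⟨D, a, b, g, hD, ha, hbc, hb, hind⟩ := Zeta11.exists_integral _
      (Zeta11.exists_poly_of_isAlgebraic _ (Zeta11.isAlgebraic_of_not_linearIndependent h))
    refine Zeta11.no_relation hq D a b g hD ha ?_ hb hind
    rw [hbc, mul_assoc, div_mul_cancel₀ _ Zeta11.mzv2_ne_zero]
  exact ⟨hli, Zeta11.rank_span_eq_two hli⟩
end
end

section
/- If q = 2, then the k̄-vector subspace of k̄_∞ spanned by ζ(1,1) and ζ(2) has dimension 1; indeed ζ(2) ≠ 0 and ζ(1,1) = ζ(2)/(θ² + θ). -/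
/-!
Let `q = 2`, `[i] = θ^{2^i} + θ` and `ℓ_d = [1][2]⋯[d]`. The power sum over monic polynomials
`S_d(1) = ∑ 1/a` (`a` monic of degree `d`) equals `1/ℓ_d` by Carlitz (`sum_inv_monicOfDeg`). This
comes from the additive polynomial `e_d(z) = ∏_{deg a < d} (z + a)`: its derivative is constant,
so `∑_{deg a < d} 1/(z + a) = e_d'/e_d(z)` (`sum_inv_add`), and `z = θ^d` together with
`e_{d+1}(θ^{d+1}) = [d+1] e_d(θ^d)²` (`carlitzE_theta`) gives the value.

In characteristic two `S_d(2) = S_d(1)²`, hence `ζ(2) = ∑_d 1/ℓ_d²` (`hasSum_mzv_two`). On the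
other hand `ζ(1,1) = ∑_d S_d(1) S_{<d}(1)`, and `S_{<d+1}(1) = ∑_{i ≤ d} 1/ℓ_i` has the closed form
`ℓ_{d+1} / ((θ² + θ) ℓ_d²)` (`sum_inv_ell`), because `[d+2] + [d+1]² = [1]`. So the term of index
`d + 1` of `ζ(1,1)` is `1/((θ² + θ) ℓ_d²)`, the term of index `0` is zero, and
`ζ(1,1) = ζ(2)/(θ² + θ)` (`hasSum_mzv_one_one`). Grouping the sums by degree is legitimate because
`k_∞` is complete and nonarchimedean (`hasSum_fiberwise`).

`ζ(2) ≠ 0` since its leading term is `1` and all others have valuation `< 1`. The span is then the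
line through `ζ(2)`, because `θ² + θ` lies in `k̄`.
-/

/-!
Setting: `Fq` is a finite field with `q = Fintype.card Fq` elements and characteristic
`p = ringChar Fq`.  The field `k_∞ = 𝔽_q((1/θ))` is realized as `Kinf Fq`, the field of
formal Laurent series over `Fq` in the variable `u = θ⁻¹`; thus `theta Fq = u⁻¹` plays
the role of `θ` (it is the single Hahn series supported in degree `-1`), and polynomials
in `θ` are evaluated in `Kinf Fq` via `Polynomial.aeval (theta Fq)`.  `KinfBar Fq` is a
fixed algebraic closure `k̄_∞` of `k_∞`.
-/

set_option synthInstance.maxHeartbeats 1000000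
set_option maxHeartbeats 1000000

noncomputable section

variable (Fq : Type) [Field Fq] [Fintype Fq]

/-! ### Carlitz identities in characteristic two -/

/-- The Carlitz polynomial `e_d(z) = ∏_{deg a < d} (z + a(θ))` for `q = 2`, defined through its
recursion `e_{d+1}(z) = e_d(z)² + e_d(θ^d) e_d(z)`. -/
def carlitzE {K : Type*} [Field K] (θ : K) : ℕ → K → K
  | 0, z => z
  | d + 1, z => carlitzE θ d z ^ 2 + carlitzE θ d (θ ^ d) * carlitzE θ d z

/-- The bracket `[d] = θ^{2^d} - θ`, written with a plus sign because it is used in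
characteristic two. -/
def bracket {K : Type*} [Field K] (θ : K) (d : ℕ) : K := θ ^ (2 ^ d) + θ

/-- `ℓ_d = [1][2]⋯[d]`. -/
def ell {K : Type*} [Field K] (θ : K) (d : ℕ) : K := ∏ i ∈ Finset.range d, bracket θ (i + 1)

lemma ell_ne_zero {K : Type*} [Field K] (θ : K) (hb : ∀ d, bracket θ (d + 1) ≠ 0) (d : ℕ) : ell θ d ≠ 0 :=
  Finset.prod_ne_zero_iff.2 fun i _ => hb i

lemma ell_succ {K : Type*} [Field K] (θ : K) (d : ℕ) : ell θ (d + 1) = ell θ d * bracket θ (d + 1) := by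
  simp [ell, Finset.prod_range_succ]

section CharTwoField

variable {K : Type*} [Field K] [CharP K 2] (θ : K)

lemma carlitzE_add (d : ℕ) (x y : K) :
    carlitzE θ d (x + y) = carlitzE θ d x + carlitzE θ d y := by
  have h2 : (2 : K) = 0 := CharTwo.two_eq_zero
  induction d with
  | zero => rfl
  | succ d ih =>
    simp only [carlitzE, ih]
    linear_combination (carlitzE θ d x * carlitzE θ d y) * h2

lemma bracket_sq (d : ℕ) : bracket θ d ^ 2 = bracket θ (d + 1) + θ ^ 2 + θ := by
  have h2 : (2 : K) = 0 := CharTwo.two_eq_zero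
  simp only [bracket, pow_succ, pow_mul]
  linear_combination (θ ^ (2 ^ d) * θ - θ) * h2

/-- The two Carlitz identities `e_{d+1}(θ^{d+1}) = [d+1] e_d(θ^d)²` and
`e_{d+1}(θz) = θ e_{d+1}(z) + [d+1] e_d(z)²`, which have to be proved by a common induction. -/
lemma carlitzE_theta (d : ℕ) :
    carlitzE θ (d + 1) (θ ^ (d + 1)) = bracket θ (d + 1) * carlitzE θ d (θ ^ d) ^ 2 ∧
    ∀ z, carlitzE θ (d + 1) (θ * z) =
      θ * carlitzE θ (d + 1) z + bracket θ (d + 1) * carlitzE θ d z ^ 2 := by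
  have h2 : (2 : K) = 0 := CharTwo.two_eq_zero
  -- evaluating the second identity at `z = θ^d` gives the first, as `e_{d+1}(θ^d) = 0`
  have red : ∀ d, (∀ z, carlitzE θ (d + 1) (θ * z) =
      θ * carlitzE θ (d + 1) z + bracket θ (d + 1) * carlitzE θ d z ^ 2) →
      carlitzE θ (d + 1) (θ ^ (d + 1)) = bracket θ (d + 1) * carlitzE θ d (θ ^ d) ^ 2 := by
    intro d h
    have h0 : carlitzE θ (d + 1) (θ ^ d) = 0 := by
      simp only [carlitzE]
      linear_combination (carlitzE θ d (θ ^ d) ^ 2) * h2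
    rw [pow_succ', h, h0]; ring
  induction d with
  | zero =>
    have : ∀ z, carlitzE θ (0 + 1) (θ * z) =
      θ * carlitzE θ (0 + 1) z + bracket θ (0 + 1) * carlitzE θ 0 z ^ 2 := by
      intro z
      simp only [carlitzE, bracket, zero_add, pow_one, pow_zero]
      linear_combination (- θ * z ^ 2) * h2
    exact ⟨red 0 this, this⟩
  | succ d ih =>
    obtain ⟨ihD, ihz⟩ := ih
    have : ∀ z, carlitzE θ (d + 1 + 1) (θ * z) =
      θ * carlitzE θ (d + 1 + 1) z + bracket θ (d + 1 + 1) * carlitzE θ (d + 1) z ^ 2 := by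
      intro z
      have hb := bracket_sq θ (d + 1)
      have e1 : ∀ z, carlitzE θ (d + 1 + 1) z = carlitzE θ (d + 1) z ^ 2 +
        carlitzE θ (d + 1) (θ ^ (d + 1)) * carlitzE θ (d + 1) z := fun _ => rfl
      have e2 : carlitzE θ (d + 1) z = carlitzE θ d z ^ 2 +
        carlitzE θ d (θ ^ d) * carlitzE θ d z := rfl
      rw [e1, e1, ihz, ihD]
      have hE : carlitzE θ d z ^ 4 = carlitzE θ (d + 1) z ^ 2
          + carlitzE θ d (θ ^ d) ^ 2 * carlitzE θ d z ^ 2 := by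
        rw [e2]
        linear_combination (-(carlitzE θ d (θ ^ d) ^ 2 * carlitzE θ d z ^ 2
          + carlitzE θ d z ^ 3 * carlitzE θ d (θ ^ d))) * h2
      generalize carlitzE θ (d + 1) z = E at *
      generalize carlitzE θ d z = w at *
      generalize carlitzE θ d (θ ^ d) = D at *
      generalize bracket θ (d + 1) = b at *
      generalize bracket θ (d + 1 + 1) = b' at *
      linear_combination b ^ 2 * hE + E ^ 2 * hb +
        (θ ^ 2 * E ^ 2 + θ * E * b * w ^ 2 + b ^ 2 * D ^ 2 * w ^ 2) * h2
    exact ⟨red _ this, this⟩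

lemma carlitzE_theta_pow_ne_zero (hb : ∀ d, bracket θ (d + 1) ≠ 0) (d : ℕ) :
    carlitzE θ d (θ ^ d) ≠ 0 := by
  induction d with
  | zero => simp [carlitzE]
  | succ d ih =>
    rw [(carlitzE_theta θ d).1]
    exact mul_ne_zero (hb d) (pow_ne_zero 2 ih)

/-- The quotient `e_d'/e_d(θ^d)` of `sum_inv_add` at `z = θ^d` is `1/ℓ_d`. -/
lemma prod_div_carlitzE (hb : ∀ d, bracket θ (d + 1) ≠ 0) (d : ℕ) :
    (∏ i ∈ Finset.range d, carlitzE θ i (θ ^ i)) / carlitzE θ d (θ ^ d) = (ell θ d)⁻¹ := by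
  induction d with
  | zero => simp [ell, carlitzE]
  | succ d ih =>
    have h0 := carlitzE_theta_pow_ne_zero θ hb d
    have h1 := ell_ne_zero θ hb d
    have h3 := hb d
    rw [Finset.prod_range_succ, (carlitzE_theta θ d).1, ell_succ]
    rw [div_eq_iff h0] at ih
    rw [ih]
    field_simp

/-- Closed form for `∑_{i ≤ d} 1/ℓ_i`; the induction step is `[d+2] + [d+1]² = [1]`. -/
lemma sum_inv_ell (hb : ∀ d, bracket θ (d + 1) ≠ 0) (d : ℕ) :
    ∑ i ∈ Finset.range (d + 1), (ell θ i)⁻¹ = ell θ (d + 1) / ((θ ^ 2 + θ) * ell θ d ^ 2) := by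
  have h2 : (2 : K) = 0 := CharTwo.two_eq_zero
  have h1 : θ ^ 2 + θ ≠ 0 := by simpa [bracket] using hb 0
  induction d with
  | zero => simp [ell, bracket, div_self h1]
  | succ d ih =>
    rw [Finset.sum_range_succ, ih, ell_succ θ (d + 1), ell_succ θ d]
    have h3 := ell_ne_zero θ hb d
    have h4 := hb d
    have h5 := bracket_sq θ (d + 1)
    rw [add_assoc] at h5
    generalize θ ^ 2 + θ = t at *
    field_simp
    linear_combination h5 + t * h2

end CharTwoField

/-! ### Power sums over polynomials with two-element coefficient field -/

section Polynomials

open Polynomial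

variable {Fq}

open Classical in
/-- The polynomials of degree `< d` over the field with two elements, listed by splitting
according to the coefficient of `X ^ (d - 1)`. Over a general field these are the polynomials of
degree `< d` with coefficients in `{0, 1}`. -/
def polyLT (F : Type) [Field F] : ℕ → Finset F[X]
  | 0 => {0}
  | d + 1 => polyLT F d ∪ (polyLT F d).image (fun a => X ^ d + a)

open Classical in
/-- The monic polynomials of degree `d` over the field with two elements, as `X ^ d` plus a
member of `polyLT`. -/
def monicOfDeg (F : Type) [Field F] (d : ℕ) : Finset F[X] :=
  (polyLT F d).image (fun a => X ^ d + a)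

lemma sum_monicOfDeg {F : Type} [Field F] {M : Type*} [AddCommMonoid M] (d : ℕ) (f : F[X] → M) :
    ∑ a ∈ monicOfDeg F d, f a = ∑ a ∈ polyLT F d, f (X ^ d + a) := by
  classical
  exact Finset.sum_image fun a _ b _ h => add_left_cancel h

lemma eq_zero_or_one_of_card (hq : Fintype.card Fq = 2) (x : Fq) : x = 0 ∨ x = 1 := by
  classical
  by_contra h
  push Not at h
  have : ({0, 1, x} : Finset Fq).card = 3 := by
    rw [Finset.card_eq_three]
    exact ⟨0, 1, x, zero_ne_one, h.1.symm, h.2.symm, rfl⟩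
  have := Finset.card_le_univ ({0, 1, x} : Finset Fq)
  omega

lemma mem_polyLT (hq : Fintype.card Fq = 2) (d : ℕ) (a : Fq[X]) :
    a ∈ polyLT Fq d ↔ a.degree < d := by
  induction d generalizing a with
  | zero =>
    simp only [polyLT, Finset.mem_singleton]
    rw [Polynomial.degree_lt_iff_coeff_zero]
    exact ⟨by rintro rfl; simp, fun h => Polynomial.ext fun n => by simpa using h n (by simp)⟩
  | succ d ih =>
    simp only [polyLT, Finset.mem_union, Finset.mem_image, ih]
    simp only [Polynomial.degree_lt_iff_coeff_zero]
    constructor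
    · rintro (h | ⟨b, h, rfl⟩) m hm
      · exact h m (by omega)
      · rw [coeff_add, h m (by omega), coeff_X_pow, if_neg (by omega), add_zero]
    · intro h
      rcases eq_zero_or_one_of_card hq (a.coeff d) with h0 | h0
      · left
        intro m hm
        rcases hm.eq_or_lt with rfl | hm
        · exact h0
        · exact h m (by omega)
      · right
        refine ⟨a - X ^ d, fun m hm => ?_, by ring⟩
        rw [coeff_sub, coeff_X_pow]
        rcases hm.eq_or_lt with rfl | hm
        · simp [h0]
        · rw [if_neg (by omega), h m (by omega), sub_zero]

lemma mem_monicOfDeg (hq : Fintype.card Fq = 2) (d : ℕ) (a : Fq[X]) :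
    a ∈ monicOfDeg Fq d ↔ a.Monic ∧ a.natDegree = d := by
  simp only [monicOfDeg, Finset.mem_image, mem_polyLT hq]
  constructor
  · rintro ⟨b, hb, rfl⟩
    exact ⟨monic_X_pow_add hb, by
      rw [natDegree_add_eq_left_of_degree_lt (by rwa [degree_X_pow]), natDegree_X_pow]⟩
  · rintro ⟨hm, rfl⟩
    refine ⟨a - X ^ a.natDegree, ?_, by ring⟩
    have h : (X ^ a.natDegree : Fq[X]).degree = a.degree := by
      rw [degree_X_pow, degree_eq_natDegree hm.ne_zero]
    rw [← degree_eq_natDegree hm.ne_zero]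
    exact degree_sub_lt_left h.symm hm.ne_zero (by simp [hm.leadingCoeff])

lemma monic_of_ne_zero (hq : Fintype.card Fq = 2) {a : Fq[X]} (ha : a ≠ 0) : a.Monic :=
  (eq_zero_or_one_of_card hq a.leadingCoeff).resolve_left (leadingCoeff_ne_zero.2 ha)

lemma sum_polyLT_succ (hq : Fintype.card Fq = 2) {M : Type*} [AddCommMonoid M] (d : ℕ)
    (f : Fq[X] → M) :
    ∑ a ∈ polyLT Fq (d + 1), f a = ∑ a ∈ polyLT Fq d, f a + ∑ a ∈ monicOfDeg Fq d, f a := by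
  classical
  rw [polyLT]
  refine Finset.sum_union (Finset.disjoint_left.2 fun a h1 h2 => ?_)
  rw [mem_polyLT hq] at h1
  obtain ⟨hm, hd⟩ := (mem_monicOfDeg hq d a).1 h2
  rw [degree_eq_natDegree hm.ne_zero, hd] at h1
  exact lt_irrefl _ h1

variable {K : Type*} [Field K] [CharP K 2] [Algebra Fq K] (θ : K)

/-- The logarithmic derivative of `e_d`: `∑_{deg a < d} 1/(z + a(θ)) = e_d'/e_d(z)`, where the
constant `e_d'` is `∏_{i < d} e_i(θ^i)`. -/
lemma sum_inv_add (hq : Fintype.card Fq = 2) (d : ℕ) (z : K)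
    (hz : ∀ a ∈ polyLT Fq d, z + aeval θ a ≠ 0) :
    carlitzE θ d z ≠ 0 ∧ ∑ a ∈ polyLT Fq d, (z + aeval θ a)⁻¹ =
      (∏ i ∈ Finset.range d, carlitzE θ i (θ ^ i)) / carlitzE θ d z := by
  have h2 : (2 : K) = 0 := CharTwo.two_eq_zero
  induction d generalizing z with
  | zero => simpa [polyLT, carlitzE] using hz
  | succ d ih =>
    obtain ⟨n1, s1⟩ := ih z fun a ha => hz a (by
      rw [mem_polyLT hq] at ha ⊢
      exact ha.trans (by exact_mod_cast d.lt_succ_self))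
    obtain ⟨n2, s2⟩ := ih (z + θ ^ d) fun a ha => by
      have := hz (X ^ d + a) (by
        classical
        rw [polyLT]
        exact Finset.mem_union_right _ (Finset.mem_image_of_mem _ ha))
      simpa [add_assoc] using this
    have s3 : ∑ a ∈ polyLT Fq d, (z + aeval θ (X ^ d + a))⁻¹ =
        ∑ a ∈ polyLT Fq d, (z + θ ^ d + aeval θ a)⁻¹ := by simp [add_assoc]
    rw [carlitzE_add] at n2 s2
    have e1 : carlitzE θ (d + 1) z =
        carlitzE θ d z * (carlitzE θ d z + carlitzE θ d (θ ^ d)) := by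
      rw [carlitzE]; ring
    rw [e1]
    refine ⟨mul_ne_zero n1 n2, ?_⟩
    rw [sum_polyLT_succ hq, sum_monicOfDeg, s3, s1, s2, Finset.prod_range_succ]
    field_simp
    linear_combination (carlitzE θ d z * ∏ i ∈ Finset.range d, carlitzE θ i (θ ^ i)) * h2

/-- Carlitz: the power sum `S_d(1)`, over monic polynomials of degree `d`, equals `1/ℓ_d`. -/
lemma sum_inv_monicOfDeg (hq : Fintype.card Fq = 2) (hθ : ∀ a : Fq[X], a ≠ 0 → aeval θ a ≠ 0)
    (hb : ∀ d, bracket θ (d + 1) ≠ 0) (d : ℕ) :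
    ∑ a ∈ monicOfDeg Fq d, (aeval θ a)⁻¹ = (ell θ d)⁻¹ := by
  rw [sum_monicOfDeg, ← prod_div_carlitzE θ hb d, ← (sum_inv_add (Fq := Fq) θ hq d (θ ^ d) ?_).2]
  · simp
  · intro a ha
    have := hθ (X ^ d + a) (monic_X_pow_add ((mem_polyLT hq d a).1 ha)).ne_zero
    simpa using this

/-- `S_{<d}(1) = ∑_{i < d} 1/ℓ_i`; the zero polynomial contributes `0⁻¹ = 0`. -/
lemma sum_inv_polyLT (hq : Fintype.card Fq = 2) (hθ : ∀ a : Fq[X], a ≠ 0 → aeval θ a ≠ 0)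
    (hb : ∀ d, bracket θ (d + 1) ≠ 0) (d : ℕ) :
    ∑ a ∈ polyLT Fq d, (aeval θ a)⁻¹ = ∑ i ∈ Finset.range d, (ell θ i)⁻¹ := by
  induction d with
  | zero => simp [polyLT]
  | succ d ih =>
    rw [sum_polyLT_succ hq, ih, sum_inv_monicOfDeg θ hq hθ hb, Finset.sum_range_succ]

end Polynomials

/-! ### Convergence in `k_∞` and the two zeta values -/

section Analysis

open Polynomial Filter Topology WithZero

lemma nonarchimedeanAddGroup_Kinf (F : Type) [Field F] : NonarchimedeanAddGroup (Kinf F) := by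
  have h : NonarchimedeanRing (Kinf F) :=
    ((Valued.v : Valuation (Kinf F) ℤᵐ⁰).subgroups_basis).nonarchimedean
  infer_instance

/-- A family in `k_∞` indexed by `S`, whose terms of degree `d` have valuation at most `exp (-d)`
and are finite in number, may be summed degree by degree. -/
lemma hasSum_fiberwise (F : Type) [Field F] {ι : Type*} (S : Set ι) (f : ι → Kinf F) (deg : ι → ℕ)
    (A : ℕ → Finset ι) (hA : ∀ d t, t ∈ A d ↔ t ∈ S ∧ deg t = d)
    (hf : ∀ t ∈ S, Valued.v (f t) ≤ exp (-(deg t : ℤ))) :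
    HasSum (fun d => ∑ t ∈ A d, f t) (∑' t : S, f t) := by
  classical
  rw [tsum_subtype]
  have hsum : Summable (S.indicator f) := by
    have := nonarchimedeanAddGroup_Kinf F
    apply NonarchimedeanAddGroup.summable_of_tendsto_cofinite_zero
    intro U hU
    obtain ⟨γ, hγ⟩ := (Valued.mem_nhds_zero).1 hU
    set g := MonoidWithZeroHom.ValueGroup₀.embedding γ.1 with hg
    have hg0 : g ≠ 0 := by simp [hg]
    rw [mem_map, mem_cofinite]
    refine ((Finset.range ((-log g).toNat + 1)).biUnion A).finite_toSet.subset ?_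
    intro t ht
    by_contra hcon
    apply ht
    apply hγ
    rw [Set.mem_ofPred_eq, Valuation.restrict_lt_iff_lt_embedding, ← hg]
    by_cases htS : t ∈ S
    · rw [Set.indicator_of_mem htS]
      refine (hf t htS).trans_lt ?_
      rw [← exp_log hg0, exp_lt_exp]
      simp only [Finset.coe_biUnion, Set.mem_iUnion, not_exists, Finset.mem_coe, hA,
        Finset.mem_range] at hcon
      have h1 : ¬ deg t < (-log g).toNat + 1 := fun h => hcon (deg t) h ⟨htS, rfl⟩
      omega
    · rw [Set.indicator_of_notMem htS, map_zero]
      exact zero_lt_iff.2 hg0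
  have h := ((Equiv.sigmaFiberEquiv deg).hasSum_iff.2 hsum.hasSum)
  refine h.sigma fun d => ?_
  have h3 : HasSum ({t | deg t = d}.indicator (S.indicator f)) (∑ t ∈ A d, f t) := by
    have : ∑ t ∈ A d, f t = ∑ t ∈ A d, {t | deg t = d}.indicator (S.indicator f) t := by
      refine Finset.sum_congr rfl fun t ht => ?_
      obtain ⟨h1, h2⟩ := (hA d t).1 ht
      rw [Set.indicator_of_mem (by exact h2), Set.indicator_of_mem h1]
    rw [this]
    refine hasSum_sum_of_ne_finset_zero fun t ht => ?_
    by_cases h1 : deg t = d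
    · rw [Set.indicator_of_mem (by exact h1), Set.indicator_of_notMem]
      exact fun h2 => ht ((hA d t).2 ⟨h2, h1⟩)
    · rw [Set.indicator_of_notMem (by exact h1)]
  exact hasSum_subtype_iff_indicator.2 h3

variable {Fq}

lemma v_theta {F : Type} [Field F] : Valued.v (theta F) = exp (1 : ℤ) := by
  rw [theta, LaurentSeries.valuation_single_zpow, neg_neg]

lemma v_aeval (hq : Fintype.card Fq = 2) {a : Fq[X]} (ha : a ≠ 0) :
    Valued.v (aeval (theta Fq) a) = exp (a.natDegree : ℤ) := by
  have : (Valued.v : Valuation (Kinf Fq) ℤᵐ⁰).IsTrivialOn Fq := ⟨fun x hx => by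
    rw [(eq_zero_or_one_of_card hq x).resolve_left hx, map_one, map_one]⟩
  rw [valuation_aeval_eq_valuation_X_pow_natDegree_of_one_lt_valuation_X _ _ ha, v_theta,
    ← exp_nsmul, nsmul_one]
  rw [v_theta, ← exp_zero, exp_lt_exp]
  exact one_pos

lemma v_bracket {F : Type} [Field F] (d : ℕ) : 1 < Valued.v (bracket (theta F) (d + 1)) := by
  have h1 : (1 : ℤ) < 2 ^ (d + 1) := one_lt_pow₀ one_lt_two (by omega)
  have h : Valued.v (theta F) < Valued.v (theta F ^ 2 ^ (d + 1)) := by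
    rw [map_pow, v_theta, ← exp_nsmul, exp_lt_exp, nsmul_one]
    exact_mod_cast h1
  rw [bracket, Valuation.map_add_eq_of_lt_left _ h]
  refine lt_trans ?_ h
  rw [v_theta, ← exp_zero, exp_lt_exp]
  exact one_pos

lemma bracket_theta_ne_zero {F : Type} [Field F] (d : ℕ) : bracket (theta F) (d + 1) ≠ 0 := by
  intro h
  have := v_bracket (F := F) d
  rw [h, map_zero] at this
  exact not_lt_zero this

lemma one_lt_v_ell {F : Type} [Field F] (d : ℕ) : 1 < Valued.v (ell (theta F) (d + 1)) := by
  induction d with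
  | zero => simpa [ell] using v_bracket (F := F) 0
  | succ d ih =>
    rw [ell_succ, map_mul]
    exact one_lt_mul_of_lt_of_le' ih (v_bracket _).le

lemma charP_Kinf (hq : Fintype.card Fq = 2) : CharP (Kinf Fq) 2 := by
  have : Fact (Nat.Prime 2) := ⟨Nat.prime_two⟩
  have : CharP Fq 2 := charP_of_card_eq_prime hq
  exact charP_of_injective_algebraMap (algebraMap Fq (Kinf Fq)).injective 2

/-- `ζ(2) = ∑_d 1/ℓ_d²`, since `S_d(2) = S_d(1)²` in characteristic two. -/
lemma hasSum_mzv_two (hq : Fintype.card Fq = 2) :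
    HasSum (fun d => ((ell (theta Fq) d)⁻¹) ^ 2) (mzv Fq 1 ![2]) := by
  have := charP_Kinf hq
  have hθ : ∀ a : Fq[X], a ≠ 0 → aeval (theta Fq) a ≠ 0 := fun a ha h => by
    have := v_aeval hq ha
    rw [h, map_zero] at this
    exact exp_ne_zero this.symm
  have key := hasSum_fiberwise Fq {a : Fq[X] | a.Monic}
    (fun a => (aeval (theta Fq) a ^ 2)⁻¹) natDegree (monicOfDeg Fq)
    (fun d a => mem_monicOfDeg hq d a) (fun a ha => by
      rw [map_inv₀, map_pow, v_aeval hq (Monic.ne_zero ha), ← exp_nsmul, ← exp_neg, exp_le_exp,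
        nsmul_eq_mul]
      push_cast
      omega)
  have e : mzv Fq 1 ![2] = ∑' t : {a : Fq[X] | a.Monic}, (aeval (theta Fq) t.1 ^ 2)⁻¹ := by
    let E : {a : Fin 1 → Fq[X] // (∀ i, (a i).Monic) ∧
        ∀ i j : Fin 1, i < j → (a j).degree < (a i).degree} ≃ {a : Fq[X] | a.Monic} :=
      { toFun := fun a => ⟨a.1 0, a.2.1 0⟩
        invFun := fun a => ⟨fun _ => a.1, fun _ => a.2, fun i j h => by
          rw [Subsingleton.elim i j] at h; exact absurd h (lt_irrefl _)⟩
        left_inv := fun a => by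
          ext1; funext i; rw [Subsingleton.elim i 0]
        right_inv := fun a => rfl }
    rw [mzv, ← E.tsum_eq]
    refine tsum_congr fun a => ?_
    simp [E]
  rw [e]
  convert key using 2 with d
  rw [← sum_inv_monicOfDeg _ hq hθ bracket_theta_ne_zero, CharTwo.sum_sq]
  simp only [inv_pow]

/-- `ζ(1,1) = ∑_d S_d(1) S_{<d}(1)`; the term `d = 0` vanishes and the term `d + 1` telescopes
to `ℓ_d⁻² / (θ² + θ)`. -/
lemma hasSum_mzv_one_one (hq : Fintype.card Fq = 2) :
    HasSum (fun d => ((ell (theta Fq) d)⁻¹) ^ 2 / (theta Fq ^ 2 + theta Fq))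
      (mzv Fq 2 ![1, 1]) := by
  classical
  have := charP_Kinf hq
  have hθ : ∀ a : Fq[X], a ≠ 0 → aeval (theta Fq) a ≠ 0 := fun a ha h => by
    have := v_aeval hq ha
    rw [h, map_zero] at this
    exact exp_ne_zero this.symm
  have hb := bracket_theta_ne_zero (F := Fq)
  have key := hasSum_fiberwise Fq
    {t : Fq[X] × Fq[X] | t.1.Monic ∧ t.2.Monic ∧ t.2.degree < t.1.degree}
    (fun t => (aeval (theta Fq) t.1)⁻¹ * (aeval (theta Fq) t.2)⁻¹) (fun t => t.1.natDegree)
    (fun d => monicOfDeg Fq d ×ˢ (polyLT Fq d).erase 0)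
    (fun d t => by
      rw [Finset.mem_product, Finset.mem_erase, mem_polyLT hq, mem_monicOfDeg hq]
      constructor
      · rintro ⟨⟨h1, rfl⟩, h2, h3⟩
        rw [← degree_eq_natDegree h1.ne_zero] at h3
        exact ⟨⟨h1, monic_of_ne_zero hq h2, h3⟩, rfl⟩
      · rintro ⟨⟨h1, h2, h3⟩, rfl⟩
        rw [degree_eq_natDegree h1.ne_zero] at h3
        exact ⟨⟨h1, rfl⟩, h2.ne_zero, h3⟩)
    (fun t ht => by
      rw [map_mul, map_inv₀, map_inv₀, v_aeval hq ht.1.ne_zero, v_aeval hq ht.2.1.ne_zero,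
        ← exp_neg, ← exp_neg, ← exp_add, exp_le_exp]
      omega)
  have e : mzv Fq 2 ![1, 1] =
      ∑' t : {t : Fq[X] × Fq[X] | t.1.Monic ∧ t.2.Monic ∧ t.2.degree < t.1.degree},
        (aeval (theta Fq) t.1.1)⁻¹ * (aeval (theta Fq) t.1.2)⁻¹ := by
    let E : {a : Fin 2 → Fq[X] // (∀ i, (a i).Monic) ∧
        ∀ i j : Fin 2, i < j → (a j).degree < (a i).degree} ≃
        {t : Fq[X] × Fq[X] | t.1.Monic ∧ t.2.Monic ∧ t.2.degree < t.1.degree} :=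
      { toFun := fun a => ⟨(a.1 0, a.1 1), a.2.1 0, a.2.1 1, a.2.2 0 1 Fin.zero_lt_one⟩
        invFun := fun a => ⟨![a.1.1, a.1.2], Fin.forall_fin_two.2 ⟨a.2.1, a.2.2.1⟩, by
          have := a.2.2.2
          simpa [Fin.forall_fin_two] using this⟩
        left_inv := fun a => by
          ext1; funext i; fin_cases i <;> rfl
        right_inv := fun a => rfl }
    rw [mzv, ← E.tsum_eq]
    refine tsum_congr fun a => ?_
    rw [Fin.prod_univ_two, mul_inv]
    simp only [Matrix.cons_val_zero, Matrix.cons_val_one, pow_one]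
    rfl
  rw [← e] at key
  have term : ∀ d, ∑ t ∈ monicOfDeg Fq d ×ˢ (polyLT Fq d).erase 0,
      (aeval (theta Fq) t.1)⁻¹ * (aeval (theta Fq) t.2)⁻¹ =
      (ell (theta Fq) d)⁻¹ * ∑ i ∈ Finset.range d, (ell (theta Fq) i)⁻¹ := by
    intro d
    rw [← sum_inv_monicOfDeg _ hq hθ hb, ← sum_inv_polyLT _ hq hθ hb, Finset.sum_mul_sum,
      Finset.sum_product]
    refine Finset.sum_congr rfl fun a _ => Finset.sum_erase _ (by simp)
  simp only [term] at key
  rw [← hasSum_nat_add_iff' 1] at key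
  simp only [Finset.range_one, Finset.sum_singleton, Finset.range_zero, Finset.sum_empty,
    mul_zero, sub_zero] at key
  have telescope : ∀ d, (ell (theta Fq) (d + 1))⁻¹ *
      ∑ i ∈ Finset.range (d + 1), (ell (theta Fq) i)⁻¹ =
      ((ell (theta Fq) d)⁻¹) ^ 2 / (theta Fq ^ 2 + theta Fq) := by
    intro d
    rw [sum_inv_ell _ hb]
    have h1 := ell_ne_zero _ hb d
    have h2 := ell_ne_zero _ hb (d + 1)
    have h3 : theta Fq ^ 2 + theta Fq ≠ 0 := by simpa [bracket] using hb 0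
    field_simp
  simp only [telescope] at key
  exact key

/-- The term `d = 0` of `∑_d 1/ℓ_d²` is `1`, all others have valuation `< 1`. -/
lemma mzv_two_ne_zero (hq : Fintype.card Fq = 2) : mzv Fq 1 ![2] ≠ 0 := by
  classical
  intro h0
  have h := hasSum_mzv_two hq
  rw [h0] at h
  have hU : {x : Kinf Fq | Valued.v x < 1} ∈ 𝓝 (0 : Kinf Fq) := by
    refine Valued.mem_nhds_zero.2 ⟨1, fun x hx => ?_⟩
    simpa [Valuation.restrict_lt_iff_lt_embedding] using hx
  obtain ⟨s, hs⟩ := mem_atTop_sets.1 (h hU)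
  have h1 : Valued.v (∑ d ∈ insert 0 s, ((ell (theta Fq) d)⁻¹) ^ 2) < 1 :=
    hs (insert 0 s) (Finset.subset_insert 0 s)
  rw [← Finset.add_sum_erase _ _ (Finset.mem_insert_self 0 s)] at h1
  have h2 : Valued.v (∑ d ∈ (insert 0 s).erase 0, ((ell (theta Fq) d)⁻¹) ^ 2) < 1 := by
    refine Valuation.map_sum_lt _ one_ne_zero fun d hd => ?_
    obtain ⟨d, rfl⟩ := Nat.exists_eq_succ_of_ne_zero (Finset.ne_of_mem_erase hd)
    rw [map_pow, map_inv₀]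
    exact pow_lt_one₀ zero_le (inv_lt_one_of_one_lt₀ (one_lt_v_ell d)) two_ne_zero
  rw [Valuation.map_add_eq_of_lt_left] at h1 <;> simp_all [ell]

end Analysis

/-- If `q = 2`, then the `k̄`-subspace of `k̄_∞` spanned by `ζ(1,1)` and
`ζ(2)` has dimension `1`; indeed `ζ(2) ≠ 0` and `ζ(1,1) = ζ(2)/(θ² + θ)`. -/
theorem zeta11_zeta2_span_rank_one (hq : Fintype.card Fq = 2) :
    Module.rank (kbar Fq)
      (Submodule.span (kbar Fq)
        {algebraMap (Kinf Fq) (KinfBar Fq) (mzv Fq 2 ![1, 1]),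
          algebraMap (Kinf Fq) (KinfBar Fq) (mzv Fq 1 ![2])}) = 1 ∧
    mzv Fq 1 ![2] ≠ 0 ∧
    mzv Fq 2 ![1, 1] = mzv Fq 1 ![2] / (theta Fq ^ 2 + theta Fq) := by
  have hne : mzv Fq 1 ![2] ≠ 0 := mzv_two_ne_zero hq
  have heq : mzv Fq 2 ![1, 1] = mzv Fq 1 ![2] / (theta Fq ^ 2 + theta Fq) :=
    (hasSum_mzv_one_one hq).unique ((hasSum_mzv_two hq).div_const _)
  refine ⟨?_, hne, heq⟩
  set x : KinfBar Fq := algebraMap (Kinf Fq) (KinfBar Fq) (mzv Fq 1 ![2]) with hx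
  have hx0 : x ≠ 0 := by
    rw [hx]
    exact (map_ne_zero _).2 hne
  have hmem : thetaBar Fq ∈ kbar Fq :=
    (kbar Fq).algebraMap_mem ⟨thetaBar Fq, Subfield.subset_closure (Or.inr rfl)⟩
  let c : kbar Fq := (⟨thetaBar Fq, hmem⟩ ^ 2 + ⟨thetaBar Fq, hmem⟩)⁻¹
  have hc : algebraMap (Kinf Fq) (KinfBar Fq) (mzv Fq 2 ![1, 1]) = c • x := by
    rw [heq, map_div₀, ← hx, map_add, map_pow, div_eq_inv_mul]
    rfl
  have hspan : Submodule.span (kbar Fq)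
      {algebraMap (Kinf Fq) (KinfBar Fq) (mzv Fq 2 ![1, 1]), x} =
      Submodule.span (kbar Fq) {x} := by
    rw [hc]
    exact Submodule.span_insert_eq_span
      (Submodule.smul_mem _ _ (Submodule.mem_span_singleton_self x))
  rw [hspan, Module.rank_eq_one_iff_finrank_eq_one]
  exact finrank_span_singleton hx0
end
end
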